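/- arXiv:0805.3323 — 3 statements merged into one kernel-verified Lean document; each statement's English description precedes it below -/
import Mathlib

section
/- Let ℂ∞ denote the Riemann sphere (OnePoint ℂ). Let U ⊆ ℂ∞ be a simply connected open set whose boundary X = ∂U contains at least two points, and let V ≠ U be a connected component of ℂ∞ ∖ X such that ∂V has nonempty interior relative to X. Assume X is irreducible about some finite subset of X, and assume ∂V is NOT monostratic, i.e., ∂V cannot be written as (⋃_{i∈ℕ} X_i) ∪ (⋃_{i∈ℕ} A_i) with each X_i an indecomposable subcontinuum of ∂V and each A_i a subcontinuum of ∂V nowhere dense in ∂V. Then ∂V contains an indecomposable subcontinuum with nonempty interior relative to X. -/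
open Set Topology

/-- The Riemann sphere, as the one-point compactification of `ℂ`. -/
abbrev RiemannSphere : Type := OnePoint ℂ

/-- A subcontinuum (of an ambient space) is a nonempty compact connected set;
nonemptiness is part of `IsConnected`. -/
def IsSubcontinuum {α : Type*} [TopologicalSpace α] (K : Set α) : Prop :=
  IsCompact K ∧ IsConnected K

/-- A set is indecomposable if it is not the union of two of its proper subcontinua. -/
def IsIndecomposableSet {α : Type*} [TopologicalSpace α] (K : Set α) : Prop :=
  ∀ K₁ K₂ : Set α, IsSubcontinuum K₁ → K₁ ⊆ K → IsSubcontinuum K₂ → K₂ ⊆ K →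
    K₁ ∪ K₂ = K → K₁ = K ∨ K₂ = K

/-- `Z` is nowhere dense in `X` (in the subspace topology of `X`). -/
def NowhereDenseIn {α : Type*} [TopologicalSpace α] (X Z : Set α) : Prop :=
  IsNowhereDense ((↑) ⁻¹' Z : Set X)

/-- The interior of `Z` relative to `X`, i.e. the interior of the corresponding subset
of the subspace `X`. -/
def relInterior {α : Type*} [TopologicalSpace α] (X Z : Set α) : Set X :=
  interior ((↑) ⁻¹' Z : Set X)

/-- A set is monostratic if it is the countable union of indecomposable subcontinua
and nowhere dense subcontinua of itself. -/
def IsMonostratic {α : Type*} [TopologicalSpace α] (Z : Set α) : Prop :=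
  ∃ Xf Af : ℕ → Set α,
    (∀ i, Xf i ⊆ Z ∧ IsSubcontinuum (Xf i) ∧ IsIndecomposableSet (Xf i)) ∧
    (∀ i, Af i ⊆ Z ∧ IsSubcontinuum (Af i) ∧ NowhereDenseIn Z (Af i)) ∧
    Z = (⋃ i, Xf i) ∪ ⋃ i, Af i

set_option linter.unusedSectionVars false

section Continuum

variable {α : Type*} [TopologicalSpace α] [CompactSpace α] [T2Space α]

theorem IsSubcontinuum.isClosed' {K : Set α} (h : IsSubcontinuum K) : IsClosed K := h.1.isClosed

theorem IsSubcontinuum.union' {K L : Set α} (h : IsSubcontinuum K) (h' : IsSubcontinuum L)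
    (hne : (K ∩ L).Nonempty) : IsSubcontinuum (K ∪ L) :=
  ⟨h.1.union h'.1, h.2.union hne h'.2⟩

theorem isSubcontinuum_component {D : Set α} (hD : IsClosed D) {x : α} (hx : x ∈ D) :
    IsSubcontinuum (connectedComponentIn D x) := by
  refine ⟨?_, ⟨x, mem_connectedComponentIn hx⟩, isPreconnected_connectedComponentIn⟩
  rw [connectedComponentIn_eq_image hx]
  exact (hD.isClosedEmbedding_subtypeVal.isClosedMap _ isClosed_connectedComponent).isCompact

/-- Separation of a component from a disjoint closed set. -/
theorem exists_separation {D B : Set α} (hD : IsClosed D) (hB : IsClosed B) {x : α} (hx : x ∈ D)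
    (h : Disjoint (connectedComponentIn D x) B) :
    ∃ E F : Set α, IsClosed E ∧ IsClosed F ∧ Disjoint E F ∧ E ∪ F = D ∧ x ∈ E ∧ Disjoint E B := by
  have : CompactSpace D := isCompact_iff_compactSpace.1 hD.isCompact
  have hB' : IsClosed ((↑) ⁻¹' B : Set D) := hB.preimage continuous_subtype_val
  have H1 := hB'.isCompact.inter_iInter_nonempty
      (fun s : { s : Set D // IsClopen s ∧ (⟨x, hx⟩ : D) ∈ s } => s) fun s => s.2.1.1
  rw [← connectedComponent_eq_iInter_isClopen] at H1
  have H2 : ¬ (((↑) ⁻¹' B : Set D) ∩ connectedComponent (⟨x, hx⟩ : D)).Nonempty := by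
    rintro ⟨y, hy, hyc⟩
    refine Set.disjoint_left.1 h ?_ hy
    rw [connectedComponentIn_eq_image hx]
    exact ⟨y, hyc, rfl⟩
  have H3 := mt H1 H2
  push Not at H3
  obtain ⟨si, H4⟩ := H3
  have hcl : IsClopen (⋂ U ∈ si, Subtype.val U) := isClopen_biInter_finset fun s _ => s.2.1
  set Z : Set D := ⋂ U ∈ si, Subtype.val U with hZ
  refine ⟨(↑) '' Z, (↑) '' Zᶜ, ?_, ?_, ?_, ?_, ?_, ?_⟩
  · exact hD.isClosedEmbedding_subtypeVal.isClosedMap _ hcl.1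
  · exact hD.isClosedEmbedding_subtypeVal.isClosedMap _ hcl.compl.1
  · exact (Set.disjoint_image_iff Subtype.val_injective).2 disjoint_compl_right
  · rw [← Set.image_union, Set.union_compl_self, Set.image_univ, Subtype.range_coe]
  · exact ⟨⟨x, hx⟩, mem_iInter₂.2 fun s _ => s.2.2, rfl⟩
  · rw [Set.disjoint_left]
    rintro _ ⟨y, hy, rfl⟩ hyB
    exact (Set.eq_empty_iff_forall_notMem.1 H4 y) ⟨hyB, hy⟩

/-- Boundary bumping. -/
theorem boundary_bump {X D : Set α} (hX : IsSubcontinuum X) (hD : IsClosed D) (hDX : D ⊆ X)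
    (hne : D ≠ X) {x : α} (hx : x ∈ D) :
    (connectedComponentIn D x ∩ closure (X \ D)).Nonempty := by
  by_contra hcon
  rw [Set.not_nonempty_iff_eq_empty, ← Set.disjoint_iff_inter_eq_empty] at hcon
  obtain ⟨E, F, hE, hF, hEF, hun, hxE, hEB⟩ := exists_separation hD isClosed_closure hx hcon
  have hpre := hX.2.isPreconnected
  rw [isPreconnected_closed_iff] at hpre
  have hcov : X ⊆ E ∪ (F ∪ closure (X \ D)) := by
    intro y hy
    by_cases hyD : y ∈ D
    · rw [← hun] at hyD
      rcases hyD with h | h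
      · exact Or.inl h
      · exact Or.inr (Or.inl h)
    · exact Or.inr (Or.inr (subset_closure ⟨hy, hyD⟩))
  obtain ⟨z, hz⟩ : (X \ D).Nonempty := by
    rw [Set.nonempty_iff_ne_empty]
    intro h
    exact hne (hDX.antisymm (Set.sdiff_eq_empty.1 h))
  obtain ⟨y, -, hyE, hy⟩ := hpre E (F ∪ closure (X \ D)) hE (hF.union isClosed_closure) hcov
    ⟨x, hDX hx, hxE⟩ ⟨z, hz.1, Or.inr (subset_closure hz)⟩
  rcases hy with hy | hy
  · exact Set.disjoint_left.1 hEF hyE hy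
  · exact Set.disjoint_left.1 hEB hyE hy

theorem isPreconnected_sInter_chain {c : Set (Set α)} (hc : IsChain (· ⊆ ·) c) (hne : c.Nonempty)
    (h : ∀ K ∈ c, IsSubcontinuum K) : IsPreconnected (⋂₀ c) := by
  have hcl : IsClosed (⋂₀ c) := isClosed_sInter fun K hK => (h K hK).isClosed'
  rw [isPreconnected_iff_subset_of_fully_disjoint_closed hcl]
  intro a b ha hb hab hdis
  obtain ⟨u, v, hu, hv, hau, hbv, huv⟩ := normal_separation ha hb hdis
  have : Nonempty c := hne.to_subtype
  have key : ∃ K ∈ c, K ⊆ u ∪ v := by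
    by_contra hcon
    push Not at hcon
    have := IsCompact.nonempty_iInter_of_directed_nonempty_isCompact_isClosed
      (fun K : c => (K : Set α) ∩ (u ∪ v)ᶜ) ?_ ?_ ?_ ?_
    · obtain ⟨x, hx⟩ := this
      rw [Set.mem_iInter] at hx
      have hx1 : x ∈ ⋂₀ c := fun K hK => (hx ⟨K, hK⟩).1
      exact (hx (Classical.arbitrary c)).2 ((hab.trans (Set.union_subset_union hau hbv)) hx1)
    · intro K L
      rcases hc.total K.2 L.2 with h | h
      · exact ⟨K, subset_rfl, Set.inter_subset_inter_left _ h⟩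
      · exact ⟨L, Set.inter_subset_inter_left _ h, subset_rfl⟩
    · intro K
      obtain ⟨x, hx, hx'⟩ := Set.not_subset.1 (hcon K K.2)
      exact ⟨x, hx, hx'⟩
    · intro K
      exact (h K K.2).1.inter_right (hu.union hv).isClosed_compl
    · intro K
      exact (h K K.2).isClosed'.inter (hu.union hv).isClosed_compl
  obtain ⟨K, hKc, hK⟩ := key
  rcases (h K hKc).2.isPreconnected.subset_or_subset hu hv huv hK with hh | hh
  · left
    intro x hx
    rcases hab hx with hxa | hxb
    · exact hxa
    · exact (Set.disjoint_left.1 huv (hh (hx K hKc)) (hbv hxb)).elim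
  · right
    intro x hx
    rcases hab hx with hxa | hxb
    · exact (Set.disjoint_left.1 huv (hau hxa) (hh (hx K hKc))).elim
    · exact hxb

theorem sInter_chain_inter_nonempty {c : Set (Set α)} (hc : IsChain (· ⊆ ·) c) (hne : c.Nonempty)
    (h : ∀ K ∈ c, IsSubcontinuum K) {P : Set α} (hP : IsClosed P)
    (hm : ∀ K ∈ c, (K ∩ P).Nonempty) : (⋂₀ c ∩ P).Nonempty := by
  have : Nonempty c := hne.to_subtype
  obtain ⟨x, hx⟩ := IsCompact.nonempty_iInter_of_directed_nonempty_isCompact_isClosed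
      (fun K : c => (K : Set α) ∩ P) (by
        intro K L
        rcases hc.total K.2 L.2 with h | h
        · exact ⟨K, subset_rfl, Set.inter_subset_inter_left _ h⟩
        · exact ⟨L, Set.inter_subset_inter_left _ h, subset_rfl⟩) (fun K => hm K K.2)
      (fun K => (h K K.2).1.inter_right hP) (fun K => (h K K.2).isClosed'.inter hP)
  rw [Set.mem_iInter] at hx
  exact ⟨x, fun K hK => (hx ⟨K, hK⟩).1, (hx (Classical.arbitrary c)).2⟩

/-- Irreducible subcontinua between two closed sets. -/
theorem exists_irreducible {M P L : Set α} (hM : IsSubcontinuum M) (hP : IsClosed P)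
    (hL : IsClosed L) (hMP : (M ∩ P).Nonempty) (hML : (M ∩ L).Nonempty) :
    ∃ N ⊆ M, IsSubcontinuum N ∧ (N ∩ P).Nonempty ∧ (N ∩ L).Nonempty ∧
      ∀ K ⊆ N, IsSubcontinuum K → (K ∩ P).Nonempty → (K ∩ L).Nonempty → K = N := by
  obtain ⟨N, hNM, hN⟩ := zorn_superset_nonempty
    {K : Set α | IsSubcontinuum K ∧ (K ∩ P).Nonempty ∧ (K ∩ L).Nonempty} (by
      intro c hcS hc hne
      have hsub : ∀ K ∈ c, IsSubcontinuum K := fun K hK => (hcS hK).1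
      have h1 := sInter_chain_inter_nonempty hc hne hsub hP fun K hK => (hcS hK).2.1
      have h2 := sInter_chain_inter_nonempty hc hne hsub hL fun K hK => (hcS hK).2.2
      refine ⟨⋂₀ c, ⟨⟨?_, h1.mono Set.inter_subset_left, ?_⟩, h1, h2⟩,
        fun s hs => Set.sInter_subset_of_mem hs⟩
      · exact (isClosed_sInter fun K hK => (hsub K hK).isClosed').isCompact
      · exact isPreconnected_sInter_chain hc hne hsub) M ⟨hM, hMP, hML⟩
  refine ⟨N, hNM, hN.prop.1, hN.prop.2.1, hN.prop.2.2, ?_⟩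
  intro K hK h1 h2 h3
  exact hK.antisymm (hN.le_of_le ⟨h1, h2, h3⟩ hK)

/-- In an irreducible continuum from `M` to `L`, the complement of `M` is dense. -/
theorem irreducible_dense {N M L : Set α} (hN : IsSubcontinuum N) (hM : IsClosed M)
    (hML : Disjoint M L) (hNL : (N ∩ L).Nonempty)
    (hmin : ∀ K ⊆ N, IsSubcontinuum K → (K ∩ M).Nonempty → (K ∩ L).Nonempty → K = N) :
    N ⊆ closure (N \ M) := by
  by_contra hcon
  obtain ⟨p, hpN, hpL⟩ := hNL
  have hDN : closure (N \ M) ⊆ N := closure_minimal Set.sdiff_subset hN.isClosed'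
  have hp : p ∈ closure (N \ M) :=
    subset_closure ⟨hpN, fun h => Set.disjoint_left.1 hML h hpL⟩
  have hne : closure (N \ M) ≠ N := fun h => hcon h.ge
  obtain ⟨y, hyC, hy⟩ := boundary_bump hN isClosed_closure hDN hne hp
  have hyM : y ∈ M := by
    refine closure_minimal ?_ hM hy
    intro z hz
    by_contra hzM
    exact hz.2 (subset_closure ⟨hz.1, hzM⟩)
  have hC : connectedComponentIn (closure (N \ M)) p ⊆ closure (N \ M) :=
    connectedComponentIn_subset _ _
  have := hmin _ (hC.trans hDN) (isSubcontinuum_component isClosed_closure hp) ⟨y, hyC, hyM⟩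
    ⟨p, mem_connectedComponentIn hp, hpL⟩
  exact hcon (this.symm.subset.trans hC)


/-- The splitting step. -/
theorem split_step {Y P L M G : Set α}
    (hP : IsSubcontinuum P) (hPY : P ⊆ Y) (hL : IsSubcontinuum L) (hLY : L ⊆ Y)
    (hM : IsSubcontinuum M) (hMY : M ⊆ Y) (hMP : (M ∩ P).Nonempty) (hML : (M ∩ L).Nonempty)
    (hG : IsOpen G) (hGne : (G ∩ Y).Nonempty) (hGP : Disjoint G P) (hGL : Disjoint G L)
    (hlink : ∀ K ⊆ Y, IsSubcontinuum K → (K ∩ P).Nonempty → (K ∩ L).Nonempty → G ∩ Y ⊆ K)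
    (hfat : ∀ K ⊆ Y, IsSubcontinuum K → G ∩ Y ⊆ K → ¬ IsIndecomposableSet K) :
    ∃ P' L' M₁ M₂ : Set α, IsSubcontinuum P' ∧ P' ⊆ Y ∧ P ⊆ P' ∧ Disjoint G P' ∧
      IsSubcontinuum L' ∧ L' ⊆ Y ∧ L ⊆ L' ∧ Disjoint G L' ∧
      IsSubcontinuum M₁ ∧ M₁ ⊆ M ∧ IsSubcontinuum M₂ ∧ M₂ ⊆ M ∧
      (M₁ ∩ P').Nonempty ∧ Disjoint M₁ L' ∧ (M₂ ∩ L').Nonempty ∧ Disjoint M₂ P' ∧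
      (M₁ ∩ M₂).Nonempty ∧ ((G \ M₁) ∩ Y).Nonempty ∧ ((G \ M₂) ∩ Y).Nonempty := by
  obtain ⟨p, hp⟩ := hP.2.nonempty
  obtain ⟨l, hl⟩ := hL.2.nonempty
  -- the enlarged ends
  have hDP : IsClosed ((M \ G) ∪ P) := (hM.isClosed'.sdiff hG).union hP.isClosed'
  have hDL : IsClosed ((M \ G) ∪ L) := (hM.isClosed'.sdiff hG).union hL.isClosed'
  have hpD : p ∈ (M \ G) ∪ P := Or.inr hp
  have hlD : l ∈ (M \ G) ∪ L := Or.inr hl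
  obtain ⟨P', hP'def⟩ : ∃ P', P' = connectedComponentIn ((M \ G) ∪ P) p := ⟨_, rfl⟩
  obtain ⟨L', hL'def⟩ : ∃ L', L' = connectedComponentIn ((M \ G) ∪ L) l := ⟨_, rfl⟩
  have hP' : IsSubcontinuum P' := hP'def ▸ isSubcontinuum_component hDP hpD
  have hL' : IsSubcontinuum L' := hL'def ▸ isSubcontinuum_component hDL hlD
  have hP'sub : P' ⊆ (M \ G) ∪ P := hP'def ▸ connectedComponentIn_subset _ _
  have hL'sub : L' ⊆ (M \ G) ∪ L := hL'def ▸ connectedComponentIn_subset _ _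
  have hPP' : P ⊆ P' := hP'def ▸
    hP.2.isPreconnected.subset_connectedComponentIn hp Set.subset_union_right
  have hLL' : L ⊆ L' := hL'def ▸
    hL.2.isPreconnected.subset_connectedComponentIn hl Set.subset_union_right
  have hP'max : ∀ K : Set α, IsSubcontinuum K → K ⊆ M → Disjoint G K → (K ∩ P').Nonempty →
      K ⊆ P' := by
    intro K hK hKM hKG hne
    have h1 : P' ∪ K ⊆ (M \ G) ∪ P := Set.union_subset hP'sub fun x hx =>
      Or.inl ⟨hKM hx, fun hxG => Set.disjoint_left.1 hKG hxG hx⟩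
    have h2 := (hP'.union' hK (by rwa [Set.inter_comm])).2.isPreconnected
    have h3 : P' ∪ K ⊆ P' := by
      conv_rhs => rw [hP'def]
      exact h2.subset_connectedComponentIn (Or.inl (hPP' hp)) h1
    exact Set.subset_union_right.trans h3
  have hL'max : ∀ K : Set α, IsSubcontinuum K → K ⊆ M → Disjoint G K → (K ∩ L').Nonempty →
      K ⊆ L' := by
    intro K hK hKM hKG hne
    have h1 : L' ∪ K ⊆ (M \ G) ∪ L := Set.union_subset hL'sub fun x hx =>
      Or.inl ⟨hKM hx, fun hxG => Set.disjoint_left.1 hKG hxG hx⟩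
    have h2 := (hL'.union' hK (by rwa [Set.inter_comm])).2.isPreconnected
    have h3 : L' ∪ K ⊆ L' := by
      conv_rhs => rw [hL'def]
      exact h2.subset_connectedComponentIn (Or.inl (hLL' hl)) h1
    exact Set.subset_union_right.trans h3
  have hP'Y : P' ⊆ Y := hP'sub.trans (Set.union_subset (Set.sdiff_subset.trans hMY) hPY)
  have hL'Y : L' ⊆ Y := hL'sub.trans (Set.union_subset (Set.sdiff_subset.trans hMY) hLY)
  have hGP' : Disjoint G P' := by
    rw [Set.disjoint_left]
    intro x hxG hx
    rcases hP'sub hx with h | h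
    · exact h.2 hxG
    · exact Set.disjoint_left.1 hGP hxG h
  have hGL' : Disjoint G L' := by
    rw [Set.disjoint_left]
    intro x hxG hx
    rcases hL'sub hx with h | h
    · exact h.2 hxG
    · exact Set.disjoint_left.1 hGL hxG h
  -- irreducible continuum between the enlarged ends
  obtain ⟨N, hNM, hN, hNP, hNL, hNmin⟩ := exists_irreducible hM hP'.isClosed' hL'.isClosed'
    (hMP.mono (Set.inter_subset_inter_right _ hPP'))
    (hML.mono (Set.inter_subset_inter_right _ hLL'))
  have hGN : G ∩ Y ⊆ N := by
    have h1 := (hP'.union' hN (by rwa [Set.inter_comm])).union' hL' (by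
      obtain ⟨x, hx⟩ := hNL
      exact ⟨x, Or.inr hx.1, hx.2⟩)
    have h2 := hlink _ (Set.union_subset (Set.union_subset hP'Y (hNM.trans hMY)) hL'Y) h1
      ⟨p, Or.inl (Or.inl (hPP' hp)), hp⟩ ⟨l, Or.inr (hLL' hl), hl⟩
    intro x hx
    rcases h2 hx with (h | h) | h
    · exact (Set.disjoint_left.1 hGP' hx.1 h).elim
    · exact h
    · exact (Set.disjoint_left.1 hGL' hx.1 h).elim
  have hdec := hfat N (hNM.trans hMY) hN hGN
  -- decomposition, oriented
  obtain ⟨A, B, hA, hAN, hB, hBN, hAB, hAP, hAL, hBL, hBP⟩ : ∃ A B : Set α, IsSubcontinuum A ∧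
      A ⊆ N ∧ IsSubcontinuum B ∧ B ⊆ N ∧ A ∪ B = N ∧ (A ∩ P').Nonempty ∧ Disjoint A L' ∧
      (B ∩ L').Nonempty ∧ Disjoint B P' := by
    unfold IsIndecomposableSet at hdec
    push Not at hdec
    obtain ⟨A, B, hA, hAN, hB, hBN, hAB, hAne, hBne⟩ := hdec
    have main : ∀ A B : Set α, IsSubcontinuum A → A ⊆ N → IsSubcontinuum B → B ⊆ N →
        A ∪ B = N → A ≠ N → B ≠ N → (A ∩ P').Nonempty →
        Disjoint A L' ∧ (B ∩ L').Nonempty ∧ Disjoint B P' := by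
      intro A B hA hAN hB hBN hAB hAne hBne hAP
      have h1 : ¬ (A ∩ L').Nonempty := fun h => hAne (hNmin A hAN hA hAP h)
      have h2 : (B ∩ L').Nonempty := by
        obtain ⟨x, hxN, hxL⟩ := hNL
        rw [← hAB] at hxN
        rcases hxN with h | h
        · exact (h1 ⟨x, h, hxL⟩).elim
        · exact ⟨x, h, hxL⟩
      have h3 : ¬ (B ∩ P').Nonempty := fun h => hBne (hNmin B hBN hB h h2)
      exact ⟨Set.disjoint_iff_inter_eq_empty.2 (Set.not_nonempty_iff_eq_empty.1 h1), h2,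
        Set.disjoint_iff_inter_eq_empty.2 (Set.not_nonempty_iff_eq_empty.1 h3)⟩
    obtain ⟨x, hxN, hxP⟩ := hNP
    rw [← hAB] at hxN
    rcases hxN with h | h
    · obtain ⟨h1, h2, h3⟩ := main A B hA hAN hB hBN hAB hAne hBne ⟨x, h, hxP⟩
      exact ⟨A, B, hA, hAN, hB, hBN, hAB, ⟨x, h, hxP⟩, h1, h2, h3⟩
    · obtain ⟨h1, h2, h3⟩ := main B A hB hBN hA hAN (by rwa [Set.union_comm]) hBne hAne ⟨x, h, hxP⟩
      exact ⟨B, A, hB, hBN, hA, hAN, by rwa [Set.union_comm], ⟨x, h, hxP⟩, h1, h2, h3⟩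
  have hABne : (B ∩ A).Nonempty := by
    have hpre := hN.2.isPreconnected
    rw [isPreconnected_closed_iff] at hpre
    obtain ⟨x, -, h⟩ := hpre B A hB.isClosed' hA.isClosed' (by rw [← hAB, Set.union_comm])
      (hB.2.nonempty.mono fun x hx => ⟨hBN hx, hx⟩) (hA.2.nonempty.mono fun x hx => ⟨hAN hx, hx⟩)
    exact ⟨x, h⟩
  obtain ⟨M₂, hM₂B, hM₂, hM₂A, hM₂L, hM₂min⟩ :=
    exists_irreducible hB hA.isClosed' hL'.isClosed' hABne hBL
  have hM₂P : Disjoint M₂ P' := hBP.mono_left hM₂B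
  obtain ⟨M₁, hM₁A, hM₁, hM₁M₂, hM₁P, hM₁min⟩ :=
    exists_irreducible hA hM₂.isClosed' hP'.isClosed' (by rwa [Set.inter_comm]) hAP
  have hd₂ := irreducible_dense hM₂ hA.isClosed' hAL hM₂L hM₂min
  have hd₁ := irreducible_dense hM₁ hM₂.isClosed' hM₂P hM₁P hM₁min
  have hAM : A ⊆ M := hAN.trans hNM
  have hBM : B ⊆ M := hBN.trans hNM
  have hM₁L : Disjoint M₁ L' := hAL.mono_left hM₁A
  have hG₁ : (G ∩ M₁).Nonempty := by
    by_contra h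
    rw [Set.not_nonempty_iff_eq_empty, ← Set.disjoint_iff_inter_eq_empty] at h
    have h1 := hP'max M₁ hM₁ (hM₁A.trans hAM) h hM₁P
    obtain ⟨x, hx1, hx2⟩ := hM₁M₂
    exact Set.disjoint_left.1 hM₂P hx2 (h1 hx1)
  have hG₂ : (G ∩ M₂).Nonempty := by
    by_contra h
    rw [Set.not_nonempty_iff_eq_empty, ← Set.disjoint_iff_inter_eq_empty] at h
    have h1 := hL'max M₂ hM₂ (hM₂B.trans hBM) h hM₂L
    obtain ⟨x, hx1, hx2⟩ := hM₁M₂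
    exact Set.disjoint_left.1 hM₁L hx1 (h1 hx2)
  refine ⟨P', L', M₁, M₂, hP', hP'Y, hPP', hGP', hL', hL'Y, hLL', hGL', hM₁, hM₁A.trans hAM, hM₂,
    hM₂B.trans hBM, hM₁P, hM₁L, hM₂L, hM₂P, hM₁M₂, ?_, ?_⟩
  · obtain ⟨x, hxG, hx⟩ := hG₂
    obtain ⟨y, hyG, hyM, hyA⟩ := mem_closure_iff.1 (hd₂ hx) G hG hxG
    exact ⟨y, ⟨hyG, fun h => hyA (hM₁A h)⟩, hMY (hBM (hM₂B hyM))⟩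
  · obtain ⟨x, hxG, hx⟩ := hG₁
    obtain ⟨y, hyG, hyM, hyA⟩ := mem_closure_iff.1 (hd₁ hx) G hG hxG
    exact ⟨y, ⟨hyG, hyA⟩, hMY (hAM (hM₁A hyM))⟩

/-- Contradiction from a link. -/
theorem no_link {Y P L G : Set α} (hY : IsSubcontinuum Y)
    (hP : IsSubcontinuum P) (hPY : P ⊆ Y) (hL : IsSubcontinuum L) (hLY : L ⊆ Y)
    (hG : IsOpen G) (hGne : (G ∩ Y).Nonempty) (hGP : Disjoint G P) (hGL : Disjoint G L)
    (hlink : ∀ K ⊆ Y, IsSubcontinuum K → (K ∩ P).Nonempty → (K ∩ L).Nonempty → G ∩ Y ⊆ K)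
    (hfat : ∀ G' ⊆ G, IsOpen G' → (G' ∩ Y).Nonempty →
      ∀ K ⊆ Y, IsSubcontinuum K → G' ∩ Y ⊆ K → ¬ IsIndecomposableSet K)
    (hstar : ∀ Y₁ Y₂ : Set α, IsClosed Y₁ → IsClosed Y₂ → Y₁ ∪ Y₂ = Y →
      IsPreconnected (Y₁ ∩ Y₂) → Y₁ = Y ∨ Y₂ = Y) : False := by
  obtain ⟨P', L', M₁, M₂, hP', hP'Y, hPP', hGP', hL', hL'Y, hLL', hGL', hM₁, hM₁Y, hM₂, hM₂Y,
    hM₁P, hM₁L, hM₂L, hM₂P, hM₁M₂, hne₁, hne₂⟩ := split_step hP hPY hL hLY hY subset_rfl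
      (hP.2.nonempty.mono fun x hx => ⟨hPY hx, hx⟩) (hL.2.nonempty.mono fun x hx => ⟨hLY hx, hx⟩)
      hG hGne hGP hGL hlink (hfat G subset_rfl hG hGne)
  obtain ⟨p, hp⟩ := hP.2.nonempty
  obtain ⟨l, hl⟩ := hL.2.nonempty
  have hL₁ : IsSubcontinuum (L' ∪ M₂) := hL'.union' hM₂ (by rwa [Set.inter_comm])
  have hL₁Y : L' ∪ M₂ ⊆ Y := Set.union_subset hL'Y hM₂Y
  have hlink' : ∀ K ⊆ Y, IsSubcontinuum K → (K ∩ P').Nonempty → (K ∩ (L' ∪ M₂)).Nonempty →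
      (G \ M₂) ∩ Y ⊆ K := by
    intro K hKY hK hKP hKL
    have h1 := (hP'.union' hK (by rwa [Set.inter_comm])).union' hL₁ (by
      obtain ⟨x, hx⟩ := hKL
      exact ⟨x, Or.inr hx.1, hx.2⟩)
    have h2 := hlink _ (Set.union_subset (Set.union_subset hP'Y hKY) hL₁Y) h1
      ⟨p, Or.inl (Or.inl (hPP' hp)), hp⟩ ⟨l, Or.inr (Or.inl (hLL' hl)), hl⟩
    intro x hx
    rcases h2 ⟨hx.1.1, hx.2⟩ with (h | h) | h | h
    · exact (Set.disjoint_left.1 hGP' hx.1.1 h).elim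
    · exact h
    · exact (Set.disjoint_left.1 hGL' hx.1.1 h).elim
    · exact (hx.1.2 h).elim
  have hGo : IsOpen (G \ M₂) := hG.sdiff hM₂.isClosed'
  obtain ⟨P₂, L₂, N₁, N₂, hP₂, hP₂Y, hPP₂, hGP₂, hL₂, hL₂Y, hLL₂, hGL₂, hN₁, hN₁M, hN₂, hN₂M,
    hN₁P, hN₁L, hN₂L, hN₂P, hN₁N₂, hne₁', hne₂'⟩ := split_step hP' hP'Y hL₁ hL₁Y hM₁ hM₁Y
      hM₁P (hM₁M₂.mono (Set.inter_subset_inter_right _ Set.subset_union_right))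
      hGo hne₂ (hGP'.mono_left Set.sdiff_subset)
      (by
        rw [Set.disjoint_union_right]
        exact ⟨hGL'.mono_left Set.sdiff_subset, Set.disjoint_sdiff_left⟩)
      hlink' (hfat _ Set.sdiff_subset hGo hne₂)
  obtain ⟨G₂, hG₂def⟩ : ∃ G₂, G₂ = (G \ M₂) \ N₁ := ⟨_, rfl⟩
  have hG₂o : IsOpen G₂ := hG₂def ▸ hGo.sdiff hN₁.isClosed'
  have hG₂G : G₂ ⊆ G := hG₂def ▸ Set.sdiff_subset.trans Set.sdiff_subset
  -- `N₂` contains `G₂ ∩ Y`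
  have hG₂N : G₂ ∩ Y ⊆ N₂ := by
    have h1 := (hP₂.union' (hN₁.union' hN₂ hN₁N₂) (by
      obtain ⟨x, hx⟩ := hN₁P
      exact ⟨x, hx.2, Or.inl hx.1⟩)).union' hL₂ (by
      obtain ⟨x, hx⟩ := hN₂L
      exact ⟨x, Or.inr (Or.inr hx.1), hx.2⟩)
    have h2 := hlink' _ (Set.union_subset (Set.union_subset hP₂Y (Set.union_subset
      (hN₁M.trans hM₁Y) (hN₂M.trans hM₁Y))) hL₂Y) h1
      ⟨p, Or.inl (Or.inl (hPP₂ (hPP' hp))), hPP' hp⟩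
      ⟨l, Or.inr (hLL₂ (Or.inl (hLL' hl))), Or.inl (hLL' hl)⟩
    rintro x ⟨hx, hxY⟩
    rw [hG₂def] at hx
    rcases h2 ⟨hx.1, hxY⟩ with (h | h | h) | h
    · exact (Set.disjoint_left.1 hGP₂ hx.1 h).elim
    · exact (hx.2 h).elim
    · exact h
    · exact (Set.disjoint_left.1 hGL₂ hx.1 h).elim
  have hN₂P₀ : Disjoint N₂ P := hN₂P.mono_right (hPP'.trans hPP₂)
  have hN₂L₀ : Disjoint N₂ L := (hM₁L.mono_left hN₂M).mono_right hLL'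
  -- separate
  have hD : IsClosed (Y \ G₂) := hY.isClosed'.sdiff hG₂o
  have hPD : P ⊆ Y \ G₂ := fun x hx =>
    ⟨hPY hx, fun h => Set.disjoint_left.1 hGP (hG₂G h) hx⟩
  have hLD : L ⊆ Y \ G₂ := fun x hx =>
    ⟨hLY hx, fun h => Set.disjoint_left.1 hGL (hG₂G h) hx⟩
  have hdis : Disjoint (connectedComponentIn (Y \ G₂) p) L := by
    rw [Set.disjoint_iff_inter_eq_empty, ← Set.not_nonempty_iff_eq_empty]
    intro h
    have hsub : connectedComponentIn (Y \ G₂) p ⊆ Y \ G₂ := connectedComponentIn_subset _ _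
    have h1 := hlink _ (hsub.trans Set.sdiff_subset) (isSubcontinuum_component hD (hPD hp))
      ⟨p, mem_connectedComponentIn (hPD hp), hp⟩ h
    obtain ⟨x, hx, hxY⟩ := hne₁'
    rw [← hG₂def] at hx
    exact (hsub (h1 ⟨hG₂G hx, hxY⟩)).2 hx
  obtain ⟨E, F, hE, hF, hEF, hun, hpE, hEL⟩ := exists_separation hD hL.isClosed' (hPD hp) hdis
  have hcap : (E ∪ N₂) ∩ (F ∪ N₂) = N₂ := by
    rw [← Set.inter_union_distrib_right, Set.disjoint_iff_inter_eq_empty.1 hEF, Set.empty_union]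
  have hcup : (E ∪ N₂) ∪ (F ∪ N₂) = Y := by
    apply Set.Subset.antisymm
    · have hEY : E ⊆ Y := (Set.subset_union_left.trans hun.subset).trans Set.sdiff_subset
      have hFY : F ⊆ Y := (Set.subset_union_right.trans hun.subset).trans Set.sdiff_subset
      have hNY : N₂ ⊆ Y := hN₂M.trans hM₁Y
      exact Set.union_subset (Set.union_subset hEY hNY) (Set.union_subset hFY hNY)
    · intro x hx
      by_cases hxG : x ∈ G₂
      · exact Or.inl (Or.inr (hG₂N ⟨hxG, hx⟩))
      · have : x ∈ E ∪ F := hun.symm.subset ⟨hx, hxG⟩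
        rcases this with h | h
        · exact Or.inl (Or.inl h)
        · exact Or.inr (Or.inl h)
  rcases hstar _ _ (hE.union hN₂.isClosed') (hF.union hN₂.isClosed') hcup
    (hcap.symm ▸ hN₂.2.isPreconnected) with h | h
  · have : l ∈ E ∪ N₂ := h.symm ▸ hLY hl
    rcases this with h | h
    · exact Set.disjoint_left.1 hEL h hl
    · exact Set.disjoint_left.1 hN₂L₀ h hl
  · have : p ∈ F ∪ N₂ := h.symm ▸ hPY hp
    rcases this with h | h
    · exact Set.disjoint_left.1 hEF hpE h
    · exact Set.disjoint_left.1 hN₂P₀ h hp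


theorem isSubcontinuum_singleton (a : α) : IsSubcontinuum ({a} : Set α) :=
  ⟨isCompact_singleton, isConnected_singleton⟩

theorem exists_ne_of_open {X G : Set α} (hX : IsPreconnected X) (hXnt : X.Nontrivial)
    (hG : IsOpen G) (hGX : (G ∩ X).Nonempty) (a : α) : ∃ y ∈ G ∩ X, y ≠ a := by
  by_contra hcon
  push Not at hcon
  obtain ⟨b, hb⟩ := hGX
  obtain rfl := hcon b hb
  obtain ⟨c, hcX, hcb⟩ := hXnt.exists_ne b
  rw [isPreconnected_closed_iff] at hX
  obtain ⟨x, -, hx1, hx2⟩ := hX {b} Gᶜ isClosed_singleton hG.isClosed_compl (by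
      intro x hx
      by_cases hxG : x ∈ G
      · exact Or.inl (hcon x ⟨hxG, hx⟩)
      · exact Or.inr hxG) ⟨b, hb.2, rfl⟩ ⟨c, hcX, fun h => hcb (hcon c ⟨h, hcX⟩)⟩
  rw [Set.mem_singleton_iff] at hx1
  exact hx2 (hx1 ▸ hb.1)

/-- The continuum-theoretic core. -/
theorem continuum_main {X Y G₀ A : Set α} (hX : IsSubcontinuum X) (hXnt : X.Nontrivial)
    (hY : IsSubcontinuum Y) (hYX : Y ⊆ X) (hG₀ : IsOpen G₀) (hG₀ne : (G₀ ∩ X).Nonempty)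
    (hG₀Y : G₀ ∩ X ⊆ Y) (hA : A.Finite) (hAX : A ⊆ X)
    (hirr : ∀ K : Set α, IsSubcontinuum K → K ⊆ X → A ⊆ K → K = X)
    (hstar : ∀ Y₁ Y₂ : Set α, IsClosed Y₁ → IsClosed Y₂ → Y₁ ∪ Y₂ = Y →
      IsPreconnected (Y₁ ∩ Y₂) → Y₁ = Y ∨ Y₂ = Y) :
    ∃ K ⊆ Y, IsSubcontinuum K ∧ IsIndecomposableSet K ∧
      ∃ G : Set α, IsOpen G ∧ (G ∩ X).Nonempty ∧ G ∩ X ⊆ K := by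
  by_contra hcon
  push Not at hcon
  have hfat : ∀ G' ⊆ G₀, IsOpen G' → (G' ∩ Y).Nonempty →
      ∀ K ⊆ Y, IsSubcontinuum K → G' ∩ Y ⊆ K → ¬ IsIndecomposableSet K := by
    intro G' hG'G hG' hne K hKY hK hGK hind
    refine hcon K hKY hK hind G' hG' (hne.mono (Set.inter_subset_inter_right _ hYX)) ?_
    intro x hx
    exact hGK ⟨hx.1, hG₀Y ⟨hG'G hx.1, hx.2⟩⟩
  -- projecting the finite set into `Y`
  have hproj : ∀ a ∈ A, ∃ y ∈ Y, ∃ C ⊆ X, IsSubcontinuum C ∧ a ∈ C ∧ y ∈ C ∧ C ∩ G₀ ⊆ {y} := by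
    intro a ha
    by_cases haY : a ∈ Y
    · exact ⟨a, haY, {a}, Set.singleton_subset_iff.2 (hAX ha), isSubcontinuum_singleton a, rfl,
        rfl, Set.inter_subset_left⟩
    · have haD : a ∈ closure (X \ Y) := subset_closure ⟨hAX ha, haY⟩
      have hDX : closure (X \ Y) ⊆ X := closure_minimal Set.sdiff_subset hX.isClosed'
      have hDG : Disjoint (closure (X \ Y)) G₀ := by
        rw [Set.disjoint_left]
        intro x hx hxG
        obtain ⟨y, hyG, hyX, hyY⟩ := mem_closure_iff.1 hx G₀ hG₀ hxG
        exact hyY (hG₀Y ⟨hyG, hyX⟩)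
      have hne : closure (X \ Y) ≠ X := by
        intro h
        obtain ⟨x, hxG, hxX⟩ := hG₀ne
        exact Set.disjoint_left.1 hDG (h.symm ▸ hxX) hxG
      obtain ⟨y, hyC, hy⟩ := boundary_bump hX isClosed_closure hDX hne haD
      have hsub : connectedComponentIn (closure (X \ Y)) a ⊆ closure (X \ Y) :=
        connectedComponentIn_subset _ _
      refine ⟨y, ?_, _, hsub.trans hDX, isSubcontinuum_component isClosed_closure haD,
        mem_connectedComponentIn haD, hyC, ?_⟩
      · refine closure_minimal ?_ hY.isClosed' hy
        intro z hz
        by_contra hzY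
        exact hz.2 (subset_closure ⟨hz.1, hzY⟩)
      · rintro z ⟨hz, hzG⟩
        exact (Set.disjoint_left.1 hDG (hsub hz) hzG).elim
  choose! f hfY C hCX hC haC hfC hCG using hproj
  have hirr' : ∀ K ⊆ Y, IsSubcontinuum K → f '' A ⊆ K → G₀ ∩ Y ⊆ K := by
    intro K hKY hK hAK
    have hT : K ∪ ⋃ a ∈ A, C a = X := by
      apply hirr
      · refine ⟨hK.1.union (hA.isCompact_biUnion fun a ha => (hC a ha).1),
          hK.2.nonempty.mono Set.subset_union_left, ?_⟩
        obtain ⟨k, hk⟩ := hK.2.nonempty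
        refine isPreconnected_of_forall k ?_
        rintro y (hy | hy)
        · exact ⟨K, Set.subset_union_left, hk, hy, hK.2.isPreconnected⟩
        · simp only [Set.mem_iUnion] at hy
          obtain ⟨a, ha, hya⟩ := hy
          refine ⟨K ∪ C a, Set.union_subset_union_right _ (Set.subset_biUnion_of_mem ha),
            Or.inl hk, Or.inr hya, ?_⟩
          exact (hK.union' (hC a ha) ⟨f a, hAK ⟨a, ha, rfl⟩, hfC a ha⟩).2.isPreconnected
      · exact Set.union_subset (hKY.trans hYX) (Set.iUnion₂_subset hCX)
      · intro a ha
        exact Or.inr (Set.mem_biUnion ha (haC a ha))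
    rintro x ⟨hxG, hxY⟩
    have hx : x ∈ K ∪ ⋃ a ∈ A, C a := hT.symm ▸ hYX hxY
    rcases hx with hx | hx
    · exact hx
    · simp only [Set.mem_iUnion] at hx
      obtain ⟨a, ha, hxa⟩ := hx
      have : x = f a := hCG a ha ⟨hxa, hxG⟩
      exact this ▸ hAK ⟨a, ha, rfl⟩
  have hA' : (f '' A).Finite := hA.image f
  have hA'Y : f '' A ⊆ Y := by
    rintro _ ⟨a, ha, rfl⟩
    exact hfY a ha
  -- maximal continuum
  obtain ⟨x₀, hx₀⟩ := hG₀ne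
  obtain ⟨x₁, hx₁, hx₁ne⟩ := exists_ne_of_open hX.2.isPreconnected hXnt hG₀ ⟨x₀, hx₀⟩ x₀
  obtain ⟨L, ⟨hL, hLY, hLG⟩, hLmax⟩ := Set.Finite.exists_maximalFor' (fun L : Set α => f '' A ∩ L)
    {L : Set α | IsSubcontinuum L ∧ L ⊆ Y ∧ ¬ G₀ ∩ Y ⊆ L}
    (hA'.finite_subsets.subset (by
      rintro _ ⟨L, -, rfl⟩
      exact Set.inter_subset_left))
    ⟨{x₀}, isSubcontinuum_singleton x₀, Set.singleton_subset_iff.2 (hG₀Y hx₀), fun h =>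
      hx₁ne (h ⟨hx₁.1, hG₀Y hx₁⟩)⟩
  obtain ⟨a, haA, haL⟩ := Set.not_subset.1 fun h => hLG (hirr' L hLY hL h)
  obtain ⟨z, ⟨hzG, hzY⟩, hzL⟩ := Set.not_subset.1 hLG
  obtain ⟨w, ⟨⟨hwG, hwL⟩, hwX⟩, hwa⟩ := exists_ne_of_open hX.2.isPreconnected hXnt
    (hG₀.sdiff hL.isClosed') ⟨z, ⟨hzG, hzL⟩, hYX hzY⟩ a
  have hsub : (G₀ \ L) \ {a} ⊆ G₀ := Set.sdiff_subset.trans Set.sdiff_subset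
  refine no_link (Y := Y) (P := {a}) (L := L) (G := (G₀ \ L) \ {a}) hY (isSubcontinuum_singleton a)
    (Set.singleton_subset_iff.2 (hA'Y haA)) hL hLY
    ((hG₀.sdiff hL.isClosed').sdiff isClosed_singleton)
    ⟨w, ⟨⟨hwG, hwL⟩, hwa⟩, hG₀Y ⟨hwG, hwX⟩⟩ Set.disjoint_sdiff_left
    (Set.disjoint_sdiff_left.mono_left Set.sdiff_subset) ?_
    (fun G' hG' => hfat G' (hG'.trans hsub)) hstar
  intro K hKY hK hKa hKL
  have haK : a ∈ K := by
    obtain ⟨b, hb, hba⟩ := hKa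
    rw [Set.mem_singleton_iff] at hba
    exact hba ▸ hb
  have hKL' : G₀ ∩ Y ⊆ K ∪ L := by
    by_contra h
    have := hLmax (j := K ∪ L) ⟨hK.union' hL hKL, Set.union_subset hKY hLY, h⟩
      (Set.inter_subset_inter_right _ Set.subset_union_right)
    exact haL (this ⟨haA, Or.inl haK⟩).2
  rintro x ⟨⟨⟨hxG, hxL⟩, -⟩, hxY⟩
  rcases hKL' ⟨hxG, hxY⟩ with h | h
  · exact h
  · exact (hxL h).elim

end Continuum

section Planar

open Complex

theorem log_unique {Z : Type*} [TopologicalSpace Z] [PreconnectedSpace Z] {f g : Z → ℂ}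
    (hf : Continuous f) (hg : Continuous g) (h : ∀ z, exp (f z) = exp (g z)) (a : Z)
    (ha : f a = g a) : f = g := by
  refine Complex.isCoveringMap_exp.eq_of_comp_eq hf hg ?_ a ha
  funext z
  exact Subtype.ext (h z)

theorem isSimplyConnected_univ_complex : IsSimplyConnected (Set.univ : Set ℂ) := by
  have h : ContractibleSpace (Set.univ : Set ℂ) :=
    (convex_univ : Convex ℝ (Set.univ : Set ℂ)).contractibleSpace Set.univ_nonempty
  show SimplyConnectedSpace _
  infer_instance

/-- There is no continuous logarithm of `z - u` on the boundary of a bounded open set around `u`. -/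
theorem no_log_frontier {A : Set ℂ} (hA : IsOpen A) (hb : Bornology.IsBounded A) {u : ℂ}
    (hu : u ∈ A) {h : ℂ → ℂ} (hc : ContinuousOn h (frontier A))
    (he : ∀ z ∈ frontier A, exp (h z) = z - u) : False := by
  classical
  obtain ⟨g, hg⟩ := ContinuousMap.exists_restrict_eq (isClosed_frontier (s := A))
    ⟨(frontier A).domRestrict h, continuousOn_iff_continuous_domRestrict.1 hc⟩
  have hg' : ∀ z ∈ frontier A, g z = h z := fun z hz => congrArg (fun F => F ⟨z, hz⟩) hg
  have hGc : Continuous fun z => if z ∈ A then exp (g z) else z - u := by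
    refine Continuous.if ?_ (by fun_prop) (by fun_prop)
    intro z hz
    have hz' : z ∈ frontier A := hz
    rw [hg' z hz', he z hz']
  obtain ⟨H, hHc, hH⟩ := exists_continuousOn_eqOn_exp_comp isSimplyConnected_univ_complex
    isOpen_univ hGc.continuousOn (by
      rintro ⟨z, -, hz⟩
      dsimp only at hz
      split_ifs at hz with hzA
      · exact exp_ne_zero _ hz
      · exact hzA (sub_eq_zero.1 hz ▸ hu))
  rw [continuousOn_univ] at hHc
  obtain ⟨R, hR0, hR⟩ := hb.subset_ball_lt 0 u
  have hcirc : ∀ t : ℝ, exp (H (u + R * exp (t * I))) = R * exp (t * I) := by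
    intro t
    have h1 := hH (Set.mem_univ (u + R * exp (t * I)))
    have h2 : u + R * exp (t * I) ∉ A := by
      intro hmem
      have := hR hmem
      rw [mem_ball_iff_norm, add_sub_cancel_left, norm_mul, norm_exp_ofReal_mul_I, mul_one,
        norm_real, Real.norm_eq_abs, abs_of_pos hR0] at this
      exact lt_irrefl _ this
    simpa [h2] using h1
  have hφ := log_unique (Z := ℝ) (f := fun t : ℝ => H (u + R * exp (t * I)))
    (g := fun t : ℝ => H (u + R) + t * I) (by fun_prop) (by fun_prop) (by
      intro t
      have h0 := hcirc 0
      simp only [ofReal_zero, zero_mul, exp_zero, mul_one] at h0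
      show exp (H (u + R * exp (t * I))) = exp (H (u + R) + t * I)
      rw [hcirc t, exp_add, h0]) 0 (by simp)
  have h2 := congrFun hφ (2 * Real.pi)
  simp at h2

/-- Existence of a continuous logarithm of `z - w` on `F`. -/
def HasLogOn (F : Set ℂ) (w : ℂ) : Prop :=
  ∃ h : ℂ → ℂ, ContinuousOn h F ∧ ∀ z ∈ F, exp (h z) = z - w

theorem hasLogOn_far {F : Set ℂ} {w : ℂ} (h : ∀ z ∈ F, ‖z‖ < ‖w‖) : HasLogOn F w := by
  rcases F.eq_empty_or_nonempty with rfl | ⟨z₀, hz₀⟩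
  · exact ⟨0, by simp, by simp⟩
  have hw : w ≠ 0 := by
    rintro rfl
    have := h z₀ hz₀
    simp at this
    exact absurd this (not_lt.2 (norm_nonneg _))
  have hs : ∀ z ∈ F, 1 + -(z / w) ∈ slitPlane := by
    intro z hz
    apply mem_slitPlane_of_norm_lt_one
    rw [norm_neg, norm_div, div_lt_one (norm_pos_iff.2 hw)]
    exact h z hz
  refine ⟨fun z => log (-w) + log (1 + -(z / w)), ?_, ?_⟩
  · refine continuousOn_const.add (ContinuousOn.clog (by fun_prop) hs)
  · intro z hz
    rw [exp_add, exp_log (neg_ne_zero.2 hw), exp_log (slitPlane_ne_zero (hs z hz))]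
    field_simp
    ring

theorem hasLogOn_near {F : Set ℂ} {w w' : ℂ} (hw : HasLogOn F w)
    (h : ∀ z ∈ F, ‖w - w'‖ < ‖z - w‖) : HasLogOn F w' := by
  obtain ⟨g, hg, hg'⟩ := hw
  have hne : ∀ z ∈ F, z - w ≠ 0 := by
    intro z hz h0
    have := h z hz
    rw [h0, norm_zero] at this
    exact absurd this (not_lt.2 (norm_nonneg _))
  have hs : ∀ z ∈ F, 1 + (w - w') / (z - w) ∈ slitPlane := by
    intro z hz
    apply mem_slitPlane_of_norm_lt_one
    rw [norm_div, div_lt_one (norm_pos_iff.2 (hne z hz))]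
    exact h z hz
  refine ⟨fun z => g z + log (1 + (w - w') / (z - w)), ?_, ?_⟩
  · refine hg.add (ContinuousOn.clog ?_ hs)
    exact continuousOn_const.add (continuousOn_const.div (by fun_prop) hne)
  · intro z hz
    have := hne z hz
    rw [exp_add, hg' z hz, exp_log (slitPlane_ne_zero (hs z hz))]
    field_simp
    ring

theorem hasLogOn_locally {F : Set ℂ} (hF : IsClosed F) {w : ℂ} (hw : w ∉ F) :
    ∃ δ > 0, ∀ w' ∈ Metric.ball w δ, w' ∉ F ∧ (HasLogOn F w ↔ HasLogOn F w') := by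
  obtain ⟨ε, hε, hεF⟩ := Metric.isOpen_iff.1 hF.isOpen_compl w hw
  refine ⟨ε / 2, by positivity, ?_⟩
  intro w' hw'
  rw [mem_ball_iff_norm] at hw'
  have h1 : ∀ z ∈ F, ε ≤ ‖z - w‖ := by
    intro z hz
    by_contra hlt
    push Not at hlt
    exact hεF (mem_ball_iff_norm.2 hlt) hz
  have h2 : ∀ z ∈ F, ε / 2 < ‖z - w'‖ := by
    intro z hz
    have := norm_sub_le_norm_sub_add_norm_sub z w' w
    have := h1 z hz
    linarith
  refine ⟨fun h => ?_, fun h => hasLogOn_near h fun z hz => ?_,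
    fun h => hasLogOn_near h fun z hz => ?_⟩
  · have := h2 w' h
    rw [sub_self, norm_zero] at this
    linarith
  · rw [norm_sub_rev]
    have := h1 z hz
    linarith
  · have := h2 z hz
    linarith

/-- If `w` and `∞` lie in a connected subset of the complement of `F`, there is a logarithm. -/
theorem hasLogOn_of_connected {F C : Set (OnePoint ℂ)} (hF : IsClosed F) (hC : IsPreconnected C)
    (hFC : Disjoint C F) {w : ℂ} (hw : (w : OnePoint ℂ) ∈ C) (hi : OnePoint.infty ∈ C) :
    HasLogOn ((↑) ⁻¹' F : Set ℂ) w := by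
  set K : Set ℂ := (↑) ⁻¹' F with hK
  have hiF : OnePoint.infty ∉ F := fun h => Set.disjoint_left.1 hFC hi h
  obtain ⟨hKcl, hKc⟩ := (OnePoint.isClosed_iff_of_notMem hiF).1 hF
  obtain ⟨R, hR0, hR⟩ := hKc.isBounded.subset_ball_lt 0 0
  have hfar : ∀ v : ℂ, R ≤ ‖v‖ → HasLogOn K v := fun v hv => hasLogOn_far fun z hz =>
    lt_of_lt_of_le (by simpa using hR hz) hv
  have hT : IsOpen {v : ℂ | v ∉ K ∧ HasLogOn K v} := by
    rw [Metric.isOpen_iff]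
    rintro v ⟨hvK, hv⟩
    obtain ⟨δ, hδ, h⟩ := hasLogOn_locally hKcl hvK
    exact ⟨δ, hδ, fun v' hv' => ⟨(h v' hv').1, (h v' hv').2.1 hv⟩⟩
  have hT' : IsOpen {v : ℂ | v ∉ K ∧ ¬ HasLogOn K v} := by
    rw [Metric.isOpen_iff]
    rintro v ⟨hvK, hv⟩
    obtain ⟨δ, hδ, h⟩ := hasLogOn_locally hKcl hvK
    exact ⟨δ, hδ, fun v' hv' => ⟨(h v' hv').1, fun h' => hv ((h v' hv').2.2 h')⟩⟩
  have hO : IsOpen ((↑) '' {v : ℂ | v ∉ K ∧ HasLogOn K v} ∪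
      ((↑) '' Metric.closedBall (0 : ℂ) R)ᶜ : Set (OnePoint ℂ)) :=
    (OnePoint.isOpen_image_coe.2 hT).union (OnePoint.isOpen_compl_image_coe.2
      ⟨Metric.isClosed_closedBall, isCompact_closedBall _ _⟩)
  have hO' : IsOpen ((↑) '' {v : ℂ | v ∉ K ∧ ¬ HasLogOn K v} : Set (OnePoint ℂ)) :=
    OnePoint.isOpen_image_coe.2 hT'
  have hsub : C ⊆ _ := hC.subset_left_of_subset_union hO hO' (by
      rw [Set.disjoint_left]
      rintro x hx ⟨v, ⟨hvK, hv⟩, rfl⟩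
      rcases hx with ⟨v', hv', hvv⟩ | hx
      · rw [OnePoint.coe_eq_coe] at hvv
        exact hv (hvv ▸ hv'.2)
      · apply hv
        apply hfar
        by_contra hlt
        push Not at hlt
        exact hx ⟨v, by simpa using hlt.le, rfl⟩) (by
      intro x hx
      induction x using OnePoint.rec with
      | infty => exact Or.inl (Or.inr OnePoint.infty_notMem_image_coe)
      | coe v =>
        have hvK : v ∉ K := fun h => Set.disjoint_left.1 hFC hx h
        by_cases hv : HasLogOn K v
        · exact Or.inl (Or.inl ⟨v, ⟨hvK, hv⟩, rfl⟩)
        · exact Or.inr ⟨v, ⟨hvK, hv⟩, rfl⟩) ⟨OnePoint.infty, hi, Or.inr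
          OnePoint.infty_notMem_image_coe⟩
  rcases hsub hw with ⟨v, hv, hvw⟩ | h
  · rw [OnePoint.coe_eq_coe] at hvw
    exact hvw ▸ hv.2
  · apply hfar
    by_contra hlt
    push Not at hlt
    exact h ⟨w, by simpa using hlt.le, rfl⟩

theorem hasLogOn_union {K₁ K₂ : Set ℂ} (h₁ : IsClosed K₁) (h₂ : IsClosed K₂)
    (hpre : IsPreconnected (K₁ ∩ K₂)) {w : ℂ} (hl₁ : HasLogOn K₁ w) (hl₂ : HasLogOn K₂ w) :
    HasLogOn (K₁ ∪ K₂) w := by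
  classical
  obtain ⟨f, hf, hf'⟩ := hl₁
  obtain ⟨g, hg, hg'⟩ := hl₂
  obtain ⟨c, hc1, hc⟩ : ∃ c : ℂ, exp c = 1 ∧ ∀ z ∈ K₁ ∩ K₂, f z = g z + c := by
    rcases (K₁ ∩ K₂).eq_empty_or_nonempty with h | ⟨a, ha⟩
    · exact ⟨0, exp_zero, fun z hz => (Set.eq_empty_iff_forall_notMem.1 h z hz).elim⟩
    have hec : exp (f a - g a) = 1 := by
      rw [exp_sub, hf' a ha.1, hg' a ha.2, ← hg' a ha.2, div_self (exp_ne_zero _)]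
    refine ⟨f a - g a, hec, ?_⟩
    have : PreconnectedSpace (K₁ ∩ K₂ : Set ℂ) := isPreconnected_iff_preconnectedSpace.1 hpre
    have hfc := continuousOn_iff_continuous_domRestrict.1 (hf.mono (Set.inter_subset_left (t := K₂)))
    have hgc := continuousOn_iff_continuous_domRestrict.1
      (hg.mono (Set.inter_subset_right (s := K₁)))
    have := log_unique (g := fun z => (K₁ ∩ K₂).domRestrict g z + (f a - g a)) hfc
      (hgc.add continuous_const) (by
        intro z
        simp only [Set.domRestrict_apply]
        rw [exp_add, hec, mul_one, hf' z z.2.1, hg' z z.2.2]) ⟨a, ha⟩ (by simp)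
    intro z hz
    exact congrFun this ⟨z, hz⟩
  refine ⟨fun z => if z ∈ K₁ then f z else g z + c, ?_, ?_⟩
  · refine ContinuousOn.union_of_isClosed ?_ ?_ h₁ h₂
    · exact hf.congr fun z hz => if_pos hz
    · refine (hg.add (continuousOn_const (c := c))).congr fun z hz => ?_
      by_cases hz1 : z ∈ K₁
      · simp only [hz1, if_true]
        exact hc z ⟨hz1, hz⟩
      · simp only [hz1, if_false]
        rfl
  · intro z hz
    by_cases hz1 : z ∈ K₁
    · simp only [hz1, if_true]
      exact hf' z hz1
    · simp only [hz1, if_false]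
      rw [exp_add, hc1, mul_one]
      exact hg' z (hz.resolve_left hz1)

end Planar

section Sphere

open OnePoint

theorem exists_homeo_infty (v : OnePoint ℂ) :
    ∃ σ : OnePoint ℂ ≃ₜ OnePoint ℂ, σ v = ∞ := by
  have hcard : Module.finrank ℝ ℂ + 1 = Fintype.card (Fin 3) := by
    simp [Complex.finrank_real_complex]
  let e : OnePoint ℂ ≃ₜ Metric.sphere (0 : EuclideanSpace ℝ (Fin 3)) 1 :=
    onePointEquivSphereOfFinrankEq hcard
  set w : EuclideanSpace ℝ (Fin 3) := (e v : EuclideanSpace ℝ (Fin 3)) with hw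
  have hw1 : ‖w‖ = 1 := by
    exact mem_sphere_zero_iff_norm.1 (e v).2
  have hw0 : w ≠ 0 := fun h => by simp [h] at hw1
  have : Fact (Module.finrank ℝ (EuclideanSpace ℝ (Fin 3)) = 2 + 1) := ⟨by simp⟩
  have hV : Module.finrank ℝ ℂ = Module.finrank ℝ (Submodule.span ℝ {w})ᗮ := by
    rw [Submodule.finrank_orthogonal_span_singleton (n := 2) hw0, Complex.finrank_real_complex]
  let k : ℂ ≃ₜ (Submodule.span ℝ {w})ᗮ :=
    (FiniteDimensional.nonempty_continuousLinearEquiv_of_finrank_eq hV).some.toHomeomorph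
  let h := onePointHyperplaneHomeoUnitSphere hw1
  have hh : h ∞ = e v := by
    apply Subtype.ext
    simp [h, onePointHyperplaneHomeoUnitSphere, OnePoint.equivOfIsEmbeddingOfRangeEq_apply_infty, hw]
  refine ⟨e.trans (h.symm.trans k.onePointCongr.symm), ?_⟩
  simp only [Homeomorph.trans_apply]
  rw [← hh, Homeomorph.symm_apply_apply]
  rfl

instance : LocallyConnectedSpace (OnePoint ℂ) := by
  have hcard : Module.finrank ℝ ℂ + 1 = Fintype.card (Fin 3) := by
    simp [Complex.finrank_real_complex]
  let e : OnePoint ℂ ≃ₜ Metric.sphere (0 : EuclideanSpace ℝ (Fin 3)) 1 :=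
    onePointEquivSphereOfFinrankEq hcard
  have : Fact (Module.finrank ℝ (EuclideanSpace ℝ (Fin 3)) = 2 + 1) := ⟨by simp⟩
  have := ChartedSpace.locallyConnectedSpace (EuclideanSpace ℝ (Fin 2))
    (Metric.sphere (0 : EuclideanSpace ℝ (Fin 3)) 1)
  exact e.isOpenEmbedding.locallyConnectedSpace

theorem frontier_comp_subset {α : Type*} [TopologicalSpace α] [LocallyConnectedSpace α]
    {O : Set α} (hO : IsOpen O) (x : α) : frontier (connectedComponentIn O x) ⊆ Oᶜ := by
  intro y hy hyO
  have hopen : IsOpen (connectedComponentIn O x) := hO.connectedComponentIn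
  have hopen' : IsOpen (connectedComponentIn O y) := hO.connectedComponentIn
  have hmem : y ∈ connectedComponentIn O y := mem_connectedComponentIn hyO
  obtain ⟨z, hz1, hz2⟩ := mem_closure_iff.1 hy.1 _ hopen' hmem
  have e1 := connectedComponentIn_eq hz1
  have e2 := connectedComponentIn_eq hz2
  apply hy.2
  rw [hopen.interior_eq, e2, ← e1]
  exact hmem

theorem preimage_preconnected {s : Set (OnePoint ℂ)} (hs : IsPreconnected s) (hi : ∞ ∉ s) :
    IsPreconnected ((↑) ⁻¹' s : Set ℂ) := by
  have : IsInducing ((↑) : ℂ → OnePoint ℂ) := isOpenEmbedding_coe.toIsEmbedding.toIsInducing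
  rw [← this.isPreconnected_image]
  rw [image_preimage_eq_of_subset]
  · exact hs
  · intro z hz
    rw [← OnePoint.compl_infty]
    rintro rfl
    exact hi hz

theorem bounded_preimage {s : Set (OnePoint ℂ)} (hi : ∞ ∉ closure s) :
    Bornology.IsBounded ((↑) ⁻¹' s : Set ℂ) :=
  ((isClosed_iff_of_notMem hi).1 isClosed_closure).2.isBounded.subset
    (preimage_mono subset_closure)

theorem frontier_preimage_coe (s : Set (OnePoint ℂ)) :
    frontier ((↑) ⁻¹' s : Set ℂ) = (↑) ⁻¹' (frontier s) :=
  (isOpenMap_coe.preimage_frontier_eq_frontier_preimage continuous_coe s).symm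

theorem janiszewski_infty {F₁ F₂ C₁ C₂ : Set (OnePoint ℂ)} (h₁ : IsClosed F₁) (h₂ : IsClosed F₂)
    (hF : IsPreconnected (F₁ ∩ F₂)) (hC₁ : IsPreconnected C₁) (hC₂ : IsPreconnected C₂)
    (hd₁ : Disjoint C₁ F₁) (hd₂ : Disjoint C₂ F₂) {u : ℂ} (hu₁ : ↑u ∈ C₁) (hu₂ : ↑u ∈ C₂)
    (hi₁ : ∞ ∈ C₁) (hi₂ : ∞ ∈ C₂) :
    ∃ D, IsPreconnected D ∧ D ⊆ (F₁ ∪ F₂)ᶜ ∧ ↑u ∈ D ∧ ∞ ∈ D := by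
  have hO : IsOpen (F₁ ∪ F₂)ᶜ := (h₁.union h₂).isOpen_compl
  have hu : (u : OnePoint ℂ) ∈ (F₁ ∪ F₂)ᶜ := by
    rintro (h | h)
    · exact disjoint_left.1 hd₁ hu₁ h
    · exact disjoint_left.1 hd₂ hu₂ h
  refine ⟨connectedComponentIn (F₁ ∪ F₂)ᶜ u, isPreconnected_connectedComponentIn,
    connectedComponentIn_subset _ _, mem_connectedComponentIn hu, ?_⟩
  by_contra hi
  set D := connectedComponentIn (F₁ ∪ F₂)ᶜ (u : OnePoint ℂ) with hD
  have hDo : IsOpen D := hO.connectedComponentIn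
  have hfr : frontier D ⊆ F₁ ∪ F₂ := by
    have := frontier_comp_subset hO (u : OnePoint ℂ)
    rwa [compl_compl] at this
  have hicl : ∞ ∉ closure D := by
    intro h
    rcases hfr ⟨h, by rwa [hDo.interior_eq]⟩ with h | h
    · exact disjoint_left.1 hd₁ hi₁ h
    · exact disjoint_left.1 hd₂ hi₂ h
  have l₁ := hasLogOn_of_connected h₁ hC₁ hd₁ hu₁ hi₁
  have l₂ := hasLogOn_of_connected h₂ hC₂ hd₂ hu₂ hi₂
  have hpre := preimage_preconnected hF (fun h => disjoint_left.1 hd₁ hi₁ h.1)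
  obtain ⟨h, hc, he⟩ := hasLogOn_union (h₁.preimage continuous_coe) (h₂.preimage continuous_coe)
    hpre l₁ l₂
  have hsub : frontier ((↑) ⁻¹' D : Set ℂ) ⊆ (↑) ⁻¹' F₁ ∪ (↑) ⁻¹' F₂ := by
    rw [frontier_preimage_coe]
    exact preimage_mono hfr
  exact no_log_frontier (hDo.preimage continuous_coe) (bounded_preimage hicl)
    (show u ∈ ((↑) ⁻¹' D : Set ℂ) from mem_connectedComponentIn hu) (hc.mono hsub)
    (fun z hz => he z (hsub hz))

theorem janiszewski {F₁ F₂ C₁ C₂ : Set (OnePoint ℂ)} (h₁ : IsClosed F₁) (h₂ : IsClosed F₂)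
    (hF : IsPreconnected (F₁ ∩ F₂)) (hC₁ : IsPreconnected C₁) (hC₂ : IsPreconnected C₂)
    (hd₁ : Disjoint C₁ F₁) (hd₂ : Disjoint C₂ F₂) {u v : OnePoint ℂ} (hu₁ : u ∈ C₁) (hu₂ : u ∈ C₂)
    (hv₁ : v ∈ C₁) (hv₂ : v ∈ C₂) :
    ∃ D, IsPreconnected D ∧ D ⊆ (F₁ ∪ F₂)ᶜ ∧ u ∈ D ∧ v ∈ D := by
  by_cases huv : u = v
  · subst huv
    refine ⟨{u}, isPreconnected_singleton, ?_, rfl, rfl⟩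
    rintro _ rfl (h | h)
    · exact disjoint_left.1 hd₁ hu₁ h
    · exact disjoint_left.1 hd₂ hu₂ h
  obtain ⟨σ, hσ⟩ := exists_homeo_infty v
  have hne : σ u ≠ ∞ := by
    rw [← hσ]
    exact fun h => huv (σ.injective h)
  obtain ⟨w, hw⟩ := ne_infty_iff_exists.1 hne
  obtain ⟨D, hDp, hD, hDu, hDv⟩ := janiszewski_infty (F₁ := σ '' F₁) (F₂ := σ '' F₂)
    (C₁ := σ '' C₁) (C₂ := σ '' C₂) (u := w) (σ.isClosedMap _ h₁) (σ.isClosedMap _ h₂)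
    (by rw [← image_inter σ.injective]; exact hF.image _ σ.continuous.continuousOn)
    (hC₁.image _ σ.continuous.continuousOn) (hC₂.image _ σ.continuous.continuousOn)
    ((disjoint_image_iff σ.injective).2 hd₁) ((disjoint_image_iff σ.injective).2 hd₂)
    (by rw [hw]; exact mem_image_of_mem _ hu₁) (by rw [hw]; exact mem_image_of_mem _ hu₂)
    (by rw [← hσ]; exact mem_image_of_mem _ hv₁) (by rw [← hσ]; exact mem_image_of_mem _ hv₂)
  refine ⟨σ ⁻¹' D, ?_, ?_, ?_, ?_⟩
  · rw [← σ.image_symm]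
    exact hDp.image _ σ.symm.continuous.continuousOn
  · rw [← image_union] at hD
    intro z hz hzF
    exact hD hz (mem_image_of_mem _ hzF)
  · rw [mem_preimage, ← hw]; exact hDu
  · rw [mem_preimage, hσ]; exact hDv

theorem compl_sc_infty {U u v : Set (OnePoint ℂ)} (hU : IsOpen U) (hsc : IsSimplyConnected U)
    (hu : IsClosed u) (hv : IsClosed v) (hcov : Uᶜ ⊆ u ∪ v) (hd : Disjoint u v)
    (hiU : ∞ ∉ U) (hiu : ∞ ∈ u) {g : ℂ} (hgU : ↑g ∉ U) (hgv : ↑g ∈ v) : False := by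
  obtain ⟨a, b, ha, hb, hua, hvb, hab⟩ := normal_separation hu hv hd
  have hfr : frontier b ⊆ U := by
    intro x hx
    by_contra hxU
    rcases hcov hxU with h | h
    · exact disjoint_left.1 (hab.closure_right ha) (hua h) hx.1
    · exact hx.2 (by rw [hb.interior_eq]; exact hvb h)
  have hicl : ∞ ∉ closure b := fun h => disjoint_left.1 (hab.closure_right ha) (hua hiu) h
  have himg : ((↑) : ℂ → OnePoint ℂ) '' ((↑) ⁻¹' U) = U := by
    rw [image_preimage_eq_of_subset]
    intro z hz
    rw [← OnePoint.compl_infty]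
    rintro rfl
    exact hiU hz
  have hsc' : IsSimplyConnected ((↑) ⁻¹' U : Set ℂ) := by
    rw [← himg] at hsc
    exact (isOpenEmbedding_coe.toIsEmbedding.isSimplyConnected_image).1 hsc
  obtain ⟨f, hf, hfe⟩ := Complex.exists_continuousOn_eqOn_exp_comp hsc'
    (hU.preimage continuous_coe) (g := fun z => z - g) (by fun_prop) (by
      rintro ⟨z, hz, hz0⟩
      have : z = g := sub_eq_zero.1 hz0
      subst this
      exact hgU hz)
  have hsub : frontier ((↑) ⁻¹' b : Set ℂ) ⊆ (↑) ⁻¹' U := by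
    rw [frontier_preimage_coe]
    exact preimage_mono hfr
  exact no_log_frontier (hb.preimage continuous_coe) (bounded_preimage hicl)
    (show g ∈ ((↑) ⁻¹' b : Set ℂ) from hvb hgv) (hf.mono hsub) (fun z hz => hfe (hsub hz))

theorem compl_sc_preconnected {U : Set (OnePoint ℂ)} (hU : IsOpen U) (hsc : IsSimplyConnected U) :
    IsPreconnected Uᶜ := by
  rw [isPreconnected_iff_subset_of_fully_disjoint_closed hU.isClosed_compl]
  intro u v hu hv hcov hd
  by_contra! hcon
  obtain ⟨h1, h2⟩ := hcon
  obtain ⟨b, hbU, hb⟩ := not_subset.1 h1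
  obtain ⟨a, haU, ha⟩ := not_subset.1 h2
  have hau : a ∈ u := (hcov haU).resolve_right ha
  have hbv : b ∈ v := (hcov hbU).resolve_left hb
  obtain ⟨σ, hσ⟩ := exists_homeo_infty a
  have hne : σ b ≠ ∞ := by
    rw [← hσ]
    intro h
    exact hb (σ.injective h ▸ hau)
  obtain ⟨g, hg⟩ := ne_infty_iff_exists.1 hne
  refine compl_sc_infty (U := σ '' U) (u := σ '' u) (v := σ '' v) (g := g) (σ.isOpenMap _ hU)
    (σ.isEmbedding.isSimplyConnected_image.2 hsc) (σ.isClosedMap _ hu) (σ.isClosedMap _ hv) ?_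
    ((disjoint_image_iff σ.injective).2 hd) ?_ ?_ ?_ ?_
  · rw [← image_union, ← image_compl_eq σ.bijective]
    exact image_mono hcov
  · rw [← hσ, σ.injective.mem_set_image]; exact haU
  · rw [← hσ, σ.injective.mem_set_image]; exact hau
  · rw [hg, σ.injective.mem_set_image]; exact hbU
  · rw [hg, σ.injective.mem_set_image]; exact hbv

theorem frontier_sc_preconnected {U : Set (OnePoint ℂ)} (hU : IsOpen U)
    (hsc : IsSimplyConnected U) (hUc : IsConnected U) : IsPreconnected (frontier U) := by
  have hcompl := compl_sc_preconnected hU hsc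
  rw [isPreconnected_iff_subset_of_fully_disjoint_closed isClosed_frontier]
  intro a b ha hb hcov hd
  by_contra! hcon
  obtain ⟨h1, h2⟩ := hcon
  obtain ⟨y, hyF, hya⟩ := not_subset.1 h1
  obtain ⟨x, hxF, hxb⟩ := not_subset.1 h2
  have hxa : x ∈ a := (hcov hxF).resolve_right hxb
  have hyb : y ∈ b := (hcov hyF).resolve_left hya
  obtain ⟨u, hu⟩ := hUc.nonempty
  set F₁ := frontier U ∩ a with hF₁
  set F₂ := frontier U ∩ b with hF₂
  have hF : F₁ ∪ F₂ = frontier U := by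
    rw [hF₁, hF₂, ← inter_union_distrib_left, inter_eq_left]; exact hcov
  have hF12 : F₁ ∩ F₂ = ∅ := by
    ext z
    simp only [hF₁, hF₂, mem_inter_iff, mem_empty_iff_false, iff_false]
    exact fun h => disjoint_left.1 hd h.1.2 h.2.2
  have c₁ : IsClosed F₁ := isClosed_frontier.inter ha
  have c₂ : IsClosed F₂ := isClosed_frontier.inter hb
  have hUF : ∀ z ∈ U, z ∉ frontier U := fun z hz h => h.2 (by rwa [hU.interior_eq])
  -- components
  set D₁ := connectedComponentIn F₁ᶜ u with hD₁
  set D₂ := connectedComponentIn F₂ᶜ u with hD₂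
  have o₁ : IsOpen D₁ := c₁.isOpen_compl.connectedComponentIn
  have o₂ : IsOpen D₂ := c₂.isOpen_compl.connectedComponentIn
  have s₁ : U ∪ F₂ ⊆ D₁ := by
    refine IsPreconnected.subset_connectedComponentIn
      (hUc.isPreconnected.subset_closure subset_union_left ?_) (Or.inl hu) ?_
    · exact union_subset subset_closure (inter_subset_left.trans frontier_subset_closure)
    · rintro z (hz | hz) h
      · exact hUF z hz h.1
      · exact (hF12 ▸ (⟨h, hz⟩ : z ∈ F₁ ∩ F₂) : z ∈ (∅ : Set (OnePoint ℂ)))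
  have s₂ : U ∪ F₁ ⊆ D₂ := by
    refine IsPreconnected.subset_connectedComponentIn
      (hUc.isPreconnected.subset_closure subset_union_left ?_) (Or.inl hu) ?_
    · exact union_subset subset_closure (inter_subset_left.trans frontier_subset_closure)
    · rintro z (hz | hz) h
      · exact hUF z hz h.1
      · exact (hF12 ▸ (⟨hz, h⟩ : z ∈ F₁ ∩ F₂) : z ∈ (∅ : Set (OnePoint ℂ)))
  have hD₁F : D₁ ⊆ F₁ᶜ := connectedComponentIn_subset _ _
  have hD₂F : D₂ ⊆ F₂ᶜ := connectedComponentIn_subset _ _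
  have hx1 : x ∉ D₁ := fun h => hD₁F h ⟨hxF, hxa⟩
  have hy2 : y ∉ D₂ := fun h => hD₂F h ⟨hyF, hyb⟩
  have hxU : x ∈ Uᶜ := fun h => hUF x h hxF
  have hyU : y ∈ Uᶜ := fun h => hUF y h hyF
  have hcov2 : Uᶜ ⊆ D₁ᶜ ∪ D₂ᶜ := by
    intro v hv
    by_contra hcon
    simp only [mem_union, mem_compl_iff, not_or, not_not] at hcon
    obtain ⟨D, hDp, hDF, hDu, hDv⟩ := janiszewski c₁ c₂ (by rw [hF12]; exact isPreconnected_empty)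
      isPreconnected_connectedComponentIn isPreconnected_connectedComponentIn
      (disjoint_left.2 fun z hz => hD₁F hz) (disjoint_left.2 fun z hz => hD₂F hz)
      (s₁ (Or.inl hu)) (s₂ (Or.inl hu)) hcon.1 hcon.2
    rw [hF] at hDF
    refine hv (hDp.subset_of_closure_inter_subset hU ⟨u, hDu, hu⟩ ?_ hDv)
    rintro z ⟨hz1, hz2⟩
    by_contra hzU
    exact hDF hz2 ⟨hz1, by rwa [hU.interior_eq]⟩
  obtain ⟨z, hzU, hz1, hz2⟩ := isPreconnected_closed_iff.1 hcompl _ _ o₁.isClosed_compl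
    o₂.isClosed_compl hcov2 ⟨x, hxU, hx1⟩ ⟨y, hyU, hy2⟩
  have hfr₁ : frontier D₁ ⊆ F₁ := by
    have := frontier_comp_subset c₁.isOpen_compl u
    rwa [compl_compl] at this
  have hfr₂ : frontier D₂ ⊆ F₂ := by
    have := frontier_comp_subset c₂.isOpen_compl u
    rwa [compl_compl] at this
  have hcl : IsClopen (D₁ ∪ D₂) := by
    refine ⟨?_, o₁.union o₂⟩
    rw [← closure_subset_iff_isClosed, closure_union]
    rintro w (hw | hw)
    · by_cases h : w ∈ D₁
      · exact Or.inl h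
      · exact Or.inr (s₂ (Or.inr (hfr₁ ⟨hw, by rwa [o₁.interior_eq]⟩)))
    · by_cases h : w ∈ D₂
      · exact Or.inr h
      · exact Or.inl (s₁ (Or.inr (hfr₂ ⟨hw, by rwa [o₂.interior_eq]⟩)))
  have huniv := hcl.eq_univ ⟨u, Or.inl (s₁ (Or.inl hu))⟩
  rcases (huniv ▸ mem_univ z : z ∈ D₁ ∪ D₂) with h | h
  · exact hz1 h
  · exact hz2 h

theorem hstar_planar {U V : Set (OnePoint ℂ)} (hU : IsConnected U) (hV : IsConnected V)
    (hVo : IsOpen V) (hUV : Disjoint U V) (hUo : IsOpen U) (hfr : frontier V ⊆ frontier U)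
    {Y₁ Y₂ : Set (OnePoint ℂ)} (h₁ : IsClosed Y₁) (h₂ : IsClosed Y₂) (hY : Y₁ ∪ Y₂ = frontier V)
    (hpre : IsPreconnected (Y₁ ∩ Y₂)) : Y₁ = frontier V ∨ Y₂ = frontier V := by
  have key : ∀ Z : Set (OnePoint ℂ), Z ⊆ frontier V → Z ≠ frontier V →
      ∃ C, IsPreconnected C ∧ Disjoint C Z ∧ U ⊆ C ∧ V ⊆ C := by
    intro Z hZ hne
    obtain ⟨y, hy, hyZ⟩ := exists_of_ssubset (hZ.ssubset_of_ne hne)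
    have hU' : IsPreconnected (insert y U) := hU.isPreconnected.subset_closure
      (subset_insert _ _) (insert_subset (hfr hy).1 subset_closure)
    have hV' : IsPreconnected (insert y V) := hV.isPreconnected.subset_closure
      (subset_insert _ _) (insert_subset hy.1 subset_closure)
    refine ⟨insert y U ∪ insert y V, hU'.union y (mem_insert _ _) (mem_insert _ _) hV', ?_,
      (subset_insert _ _).trans subset_union_left, (subset_insert _ _).trans subset_union_right⟩
    rw [disjoint_left]
    rintro z ((rfl | hz) | (rfl | hz)) hzZ
    · exact hyZ hzZ
    · exact (hfr (hZ hzZ)).2 (by rwa [hUo.interior_eq])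
    · exact hyZ hzZ
    · exact (hZ hzZ).2 (by rwa [hVo.interior_eq])
  by_contra! hcon
  obtain ⟨C₁, p₁, d₁, u₁, v₁⟩ := key Y₁ (hY ▸ subset_union_left) hcon.1
  obtain ⟨C₂, p₂, d₂, u₂, v₂⟩ := key Y₂ (hY ▸ subset_union_right) hcon.2
  obtain ⟨u, hu⟩ := hU.nonempty
  obtain ⟨v, hv⟩ := hV.nonempty
  obtain ⟨D, hDp, hDF, hDu, hDv⟩ := janiszewski h₁ h₂ hpre p₁ p₂ d₁ d₂ (u₁ hu) (u₂ hu)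
    (v₁ hv) (v₂ hv)
  rw [hY] at hDF
  refine disjoint_left.1 hUV hu (hDp.subset_of_closure_inter_subset hVo ⟨v, hDv, hv⟩ ?_ hDu)
  rintro z ⟨hz1, hz2⟩
  by_contra hzV
  exact hDF hz2 ⟨hz1, by rwa [hVo.interior_eq]⟩

end Sphere


/-- Let `U ⊆ ℂ∞` be a simply connected open set whose boundary
`X = ∂U` has at least two points, and let `V ≠ U` be a connected component of `ℂ∞ \ X`
such that `∂V` has nonempty interior relative to `X`.  Assume that `X` is irreducible
about some finite subset of `X`, and that `∂V` is not monostratic.  Then `∂V` contains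
an indecomposable subcontinuum with nonempty interior relative to `X`. -/
theorem stmt_3 (U V : Set RiemannSphere) (hUopen : IsOpen U)
    (hUsc : SimplyConnectedSpace U) (hbd : (frontier U).Nontrivial)
    (hV : ∃ x ∈ (frontier U)ᶜ, V = connectedComponentIn (frontier U)ᶜ x)
    (hVU : V ≠ U)
    (hint : (relInterior (frontier U) (frontier V)).Nonempty)
    (hirr : ∃ A : Set RiemannSphere, A.Finite ∧ A ⊆ frontier U ∧
      ∀ K : Set RiemannSphere, IsSubcontinuum K → K ⊆ frontier U → A ⊆ K →
        K = frontier U)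
    (hnotmono : ¬ IsMonostratic (frontier V)) :
    ∃ K : Set RiemannSphere, K ⊆ frontier V ∧ IsSubcontinuum K ∧
      IsIndecomposableSet K ∧ (relInterior (frontier U) K).Nonempty := by
  obtain ⟨x, hx, hVx⟩ := hV
  obtain ⟨A, hA, hAX, hirr⟩ := hirr
  have hUc : IsConnected U := by
    have : ConnectedSpace U := inferInstance
    exact isConnected_iff_connectedSpace.2 this
  have hXpre := frontier_sc_preconnected hUopen hUsc hUc
  have hX : IsSubcontinuum (frontier U) :=
    ⟨isClosed_frontier.isCompact, hbd.nonempty, hXpre⟩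
  have hO : IsOpen (frontier U)ᶜ := isClosed_frontier.isOpen_compl
  have hVo : IsOpen V := hVx ▸ hO.connectedComponentIn
  have hVc : IsConnected V := by
    rw [hVx]; exact isConnected_connectedComponentIn_iff.2 hx
  have hVsub : V ⊆ (frontier U)ᶜ := hVx ▸ connectedComponentIn_subset _ _
  have hUsub : U ⊆ (frontier U)ᶜ := fun z hz h => h.2 (by rwa [hUopen.interior_eq])
  have hfr : frontier V ⊆ frontier U := by
    have := frontier_comp_subset hO x
    rwa [compl_compl, ← hVx] at this
  have hdisj : Disjoint U V := by
    rw [disjoint_left]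
    intro z hzU hzV
    apply hVU
    have hVz : V = connectedComponentIn (frontier U)ᶜ z := by
      rw [hVx] at hzV
      rw [hVx, connectedComponentIn_eq hzV]
    apply Subset.antisymm
    · refine hVc.isPreconnected.subset_of_closure_inter_subset hUopen ⟨z, hzV, hzU⟩ ?_
      rintro w ⟨hw1, hw2⟩
      by_contra hwU
      exact hVsub hw2 ⟨hw1, by rwa [hUopen.interior_eq]⟩
    · rw [hVz]
      exact hUc.isPreconnected.subset_connectedComponentIn hzU hUsub
  have hstar : ∀ Y₁ Y₂ : Set RiemannSphere, IsClosed Y₁ → IsClosed Y₂ → Y₁ ∪ Y₂ = frontier V →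
      IsPreconnected (Y₁ ∩ Y₂) → Y₁ = frontier V ∨ Y₂ = frontier V :=
    fun Y₁ Y₂ h₁ h₂ h h' => hstar_planar hUc hVc hVo hdisj hUopen hfr h₁ h₂ h h'
  obtain ⟨p, hp⟩ := hint
  obtain ⟨t, ht, hto, hpt⟩ := mem_interior.1 hp
  obtain ⟨G₀, hG₀, rfl⟩ := isOpen_induced_iff.1 hto
  have hG₀Y : G₀ ∩ frontier U ⊆ frontier V := fun z hz => ht (show (⟨z, hz.2⟩ : frontier U) ∈ _ from hz.1)
  have hYne : (frontier V).Nonempty := ⟨p, hG₀Y ⟨hpt, p.2⟩⟩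
  have hY : IsSubcontinuum (frontier V) := by
    refine ⟨isClosed_frontier.isCompact, hYne, ?_⟩
    rw [isPreconnected_iff_subset_of_fully_disjoint_closed isClosed_frontier]
    intro a b ha hb hcov hd
    rcases hstar (frontier V ∩ a) (frontier V ∩ b) (isClosed_frontier.inter ha)
      (isClosed_frontier.inter hb)
      (by rw [← inter_union_distrib_left, inter_eq_left]; exact hcov)
      (by
        have : frontier V ∩ a ∩ (frontier V ∩ b) = ∅ := by
          ext z
          simp only [mem_inter_iff, mem_empty_iff_false, iff_false]
          exact fun h => disjoint_left.1 hd h.1.2 h.2.2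
        rw [this]; exact isPreconnected_empty) with h | h
    · exact Or.inl (inter_eq_left.1 h)
    · exact Or.inr (inter_eq_left.1 h)
  obtain ⟨K, hKY, hKc, hKi, G, hG, ⟨q, hqG, hqX⟩, hGK⟩ := continuum_main hX hbd hY hfr hG₀
    ⟨p, hpt, p.2⟩ hG₀Y hA hAX hirr hstar
  refine ⟨K, hKY, hKc, hKi, ⟨q, hqX⟩, ?_⟩
  exact mem_interior.2 ⟨Subtype.val ⁻¹' G, fun z hz => hGK ⟨hz, z.2⟩, hG.preimage continuous_subtype_val, hqG⟩
end

section
/- Let ℂ∞ denote the Riemann sphere (OnePoint ℂ). Let U ⊆ ℂ∞ be a simply connected open set whose boundary X = ∂U contains at least two points, and let V ≠ U be a connected component of ℂ∞ ∖ X such that ∂V has nonempty interior relative to X. If X is irreducible about some finite subset of X, then ∂V contains an indecomposable subcontinuum with nonempty interior relative to X. -/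
open Set Topology

theorem preconn_sInter_chain {T : Type*} [TopologicalSpace T] [CompactSpace T] [T2Space T]
    (c : Set (Set T)) (hc : IsChain (· ⊆ ·) c) (hne : c.Nonempty)
    (hcl : ∀ s ∈ c, IsClosed s) (hcon : ∀ s ∈ c, IsPreconnected s) :
    IsPreconnected (⋂₀ c) := by
  have hIcl : IsClosed (⋂₀ c) := isClosed_sInter hcl
  rw [isPreconnected_iff_subset_of_fully_disjoint_closed hIcl]
  intro u v hu hv hI huv
  obtain ⟨U', V', hU', hV', huU, hvV, hd⟩ := normal_separation hu hv huv
  have : Nonempty c := hne.to_subtype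
  have hdir : Directed (· ⊇ ·) (fun s : c => (s : Set T)) := by
    intro a b
    rcases hc.total a.2 b.2 with h | h
    · exact ⟨a, le_rfl, h⟩
    · exact ⟨b, h, le_rfl⟩
  obtain ⟨⟨C, hC⟩, hCs⟩ := exists_subset_nhds_of_isCompact' hdir
    (fun s => (hcl s s.2).isCompact) (fun s => hcl s s.2) (U := U' ∪ V') (by
      intro x hx
      rw [← sInter_eq_iInter] at hx
      apply (hU'.union hV').mem_nhds
      rcases hI hx with h | h
      · exact Or.inl (huU h)
      · exact Or.inr (hvV h))
  have hCs' : C ⊆ U' ∪ V' := hCs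
  have hIC : ⋂₀ c ⊆ C := sInter_subset_of_mem hC
  rcases (isPreconnected_iff_subset_of_disjoint.1 (hcon C hC)) U' V' hU' hV' hCs'
    (by rw [hd.inter_eq, inter_empty]) with h | h
  · left
    intro x hx
    rcases hI hx with h' | h'
    · exact h'
    · exact absurd (hvV h') (disjoint_left.1 hd (h (hIC hx)))
  · right
    intro x hx
    rcases hI hx with h' | h'
    · exact absurd (h (hIC hx)) (disjoint_left.1 hd (huU h'))
    · exact h'

theorem exists_min_cont {T : Type*} [TopologicalSpace T] [CompactSpace T] [T2Space T]
    (O K : Set T) (hOK : O ⊆ K) (hK : IsClosed K) (hKc : IsPreconnected K) :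
    ∃ M ⊆ K, O ⊆ M ∧ IsClosed M ∧ IsPreconnected M ∧
      ∀ N ⊆ M, O ⊆ N → IsClosed N → IsPreconnected N → N = M := by
  obtain ⟨M, hMK, hM⟩ := zorn_superset_nonempty
    {M : Set T | O ⊆ M ∧ IsClosed M ∧ IsPreconnected M} (by
      intro c hc hch hne
      refine ⟨⋂₀ c, ⟨subset_sInter fun s hs => (hc hs).1, isClosed_sInter fun s hs => (hc hs).2.1,
        preconn_sInter_chain c hch hne (fun s hs => (hc hs).2.1) (fun s hs => (hc hs).2.2)⟩,
        fun s hs => sInter_subset_of_mem hs⟩) K ⟨hOK, hK, hKc⟩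
  refine ⟨M, hMK, hM.prop.1, hM.prop.2.1, hM.prop.2.2, ?_⟩
  intro N hNM hON hN hNc
  exact subset_antisymm hNM (hM.le_of_le ⟨hON, hN, hNc⟩ hNM)

/-- If `T` is connected, `K` connected closed, `Kᶜ = S ⊔ R` open disjoint then `Sᶜ` connected. -/
theorem compl_conn {T : Type*} [TopologicalSpace T] [PreconnectedSpace T]
    (K S R : Set T) (hKc : IsConnected K) (hS : IsOpen S) (hR : IsOpen R)
    (hSR : Disjoint S R) (hU : S ∪ R = Kᶜ) (hKcl : IsClosed K) : IsPreconnected (Sᶜ) := by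
  have hSc : IsClosed Sᶜ := hS.isClosed_compl
  have key : ∀ u v : Set T, IsClosed u → IsClosed v → Sᶜ ⊆ u ∪ v → Disjoint u v → K ⊆ u →
      Sᶜ ⊆ u := by
    intro u v hu hv hs huv hK
    have hKS : K ⊆ Sᶜ := by
      intro x hx hxS
      have : x ∈ Kᶜ := hU ▸ Or.inl hxS
      exact this hx
    -- v ∩ Sᶜ is clopen
    have hcl : IsClopen (v ∩ Sᶜ) := by
      refine ⟨hv.inter hSc, ?_⟩
      have : v ∩ Sᶜ = R ∩ uᶜ := by
        ext x
        constructor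
        · rintro ⟨hxv, hxS⟩
          have hxu : x ∉ u := fun h => disjoint_left.1 huv h hxv
          have : x ∈ S ∪ R := hU ▸ fun h => hxu (hK h)
          rcases this with h | h
          · exact absurd h hxS
          · exact ⟨h, hxu⟩
        · rintro ⟨hxR, hxu⟩
          have hxS : x ∈ Sᶜ := fun h => disjoint_left.1 hSR h hxR
          rcases hs hxS with h | h
          · exact absurd h hxu
          · exact ⟨h, hxS⟩
      rw [this]
      exact hR.inter hu.isOpen_compl
    rcases isClopen_iff.1 hcl with h | h
    · intro x hx
      rcases hs hx with h' | h'
      · exact h'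
      · exact absurd (show x ∈ v ∩ Sᶜ from ⟨h', hx⟩) (by rw [h]; simp)
    · obtain ⟨x, hx⟩ := hKc.1
      have hxv : x ∈ v ∩ Sᶜ := h ▸ mem_univ x
      exact absurd hxv.1 (disjoint_left.1 huv (hK hx))
  rw [isPreconnected_iff_subset_of_fully_disjoint_closed hSc]
  intro u v hu hv hs huv
  have hKS : K ⊆ Sᶜ := by
    intro x hx hxS
    have : x ∈ Kᶜ := hU ▸ Or.inl hxS
    exact this hx
  rcases (isPreconnected_iff_subset_of_fully_disjoint_closed hKcl).1 hKc.2 u v hu hv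
    (hKS.trans hs) huv with h | h
  · exact Or.inl (key u v hu hv hs huv h)
  · exact Or.inr (key v u hv hu (by rwa [union_comm]) huv.symm h)

/-- The good side of a subcontinuum. -/
theorem exists_side {T : Type*} [TopologicalSpace T] [PreconnectedSpace T]
    (A Y : Set T) (hA : A.Finite)
    (hirr : ∀ K : Set T, IsClosed K → IsPreconnected K → A ⊆ K → K = univ)
    (hJ : ∀ M S R : Set T, IsClosed M → IsConnected M → IsOpen S → IsOpen R → Disjoint S R →
      S ∪ R = Mᶜ → Y ∩ S = ∅ ∨ Y ∩ R = ∅)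
    (K : Set T) (hKcl : IsClosed K) (hKc : IsConnected K) :
    ∃ S : Set T, IsOpen S ∧ IsPreconnected S ∧ Y \ K ⊆ S ∧ Disjoint S K ∧ IsPreconnected Sᶜ := by
  classical
  let Q : Set T → Prop := fun S => IsOpen S ∧ Y \ K ⊆ S ∧
    ∃ R, IsOpen R ∧ Disjoint S R ∧ S ∪ R = Kᶜ
  have hQ : ∃ S, Q S := ⟨Kᶜ, hKcl.isOpen_compl, fun x hx => hx.2, ∅, isOpen_empty,
    disjoint_empty _, union_empty _⟩
  let m : {S // Q S} → ℕ := fun S => (A ∩ S.1).ncard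
  have : Nonempty {S // Q S} := hQ.elim fun S h => ⟨⟨S, h⟩⟩
  obtain ⟨⟨S, hSo, hYS, R, hRo, hSR, hU⟩, hmin⟩ : ∃ S, ∀ S', m S ≤ m S' :=
    ⟨Function.argmin m, fun S' => Function.argmin_le m S'⟩
  have hmin' : ∀ S', Q S' → (A ∩ S).ncard ≤ (A ∩ S').ncard := fun S' h => hmin ⟨S', h⟩
  have hSK : Disjoint S K := by
    rw [disjoint_left]
    intro x hx
    have : x ∈ Kᶜ := hU ▸ Or.inl hx
    exact this
  refine ⟨S, hSo, ?_, hYS, hSK, compl_conn K S R hKc hSo hRo hSR hU hKcl⟩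
  rw [isPreconnected_iff_subset_of_disjoint]
  intro u v hu hv hs huv
  by_contra hcon
  push Not at hcon
  obtain ⟨h1, h2⟩ := hcon
  -- each open part of S that is proper is met by A
  have key : ∀ u v : Set T, IsOpen u → IsOpen v → S ⊆ u ∪ v → S ∩ (u ∩ v) = ∅ →
      ¬ S ⊆ u → Y ∩ (S ∩ v) = ∅ → False := by
    intro u v hu hv hs huv h1 hY
    have e1 : Disjoint (S ∩ u) (S ∩ v ∪ R) := by
      rw [disjoint_left]
      rintro x ⟨hxS, hxu⟩ (⟨_, hxv⟩ | hxR)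
      · have : x ∈ S ∩ (u ∩ v) := ⟨hxS, hxu, hxv⟩
        rw [huv] at this; exact this
      · exact disjoint_left.1 hSR hxS hxR
    have e2 : S ∩ u ∪ (S ∩ v ∪ R) = Kᶜ := by
      rw [← hU, ← union_assoc, ← inter_union_distrib_left, inter_eq_left.2 hs]
    have e3 : Disjoint (S ∩ v) (S ∩ u ∪ R) := by
      rw [disjoint_left]
      rintro x ⟨hxS, hxv⟩ (⟨_, hxu⟩ | hxR)
      · have : x ∈ S ∩ (u ∩ v) := ⟨hxS, hxu, hxv⟩
        rw [huv] at this; exact this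
      · exact disjoint_left.1 hSR hxS hxR
    have e4 : S ∩ v ∪ (S ∩ u ∪ R) = Kᶜ := by
      rw [← e2, ← union_assoc, ← union_assoc, union_comm (S ∩ v)]
    have hq : Q (S ∩ u) := by
      refine ⟨hSo.inter hu, ?_, S ∩ v ∪ R, (hSo.inter hv).union hRo, e1, e2⟩
      intro x hx
      have hxS := hYS hx
      rcases hs hxS with h | h
      · exact ⟨hxS, h⟩
      · exact absurd (show x ∈ Y ∩ (S ∩ v) from ⟨hx.1, hxS, h⟩) (by rw [hY]; simp)
    have hle := hmin' _ hq
    have heq : A ∩ (S ∩ u) = A ∩ S :=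
      eq_of_subset_of_ncard_le (by gcongr; exact inter_subset_left) hle
        (hA.subset inter_subset_left)
    have hAsub : A ⊆ (S ∩ v)ᶜ := by
      rintro x hx ⟨hxS, hxv⟩
      have h3 : x ∈ A ∩ (S ∩ u) := heq ▸ ⟨hx, hxS⟩
      have : x ∈ S ∩ (u ∩ v) := ⟨hxS, h3.2.2, hxv⟩
      rw [huv] at this; exact this
    have h4 := hirr _ (hSo.inter hv).isClosed_compl
      (compl_conn K _ _ hKc (hSo.inter hv) ((hSo.inter hu).union hRo) e3 e4 hKcl) hAsub
    apply h1
    intro x hx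
    rcases hs hx with h | h
    · exact h
    · have : x ∈ (S ∩ v)ᶜ := h4 ▸ mem_univ x
      exact absurd ⟨hx, h⟩ this
  have e1 : Disjoint (S ∩ u) (S ∩ v ∪ R) := by
    rw [disjoint_left]
    rintro x ⟨hxS, hxu⟩ (⟨_, hxv⟩ | hxR)
    · have : x ∈ S ∩ (u ∩ v) := ⟨hxS, hxu, hxv⟩
      rw [huv] at this; exact this
    · exact disjoint_left.1 hSR hxS hxR
  have e2 : S ∩ u ∪ (S ∩ v ∪ R) = Kᶜ := by
    rw [← hU, ← union_assoc, ← inter_union_distrib_left, inter_eq_left.2 hs]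
  rcases hJ K _ _ hKcl hKc (hSo.inter hu) ((hSo.inter hv).union hRo) e1 e2 with h | h
  · exact key v u hv hu (by rwa [union_comm]) (by rwa [inter_comm v]) h2 h
  · refine key u v hu hv hs huv h1 ?_
    rw [inter_union_distrib_left, union_empty_iff] at h
    exact h.1

theorem abstract_main {T : Type*} [TopologicalSpace T] [CompactSpace T] [T2Space T]
    [PreconnectedSpace T]
    (A Y : Set T) (hA : A.Finite) (hYcl : IsClosed Y) (hYc : IsPreconnected Y)
    (hYi : (interior Y).Nonempty)
    (hirr : ∀ K : Set T, IsClosed K → IsPreconnected K → A ⊆ K → K = univ)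
    (hJ : ∀ M S R : Set T, IsClosed M → IsConnected M → IsOpen S → IsOpen R → Disjoint S R →
      S ∪ R = Mᶜ → Y ∩ S = ∅ ∨ Y ∩ R = ∅) :
    ∃ K ⊆ Y, IsClosed K ∧ IsConnected K ∧ (interior K).Nonempty ∧
      ∀ M N : Set T, IsClosed M → IsConnected M → IsClosed N → IsConnected N →
        M ∪ N = K → M = K ∨ N = K := by
  by_contra hno
  push Not at hno
  let P := {p : Set T × Set T // IsOpen p.1 ∧ p.1.Nonempty ∧ p.1 ⊆ p.2 ∧ IsClosed p.2 ∧
    IsPreconnected p.2 ∧ p.2 ⊆ Y}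
  have split : ∀ p : P, ∃ l r : P, l.1.1 ⊆ p.1.1 ∧ r.1.1 ⊆ p.1.1 ∧ l.1.2 ⊆ p.1.2 ∧ r.1.2 ⊆ p.1.2 ∧
      Disjoint l.1.1 r.1.2 ∧ Disjoint r.1.1 l.1.2 := by
    rintro ⟨⟨O, K⟩, hO, hOne, hOK, hK, hKc, hKY⟩
    simp only at hO hOne hOK hK hKc hKY ⊢
    obtain ⟨K', hK'K, hOK', hK', hK'c, hmin⟩ := exists_min_cont O K hOK hK hKc
    obtain ⟨M, N, hM, hMc, hN, hNc, hMN, hne1, hne2⟩ := hno K' (hK'K.trans hKY) hK'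
      ⟨hOne.mono hOK', hK'c⟩ (hOne.mono (interior_maximal hOK' hO))
    have hMK : M ⊆ K' := hMN ▸ subset_union_left
    have hNK : N ⊆ K' := hMN ▸ subset_union_right
    have hM1 : (O \ M).Nonempty := by
      rw [sdiff_nonempty]
      exact fun h => hne1 (hmin M hMK h hM hMc.2)
    have hN1 : (O \ N).Nonempty := by
      rw [sdiff_nonempty]
      exact fun h => hne2 (hmin N hNK h hN hNc.2)
    refine ⟨⟨⟨O \ M, N⟩, hO.sdiff hM, hM1, ?_, hN, hNc.2, (hNK.trans hK'K).trans hKY⟩,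
      ⟨⟨O \ N, M⟩, hO.sdiff hN, hN1, ?_, hM, hMc.2, (hMK.trans hK'K).trans hKY⟩,
      sdiff_subset, sdiff_subset, hNK.trans hK'K, hMK.trans hK'K,
      disjoint_sdiff_left, disjoint_sdiff_left⟩
    · rintro x ⟨hx, hxM⟩
      rcases (hMN ▸ hOK' hx : x ∈ M ∪ N) with h | h
      · exact absurd h hxM
      · exact h
    · rintro x ⟨hx, hxN⟩
      rcases (hMN ▸ hOK' hx : x ∈ M ∪ N) with h | h
      · exact h
      · exact absurd h hxN
  choose l r hl1 hr1 hl2 hr2 hlr hrl using split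
  let p0 : P := ⟨⟨interior Y, Y⟩, isOpen_interior, hYi, interior_subset, hYcl, hYc, subset_rfl⟩
  let q : ℕ → P := fun n => r^[n] p0
  have hq : ∀ n, q (n + 1) = r (q n) := fun n => Function.iterate_succ_apply' r n p0
  have hq1 : Antitone (fun n => (q n).1.1) := antitone_nat_of_succ_le fun n => by
    rw [hq]; exact hr1 _
  have hq2 : Antitone (fun n => (q n).1.2) := antitone_nat_of_succ_le fun n => by
    rw [hq]; exact hr2 _
  have d1 : ∀ i j, i < j → Disjoint (l (q i)).1.1 (l (q j)).1.2 := by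
    intro i j hij
    refine (hlr (q i)).mono_right ((hl2 _).trans ?_)
    rw [← hq]; exact hq2 hij
  have d2 : ∀ i j, i < j → Disjoint (l (q j)).1.1 (l (q i)).1.2 := by
    intro i j hij
    refine (hrl (q i)).mono_left ((hl1 _).trans ?_)
    rw [← hq]; exact hq1 hij
  have hd : ∀ i j, i ≠ j → Disjoint (l (q i)).1.1 (l (q j)).1.2 := by
    intro i j hij
    rcases lt_or_gt_of_ne hij with h | h
    · exact d1 i j h
    · exact d2 j i h
  have hside := fun i => exists_side A Y hA hirr hJ (l (q i)).1.2 (l (q i)).2.2.2.2.1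
    ⟨(l (q i)).2.2.1.mono (l (q i)).2.2.2.1, (l (q i)).2.2.2.2.2.1⟩
  choose S hSo hSc hYS hSK hScc using hside
  have hfin : Finite (𝒫 A) := hA.finite_subsets
  obtain ⟨i, j, hij, he⟩ := Finite.exists_ne_map_eq_of_infinite
    (fun i => (⟨A \ closure (S i), sdiff_subset⟩ : 𝒫 A))
  have he' : A \ closure (S i) = A \ closure (S j) := congrArg Subtype.val he
  have hsub : ∀ i j, i ≠ j → (l (q i)).1.1 ⊆ S j := by
    intro i j hij x hx
    exact hYS j ⟨(l (q i)).2.2.2.2.2.2 ((l (q i)).2.2.2.1 hx), disjoint_left.1 (hd i j hij) hx⟩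
  have hsub' : ∀ i, (l (q i)).1.1 ⊆ (S i)ᶜ := fun i x hx hxS =>
    disjoint_left.1 (hSK i) hxS ((l (q i)).2.2.2.1 hx)
  obtain ⟨x, hx⟩ := (l (q i)).2.2.1
  obtain ⟨y, hy⟩ := (l (q j)).2.2.1
  have huniv := hirr ((S i)ᶜ ∪ closure (S j)) ((hSo i).isClosed_compl.union isClosed_closure)
    ((hScc i).union x (hsub' i hx) (subset_closure (hsub i j hij hx)) (hSc j).closure) (by
      intro a ha
      by_cases h : a ∈ closure (S j)
      · exact Or.inr h
      · left
        have : a ∈ A \ closure (S i) := he' ▸ ⟨ha, h⟩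
        exact fun h' => this.2 (subset_closure h'))
  rcases (huniv ▸ mem_univ y : y ∈ (S i)ᶜ ∪ closure (S j)) with h | h
  · exact h (hsub j i hij.symm hy)
  · obtain ⟨z, hz1, hz2⟩ := mem_closure_iff.1 h _ (l (q j)).2.1 hy
    exact hsub' j hz1 hz2

theorem exp_const {S : Type*} [TopologicalSpace S] {s : Set S} (hs : IsPreconnected s) {f : S → ℂ}
    (hf : ContinuousOn f s) (c : ℂ) (he : ∀ a ∈ s, Complex.exp (f a) = c) {a b : S}
    (ha : a ∈ s) (hb : b ∈ s) : f a = f b :=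
  Complex.isCoveringMap_exp.constOn_of_comp hs hf
    (fun x hx y hy => Subtype.ext ((he x hx).trans (he y hy).symm)) ha hb

theorem exists_log {S : Type*} [TopologicalSpace S] [SimplyConnectedSpace S]
    [LocallyPathConnectedSpace S] (f : C(S, ℂ)) (hf : ∀ x, f x ≠ 0) :
    ∃ g : C(S, ℂ), ∀ x, Complex.exp (g x) = f x := by
  obtain ⟨a⟩ : Nonempty S := inferInstance
  obtain ⟨g, ⟨-, hg⟩, -⟩ := Complex.isCoveringMapOn_exp.existsUnique_continuousMap_lifts f
    (a₀ := a) (e₀ := Complex.log (f a)) (Complex.exp_log (hf a)) (fun x => hf x)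
  exact ⟨g, fun x => congrFun hg x⟩

theorem no_ext (F : ℂ → ℂ) (hF : Continuous F) (hF0 : ∀ z, F z ≠ 0) (p : ℂ) (R : ℝ) (hR : 0 < R)
    (h : ∀ z, R ≤ ‖z - p‖ → F z = z - p) : False := by
  obtain ⟨g, hg⟩ := exists_log ⟨F, hF⟩ hF0
  have hg' : ∀ x, Complex.exp (g x) = F x := hg
  have := exp_const (s := (univ : Set ℝ)) isPreconnected_univ
    (f := fun t : ℝ => g (p + R * Complex.exp (t * Complex.I)) - t * Complex.I)
    (by fun_prop) R (by
      intro t _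
      simp only [Complex.exp_sub, hg']
      rw [h]
      · field_simp
        ring
      · simp [Complex.norm_exp_ofReal_mul_I, abs_of_pos hR])
    (mem_univ 0) (mem_univ (2 * Real.pi))
  have h2 : (2 * Real.pi * Complex.I : ℂ) = 0 := by
    simp [Complex.exp_two_pi_mul_I] at this
    linear_combination this
  exact Complex.two_pi_I_ne_zero h2

def HasLog (E : Set ℂ) (p : ℂ) : Prop :=
  ∃ φ : ℂ → ℂ, ContinuousOn φ E ∧ ∀ z ∈ E, Complex.exp (φ z) = z - p

def NonSep {S : Type*} [TopologicalSpace S] (E : Set S) (p q : S) : Prop :=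
  ∃ C : Set S, IsPreconnected C ∧ p ∈ C ∧ q ∈ C ∧ Disjoint C E

theorem HasLog.glue {E₁ E₂ : Set ℂ} {p : ℂ} (h₁ : HasLog E₁ p) (h₂ : HasLog E₂ p)
    (hE₁ : IsClosed E₁) (hE₂ : IsClosed E₂) (hc : IsPreconnected (E₁ ∩ E₂)) (hp : p ∉ E₁ ∪ E₂) :
    HasLog (E₁ ∪ E₂) p := by
  classical
  obtain ⟨φ, hφ, hφe⟩ := h₁
  obtain ⟨ψ, hψ, hψe⟩ := h₂
  obtain ⟨c, hc1, hc2⟩ : ∃ c, Complex.exp c = 1 ∧ ∀ z ∈ E₁ ∩ E₂, φ z = ψ z + c := by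
    rcases (E₁ ∩ E₂).eq_empty_or_nonempty with h | ⟨x, hx⟩
    · exact ⟨0, by simp, by simp [h]⟩
    · have h1 : ∀ z ∈ E₁ ∩ E₂, Complex.exp (φ z - ψ z) = 1 := by
        intro z hz
        rw [Complex.exp_sub, hφe z hz.1, hψe z hz.2, div_self]
        exact sub_ne_zero.2 fun h => hp (h ▸ Or.inl hz.1)
      refine ⟨φ x - ψ x, h1 x hx, fun z hz => ?_⟩
      have := exp_const hc (f := fun z => φ z - ψ z)
        ((hφ.mono inter_subset_left).sub (hψ.mono inter_subset_right)) 1 h1 hz hx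
      linear_combination this
  refine ⟨fun z => if z ∈ E₁ then φ z else ψ z + c, ?_, ?_⟩
  · apply ContinuousOn.union_of_isClosed _ _ hE₁ hE₂
    · exact hφ.congr fun z hz => by simp [hz]
    · refine (hψ.add (continuousOn_const (c := c))).congr fun z hz => ?_
      by_cases h : z ∈ E₁
      · simp [h, hc2 z ⟨h, hz⟩]
      · simp [h]
  · rintro z hz
    by_cases h : z ∈ E₁
    · simp [h, hφe z h]
    · simp only [h, if_false, Complex.exp_add, hc1, mul_one]
      exact hψe z (hz.resolve_left h)

theorem frontier_comp {S : Type*} [TopologicalSpace S] [LocallyConnectedSpace S] {F : Set S}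
    (hF : IsOpen F) (x : S) : frontier (connectedComponentIn F x) ⊆ Fᶜ := by
  intro y hy hyF
  have hop : IsOpen (connectedComponentIn F x) := hF.connectedComponentIn
  rw [hop.frontier_eq] at hy
  obtain ⟨z, hz⟩ : (connectedComponentIn F x).Nonempty := closure_nonempty_iff.1 ⟨y, hy.1⟩
  have hx : x ∈ F := connectedComponentIn_nonempty_iff.1 ⟨z, hz⟩
  have hpre : IsPreconnected (insert y (connectedComponentIn F x)) :=
    isPreconnected_connectedComponentIn.subset_closure (subset_insert _ _)
      (insert_subset hy.1 subset_closure)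
  exact hy.2 (hpre.subset_connectedComponentIn (mem_insert_of_mem _ (mem_connectedComponentIn hx))
    (insert_subset hyF (connectedComponentIn_subset _ _)) (mem_insert _ _))

theorem isCompact_pre {E : Set (OnePoint ℂ)} (hE : IsClosed E) (hi : OnePoint.infty ∉ E) :
    IsCompact ((↑) ⁻¹' E : Set ℂ) := by
  have := ((OnePoint.isOpen_iff_of_mem (s := Eᶜ) hi).1 hE.isOpen_compl).2
  simpa using this

theorem HasLog.nonSep {E : Set (OnePoint ℂ)} (hE : IsClosed E) (hi : OnePoint.infty ∉ E)
    {p : ℂ} (hp : (p : OnePoint ℂ) ∉ E) (hl : HasLog ((↑) ⁻¹' E) p) :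
    NonSep E (p : OnePoint ℂ) OnePoint.infty := by
  classical
  set E0 : Set ℂ := (↑) ⁻¹' E with hE0
  have hE0c : IsCompact E0 := isCompact_pre hE hi
  have hpE : p ∈ E0ᶜ := hp
  set Ω := connectedComponentIn E0ᶜ p with hΩ
  have hΩo : IsOpen Ω := hE0c.isClosed.isOpen_compl.connectedComponentIn
  have hpΩ : p ∈ Ω := mem_connectedComponentIn hpE
  have hΩE : Ω ⊆ E0ᶜ := connectedComponentIn_subset _ _
  by_cases hinf : (OnePoint.infty : OnePoint ℂ) ∈ closure ((↑) '' Ω : Set (OnePoint ℂ))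
  · refine ⟨insert OnePoint.infty ((↑) '' Ω), ?_, ?_, mem_insert _ _, ?_⟩
    · exact (isPreconnected_connectedComponentIn.image _
        OnePoint.continuous_coe.continuousOn).subset_closure (subset_insert _ _)
        (insert_subset hinf subset_closure)
    · exact mem_insert_of_mem _ ⟨p, hpΩ, rfl⟩
    · rw [disjoint_left]
      rintro x (rfl | ⟨z, hz, rfl⟩)
      · exact hi
      · exact hΩE hz
  · exfalso
    have hcomp := isCompact_pre isClosed_closure hinf
    have hb : Bornology.IsBounded Ω := hcomp.isBounded.subset fun z hz =>
      subset_closure (mem_image_of_mem _ hz)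
    obtain ⟨R, hR, hΩR⟩ := hb.subset_ball_lt 0 p
    obtain ⟨φ, hφ, hφe⟩ := hl
    obtain ⟨g, hg⟩ := ContinuousMap.exists_restrict_eq hE0c.isClosed
      (⟨E0.domRestrict φ, hφ.domRestrict⟩ : C(E0, ℂ))
    have hgφ : ∀ z ∈ E0, g z = φ z := fun z hz => by
      have := congrArg (fun f : C(E0, ℂ) => f ⟨z, hz⟩) hg
      exact this
    have hfr : frontier Ω ⊆ E0 := by
      have := frontier_comp hE0c.isClosed.isOpen_compl p
      rwa [compl_compl] at this
    refine no_ext (fun z => if z ∈ Ω then Complex.exp (g z) else z - p) ?_ ?_ p R hR ?_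
    · apply Continuous.if
      · intro z hz
        have hz' := hfr hz
        rw [hgφ z hz', hφe z hz']
      · fun_prop
      · fun_prop
    · intro z
      by_cases h : z ∈ Ω
      · simp [h]
      · simp only [h, if_false]
        exact sub_ne_zero.2 fun h' => h (h' ▸ hpΩ)
    · intro z hz
      have : z ∉ Ω := fun h => by
        have := hΩR h
        rw [Metric.mem_ball, dist_eq_norm] at this
        linarith
      simp [this]

theorem HasLog.near {E : Set ℂ} {z w : ℂ} (h : HasLog E z) (hn : ∀ e ∈ E, ‖z - w‖ < ‖e - z‖) :
    HasLog E w := by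
  obtain ⟨φ, hφ, hφe⟩ := h
  have hne : ∀ e ∈ E, e - z ≠ 0 := fun e he => norm_pos_iff.1 ((norm_nonneg _).trans_lt (hn e he))
  have hs : ∀ e ∈ E, 1 + (z - w) / (e - z) ∈ Complex.slitPlane := fun e he => by
    apply Complex.mem_slitPlane_of_norm_lt_one
    rw [norm_div, div_lt_one (norm_pos_iff.2 (hne e he))]
    exact hn e he
  refine ⟨fun e => φ e + Complex.log (1 + (z - w) / (e - z)), ?_, ?_⟩
  · refine hφ.add (ContinuousOn.clog ?_ hs)
    exact continuousOn_const.add (continuousOn_const.div (by fun_prop) hne)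
  · intro e he
    rw [Complex.exp_add, hφe e he, Complex.exp_log (Complex.slitPlane_ne_zero (hs e he))]
    have := hne e he
    field_simp
    ring

theorem hasLog_far {E : Set ℂ} {z : ℂ} (hn : ∀ e ∈ E, ‖e‖ < ‖z‖) (hz : z ≠ 0) :
    HasLog E z := by
  have hs : ∀ e ∈ E, 1 + (-e / z) ∈ Complex.slitPlane := fun e he => by
    apply Complex.mem_slitPlane_of_norm_lt_one
    rw [norm_div, norm_neg, div_lt_one (norm_pos_iff.2 hz)]
    exact hn e he
  refine ⟨fun e => Complex.log (-z) + Complex.log (1 + (-e / z)), ?_, ?_⟩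
  · refine continuousOn_const.add (ContinuousOn.clog ?_ hs)
    fun_prop
  · intro e he
    rw [Complex.exp_add, Complex.exp_log (neg_ne_zero.2 hz),
      Complex.exp_log (Complex.slitPlane_ne_zero (hs e he))]
    field_simp
    ring

theorem NonSep.hasLog {E : Set (OnePoint ℂ)} (hE : IsClosed E) (hi : OnePoint.infty ∉ E)
    {p : ℂ} (h : NonSep E (p : OnePoint ℂ) OnePoint.infty) : HasLog ((↑) ⁻¹' E) p := by
  obtain ⟨C, hC, hpC, hiC, hCE⟩ := h
  set E0 : Set ℂ := (↑) ⁻¹' E with hE0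
  have hE0c : IsCompact E0 := isCompact_pre hE hi
  have hloc : ∀ z ∈ E0ᶜ, ∀ᶠ w in 𝓝 z, (HasLog E0 w ↔ HasLog E0 z) ∧ w ∈ E0ᶜ := by
    intro z hz
    obtain ⟨δ, hδ, hb⟩ := Metric.isOpen_iff.1 hE0c.isClosed.isOpen_compl z hz
    have hd : ∀ e ∈ E0, δ ≤ ‖e - z‖ := fun e he => by
      by_contra! hlt
      exact hb (by rwa [Metric.mem_ball, dist_eq_norm]) he
    filter_upwards [Metric.ball_mem_nhds z (half_pos hδ)] with w hw
    rw [Metric.mem_ball, dist_eq_norm] at hw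
    refine ⟨⟨fun h => h.near fun e he => ?_, fun h => h.near fun e he => ?_⟩, hb ?_⟩
    · have := hd e he
      have h2 : ‖e - z‖ ≤ ‖e - w‖ + ‖w - z‖ := norm_sub_le_norm_sub_add_norm_sub _ _ _
      linarith
    · rw [norm_sub_rev]
      have := hd e he
      linarith
    · rw [Metric.mem_ball, dist_eq_norm]; linarith
  let D : Set (OnePoint ℂ) := insert OnePoint.infty ((↑) '' {z : ℂ | z ∈ E0ᶜ ∧ HasLog E0 z})
  let D' : Set (OnePoint ℂ) := (↑) '' {z : ℂ | z ∈ E0ᶜ ∧ ¬ HasLog E0 z}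
  have hD' : IsOpen D' := by
    rw [OnePoint.isOpen_image_coe, isOpen_iff_mem_nhds]
    rintro z ⟨hz, hzl⟩
    filter_upwards [hloc z hz] with w hw
    exact ⟨hw.2, fun h => hzl (hw.1.1 h)⟩
  have hD1 : IsOpen ((↑) '' {z : ℂ | z ∈ E0ᶜ ∧ HasLog E0 z} : Set (OnePoint ℂ)) := by
    rw [OnePoint.isOpen_image_coe, isOpen_iff_mem_nhds]
    rintro z ⟨hz, hzl⟩
    filter_upwards [hloc z hz] with w hw
    exact ⟨hw.2, hw.1.2 hzl⟩
  have hD : IsOpen D := by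
    obtain ⟨R, hR, hER⟩ := hE0c.isBounded.subset_ball_lt 0 0
    have : D = ((↑) '' {z : ℂ | z ∈ E0ᶜ ∧ HasLog E0 z}) ∪ ((↑) '' (Metric.closedBall (0:ℂ) R))ᶜ := by
      ext x
      induction x using OnePoint.rec with
      | infty => simp [D]
      | coe z =>
        simp only [D, mem_insert_iff, OnePoint.coe_ne_infty, false_or, mem_union, mem_compl_iff]
        constructor
        · exact Or.inl
        · rintro (h | h)
          · exact h
          · have hz : R < ‖z‖ := by
              by_contra! hle
              exact h ⟨z, by simpa using hle, rfl⟩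
            have hE : ∀ e ∈ E0, ‖e‖ < ‖z‖ := fun e he => by
              have := hER he
              simp only [Metric.mem_ball, dist_zero_right] at this
              linarith
            exact ⟨z, ⟨fun h' => lt_irrefl _ (hE z h'), hasLog_far hE
              (norm_pos_iff.1 (hR.trans hz))⟩, rfl⟩
    rw [this]
    refine hD1.union ?_
    rw [OnePoint.isOpen_compl_image_coe]
    exact ⟨Metric.isClosed_closedBall, isCompact_closedBall _ _⟩
  have hcov : C ⊆ D ∪ D' := by
    intro x hx
    have hxE := disjoint_left.1 hCE hx
    induction x using OnePoint.rec with
    | infty => exact Or.inl (mem_insert _ _)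
    | coe z =>
      by_cases h : HasLog E0 z
      · exact Or.inl (mem_insert_of_mem _ ⟨z, ⟨hxE, h⟩, rfl⟩)
      · exact Or.inr ⟨z, ⟨hxE, h⟩, rfl⟩
  have hdis : D ∩ D' = ∅ := by
    rw [← disjoint_iff_inter_eq_empty, disjoint_left]
    rintro x (rfl | ⟨z, hz, rfl⟩) ⟨w, hw, hwx⟩
    · exact OnePoint.coe_ne_infty _ hwx
    · rw [OnePoint.coe_eq_coe] at hwx
      subst hwx
      exact hw.2 hz.2
  rcases isPreconnected_iff_subset_of_disjoint.1 hC D D' hD hD' hcov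
    (by rw [hdis, inter_empty]) with h | h
  · rcases h hpC with h' | ⟨z, hz, hzp⟩
    · exact absurd h' (OnePoint.coe_ne_infty _)
    · rw [OnePoint.coe_eq_coe] at hzp
      exact hzp ▸ hz.2
  · obtain ⟨z, hz, hzp⟩ := h hiC
    exact absurd hzp (OnePoint.coe_ne_infty _)

theorem NonSep.union_infty {E₁ E₂ : Set (OnePoint ℂ)} (h1 : IsClosed E₁) (h2 : IsClosed E₂)
    (hc : IsPreconnected (E₁ ∩ E₂)) {p : OnePoint ℂ}
    (n1 : NonSep E₁ p OnePoint.infty) (n2 : NonSep E₂ p OnePoint.infty) :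
    NonSep (E₁ ∪ E₂) p OnePoint.infty := by
  have hi : OnePoint.infty ∉ E₁ ∪ E₂ := by
    rintro (h | h)
    · obtain ⟨C, _, _, hC, hd⟩ := n1
      exact disjoint_left.1 hd hC h
    · obtain ⟨C, _, _, hC, hd⟩ := n2
      exact disjoint_left.1 hd hC h
  have hp : p ∉ E₁ ∪ E₂ := by
    rintro (h | h)
    · obtain ⟨C, _, hC, _, hd⟩ := n1
      exact disjoint_left.1 hd hC h
    · obtain ⟨C, _, hC, _, hd⟩ := n2
      exact disjoint_left.1 hd hC h
  induction p using OnePoint.rec with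
  | infty => exact ⟨{OnePoint.infty}, isPreconnected_singleton, rfl, rfl, by simpa using hi⟩
  | coe p =>
    apply HasLog.nonSep (h1.union h2) hi hp
    rw [preimage_union]
    refine HasLog.glue (n1.hasLog h1 fun h => hi (Or.inl h)) (n2.hasLog h2 fun h => hi (Or.inr h))
      (h1.preimage OnePoint.continuous_coe) (h2.preimage OnePoint.continuous_coe) ?_ hp
    rw [← preimage_inter]
    refine hc.preimage_of_isOpenMap OnePoint.coe_injective OnePoint.isOpenMap_coe ?_
    intro x hx
    induction x using OnePoint.rec with
    | infty => exact absurd (Or.inl hx.1) hi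
    | coe x => exact ⟨x, rfl⟩

noncomputable def invFn : OnePoint ℂ → OnePoint ℂ := fun x =>
  x.elim ((0 : ℂ) : OnePoint ℂ) (fun z => open Classical in if z = 0 then OnePoint.infty else ((z⁻¹ : ℂ) : OnePoint ℂ))

theorem invFn_invFn (x : OnePoint ℂ) : invFn (invFn x) = x := by
  induction x using OnePoint.rec with
  | infty => simp [invFn]
  | coe z =>
    by_cases h : z = 0
    · simp [invFn, h]
    · simp [invFn, h]

theorem continuous_invFn : Continuous invFn := by
  rw [OnePoint.continuous_iff]
  constructor
  · have h1 : Filter.Tendsto (fun z : ℂ => ((z⁻¹ : ℂ) : OnePoint ℂ)) (Filter.coclosedCompact ℂ)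
      (𝓝 ((0 : ℂ) : OnePoint ℂ)) := by
      rw [Filter.coclosedCompact_eq_cocompact]
      exact (OnePoint.continuous_coe.tendsto 0).comp (by
        rw [← Metric.cobounded_eq_cocompact]
        exact Filter.tendsto_inv₀_cobounded)
    refine Filter.Tendsto.congr' ?_ h1
    have : {(0:ℂ)}ᶜ ∈ Filter.coclosedCompact ℂ := by
      rw [Filter.coclosedCompact_eq_cocompact]
      exact isCompact_singleton.compl_mem_cocompact
    filter_upwards [this] with z hz
    have hz' : z ≠ 0 := hz
    simp [invFn, hz']
  · rw [continuous_iff_continuousAt]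
    intro z
    by_cases hz : z = 0
    · subst hz
      rw [ContinuousAt, ← nhdsNE_sup_pure, Filter.tendsto_sup]
      constructor
      · have h1 : Filter.Tendsto (fun z : ℂ => ((z⁻¹ : ℂ) : OnePoint ℂ)) (𝓝[≠] 0)
          (𝓝 (OnePoint.infty)) := by
          refine OnePoint.tendsto_coe_infty.comp ?_
          rw [Filter.coclosedCompact_eq_cocompact, ← Metric.cobounded_eq_cocompact]
          exact Filter.tendsto_inv₀_nhdsNE_zero
        have e : invFn ((0:ℂ) : OnePoint ℂ) = OnePoint.infty := by simp [invFn]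
        rw [e]
        refine Filter.Tendsto.congr' ?_ h1
        filter_upwards [self_mem_nhdsWithin] with z hz
        have hz' : z ≠ 0 := hz
        simp [invFn, hz']
      · exact Filter.tendsto_pure_left.2 fun s hs => mem_of_mem_nhds hs
    · have h1 : ContinuousAt (fun z : ℂ => ((z⁻¹ : ℂ) : OnePoint ℂ)) z :=
        OnePoint.continuous_coe.continuousAt.comp (continuousAt_inv₀ hz)
      refine h1.congr ?_
      filter_upwards [isOpen_ne.mem_nhds hz] with w hw
      have hz' : w ≠ 0 := hw
      simp [invFn, hz']

theorem exists_moebius (q : OnePoint ℂ) : ∃ h : OnePoint ℂ ≃ₜ OnePoint ℂ, h q = OnePoint.infty := by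
  induction q using OnePoint.rec with
  | infty => exact ⟨Homeomorph.refl _, rfl⟩
  | coe z =>
    let i : OnePoint ℂ ≃ₜ OnePoint ℂ :=
      { toFun := invFn, invFun := invFn, left_inv := invFn_invFn, right_inv := invFn_invFn,
        continuous_toFun := continuous_invFn, continuous_invFun := continuous_invFn }
    refine ⟨(Homeomorph.addRight (-z)).onePointCongr.trans i, ?_⟩
    change invFn (OnePoint.map _ (z : OnePoint ℂ)) = _
    rw [OnePoint.map_some]
    simp [invFn]

theorem NonSep.image {S T : Type*} [TopologicalSpace S] [TopologicalSpace T] (h : S ≃ₜ T)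
    {E : Set S} {p q : S} (n : NonSep E p q) : NonSep (h '' E) (h p) (h q) := by
  obtain ⟨C, hC, hp, hq, hd⟩ := n
  exact ⟨h '' C, hC.image _ h.continuous.continuousOn, mem_image_of_mem _ hp, mem_image_of_mem _ hq,
    (disjoint_image_iff h.injective).2 hd⟩

theorem NonSep.of_image {S T : Type*} [TopologicalSpace S] [TopologicalSpace T] (h : S ≃ₜ T)
    {E : Set S} {p q : S} (n : NonSep (h '' E) (h p) (h q)) : NonSep E p q := by
  have := n.image h.symm
  simpa [image_image] using this

theorem NonSep.union {E₁ E₂ : Set (OnePoint ℂ)} (h1 : IsClosed E₁) (h2 : IsClosed E₂)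
    (hc : IsPreconnected (E₁ ∩ E₂)) {p q : OnePoint ℂ}
    (n1 : NonSep E₁ p q) (n2 : NonSep E₂ p q) : NonSep (E₁ ∪ E₂) p q := by
  obtain ⟨h, hq⟩ := exists_moebius q
  apply NonSep.of_image h
  have n1' := n1.image h
  have n2' := n2.image h
  rw [hq] at n1' n2' ⊢
  rw [image_union]
  refine NonSep.union_infty (h.isClosedMap _ h1) (h.isClosedMap _ h2) ?_ n1' n2'
  rw [← image_inter h.injective]
  exact hc.image _ h.continuous.continuousOn

theorem locPath_sphere : LocallyPathConnectedSpace (OnePoint ℂ) := by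
  have hh : Module.finrank ℝ ℂ + 1 = Fintype.card (Fin 3) := by simp
  let e := onePointEquivSphereOfFinrankEq (ι := Fin 3) (V := ℂ) hh
  have : Fact (Module.finrank ℝ (EuclideanSpace ℝ (Fin 3)) = 2 + 1) := ⟨by simp⟩
  have : LocallyPathConnectedSpace (Metric.sphere (0 : EuclideanSpace ℝ (Fin 3)) 1) :=
    ChartedSpace.locallyPathConnectedSpace (EuclideanSpace ℝ (Fin 2)) _
  exact e.isOpenEmbedding.locallyPathConnectedSpace

theorem nonSep_of_simply_infty {U E : Set (OnePoint ℂ)} (hU : IsOpen U)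
    [SimplyConnectedSpace U] (hE : IsClosed E) (hEU : E ⊆ U) (hi : OnePoint.infty ∉ U)
    {p : OnePoint ℂ} (hp : p ∉ U) : NonSep E p OnePoint.infty := by
  classical
  induction p using OnePoint.rec with
  | infty => exact ⟨{OnePoint.infty}, isPreconnected_singleton, rfl, rfl, by simpa using fun h => hi (hEU h)⟩
  | coe p =>
    apply HasLog.nonSep hE (fun h => hi (hEU h)) (fun h => hp (hEU h))
    have := locPath_sphere
    have : LocallyPathConnectedSpace U := hU.locallyPathConnectedSpace
    obtain ⟨f, hf⟩ : ∃ f : C(U, ℂ), ∀ (z : ℂ) (hz : (z : OnePoint ℂ) ∈ U), f ⟨z, hz⟩ = z - p := by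
      refine ⟨⟨fun x => (x : OnePoint ℂ).elim 0 id - p, ?_⟩, fun z hz => rfl⟩
      refine Continuous.sub ?_ continuous_const
      rw [continuous_iff_continuousAt]
      rintro ⟨x, hx⟩
      induction x using OnePoint.rec with
      | infty => exact absurd hx hi
      | coe z =>
        have : ContinuousAt (fun x : OnePoint ℂ => x.elim 0 id) (z : OnePoint ℂ) :=
          OnePoint.continuousAt_coe.2 continuousAt_id
        exact ContinuousAt.comp (x := (⟨z, hx⟩ : U)) (f := fun x : U => (x : OnePoint ℂ))
          (g := fun x : OnePoint ℂ => x.elim 0 id) this continuousAt_subtype_val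
    obtain ⟨g, hg⟩ := exists_log f (by
      rintro ⟨x, hx⟩
      induction x using OnePoint.rec with
      | infty => exact absurd hx hi
      | coe z =>
        rw [hf]
        exact sub_ne_zero.2 fun h => hp (h ▸ hx))
    refine ⟨fun z => if h : (z : OnePoint ℂ) ∈ U then g ⟨z, h⟩ else 0, ?_, ?_⟩
    · rw [continuousOn_iff_continuous_domRestrict]
      have : Continuous fun z : ((↑) ⁻¹' E : Set ℂ) => g ⟨((z : ℂ) : OnePoint ℂ), hEU z.2⟩ :=
        g.continuous.comp ((OnePoint.continuous_coe.comp continuous_subtype_val).subtype_mk _)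
      refine this.congr fun z => ?_
      have hz : ((z : ℂ) : OnePoint ℂ) ∈ U := hEU z.2
      simp [hz]
    · intro z hz
      have hz : (z : OnePoint ℂ) ∈ U := hEU hz
      simp only [hz, dif_pos]
      rw [hg, hf]

theorem nonSep_of_simply {U E : Set (OnePoint ℂ)} (hU : IsOpen U)
    (hs : SimplyConnectedSpace U) (hE : IsClosed E) (hEU : E ⊆ U)
    {p q : OnePoint ℂ} (hp : p ∉ U) (hq : q ∉ U) : NonSep E p q := by
  obtain ⟨h, hhq⟩ := exists_moebius q
  apply NonSep.of_image h
  rw [hhq]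
  have : SimplyConnectedSpace (h '' U) :=
    (h.image U).symm.toHomotopyEquiv.simplyConnectedSpace
  refine nonSep_of_simply_infty (h.isOpenMap _ hU) (h.isClosedMap _ hE) (image_mono hEU) ?_ ?_
  · rw [← hhq]; rintro ⟨x, hx, hxq⟩
    exact hq (h.injective hxq ▸ hx)
  · rintro ⟨x, hx, hxq⟩
    exact hp (h.injective hxq ▸ hx)

theorem subset_or_of_disjoint_frontier {S : Type*} [TopologicalSpace S] {C O : Set S}
    (hC : IsPreconnected C) (hO : IsOpen O) (hd : Disjoint C (frontier O)) :
    C ⊆ O ∨ C ⊆ (closure O)ᶜ := by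
  refine isPreconnected_iff_subset_of_disjoint.1 hC O _ hO isClosed_closure.isOpen_compl ?_ ?_
  · intro x hx
    by_cases h : x ∈ O
    · exact Or.inl h
    · right
      intro hc
      exact disjoint_left.1 hd hx (hO.frontier_eq ▸ ⟨hc, h⟩)
  · apply eq_empty_of_forall_notMem
    rintro x ⟨_, h1, h2⟩
    exact h2 (subset_closure h1)

theorem frontier_preconn {O : Set (OnePoint ℂ)} (hO : IsOpen O) (hOc : IsPreconnected O)
    (h : ∀ p ∈ frontier O, ∀ q ∈ frontier O, ∀ E ⊆ O, IsClosed E → NonSep E p q) :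
    IsPreconnected (frontier O) := by
  rw [isPreconnected_iff_subset_of_fully_disjoint_closed isClosed_frontier]
  intro P Q hP hQ hs hd
  by_contra hcon
  push Not at hcon
  obtain ⟨h1, h2⟩ := hcon
  obtain ⟨q, hq, hqP⟩ := not_subset.1 h1
  obtain ⟨p, hp, hpQ⟩ := not_subset.1 h2
  have hqQ : q ∈ Q := (hs hq).resolve_left hqP
  have hpP : p ∈ P := (hs hp).resolve_right hpQ
  obtain ⟨N, hN, hPN, hNQ⟩ := normal_exists_closure_subset hP hQ.isOpen_compl
    (disjoint_left.1 hd)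
  have hEX : ∀ x ∈ frontier N, x ∉ frontier O := by
    intro x hx hxO
    rw [hN.frontier_eq] at hx
    rcases hs hxO with h | h
    · exact hx.2 (hPN h)
    · exact hNQ hx.1 h
  have hE1 : frontier N ∩ O = frontier N ∩ closure O := by
    ext x
    constructor
    · exact fun hx => ⟨hx.1, subset_closure hx.2⟩
    · rintro ⟨hx, hxc⟩
      refine ⟨hx, ?_⟩
      by_contra hxO
      exact hEX x hx (hO.frontier_eq ▸ ⟨hxc, hxO⟩)
  have n1 : NonSep (frontier N ∩ O) p q := h p hp q hq _ inter_subset_right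
    (hE1 ▸ isClosed_frontier.inter isClosed_closure)
  have n2 : NonSep (frontier N ∩ Oᶜ) p q := by
    refine ⟨O ∪ {p, q}, hOc.subset_closure subset_union_left ?_, by simp, by simp, ?_⟩
    · refine union_subset subset_closure ?_
      rintro x (rfl | rfl)
      · exact frontier_subset_closure hp
      · exact frontier_subset_closure hq
    · rw [disjoint_left]
      rintro x (hx | rfl | rfl) ⟨hx1, hx2⟩
      · exact hx2 hx
      · exact hEX _ hx1 hp
      · exact hEX _ hx1 hq
  have n := NonSep.union (hE1 ▸ isClosed_frontier.inter isClosed_closure)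
    (isClosed_frontier.inter hO.isClosed_compl) (by
      have : frontier N ∩ O ∩ (frontier N ∩ Oᶜ) = ∅ := by
        apply eq_empty_of_forall_notMem
        rintro x ⟨h1, h2⟩
        exact h2.2 h1.2
      rw [this]; exact isPreconnected_empty) n1 n2
  rw [inter_union_compl] at n
  obtain ⟨C, hC, hpC, hqC, hCd⟩ := n
  rcases subset_or_of_disjoint_frontier hC hN hCd with h | h
  · exact hNQ (subset_closure (h hqC)) hqQ
  · exact h hpC (subset_closure (hPN hpP))

/-- Let `U ⊆ ℂ∞` be a simply connected open set whose boundary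
`X = ∂U` has at least two points, and let `V ≠ U` be a connected component of `ℂ∞ \ X`
such that `∂V` has nonempty interior relative to `X`.  If `X` is irreducible about some
finite subset of `X`, then `∂V` contains an indecomposable subcontinuum with nonempty
interior relative to `X`. -/
theorem stmt_4 (U V : Set RiemannSphere) (hUopen : IsOpen U)
    (hUsc : SimplyConnectedSpace U) (hbd : (frontier U).Nontrivial)
    (hV : ∃ x ∈ (frontier U)ᶜ, V = connectedComponentIn (frontier U)ᶜ x)
    (hVU : V ≠ U)
    (hint : (relInterior (frontier U) (frontier V)).Nonempty)
    (hirr : ∃ A : Set RiemannSphere, A.Finite ∧ A ⊆ frontier U ∧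
      ∀ K : Set RiemannSphere, IsSubcontinuum K → K ⊆ frontier U → A ⊆ K →
        K = frontier U) :
    ∃ K : Set RiemannSphere, K ⊆ frontier V ∧ IsSubcontinuum K ∧
      IsIndecomposableSet K ∧ (relInterior (frontier U) K).Nonempty := by
  have hlp := locPath_sphere
  obtain ⟨x₀, hx₀, hVeq⟩ := hV
  obtain ⟨A, hAfin, hAX, hAirr⟩ := hirr
  have hUc : IsPreconnected U := by
    rw [isPreconnected_iff_preconnectedSpace]
    infer_instance
  have hXcl : IsClosed (frontier U) := isClosed_frontier
  have hVo : IsOpen V := hVeq ▸ hXcl.isOpen_compl.connectedComponentIn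
  have hVc : IsPreconnected V := hVeq ▸ isPreconnected_connectedComponentIn
  have hVX : V ⊆ (frontier U)ᶜ := hVeq ▸ connectedComponentIn_subset _ _
  have hx₀V : x₀ ∈ V := hVeq ▸ mem_connectedComponentIn hx₀
  have hFV : frontier V ⊆ frontier U := by
    have := frontier_comp hXcl.isOpen_compl x₀
    rwa [compl_compl, ← hVeq] at this
  have hUX : U ⊆ (frontier U)ᶜ := fun x hx h => (hUopen.frontier_eq ▸ h : x ∈ closure U \ U).2 hx
  -- `V` and `U` are disjoint
  have hx₀U : x₀ ∉ U := by
    intro hxU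
    apply hVU
    apply subset_antisymm
    · rcases subset_or_of_disjoint_frontier hVc hUopen
        (disjoint_left.2 fun x hx => hVX hx) with h | h
      · exact h
      · exact absurd (subset_closure hxU) (h hx₀V)
    · rw [hVeq]
      exact hUc.subset_connectedComponentIn hxU hUX
  obtain ⟨u₀, hu₀⟩ : U.Nonempty := by
    obtain ⟨⟨u, hu⟩⟩ : Nonempty U := inferInstance
    exact ⟨u, hu⟩
  -- connectedness of the boundaries
  have hXc : IsPreconnected (frontier U) := by
    refine frontier_preconn hUopen hUc fun p hp q hq E hE hEc => ?_
    exact nonSep_of_simply hUopen hUsc hEc hE (fun h => hUX h hp) (fun h => hUX h hq)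
  have hYc : IsPreconnected (frontier V) := by
    refine frontier_preconn hVo hVc fun p hp q hq E hE hEc => ?_
    exact ⟨frontier U, hXc, hFV hp, hFV hq, disjoint_left.2 fun x hx hxE => hVX (hE hxE) hx⟩
  have : CompactSpace (frontier U) := isCompact_iff_compactSpace.1 hXcl.isCompact
  have : PreconnectedSpace (frontier U) := isPreconnected_iff_preconnectedSpace.1 hXc
  have hce : IsClosedEmbedding ((↑) : frontier U → RiemannSphere) := hXcl.isClosedEmbedding_subtypeVal
  have hpre : ∀ K : Set (frontier U), IsPreconnected ((↑) '' K : Set RiemannSphere) ↔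
    IsPreconnected K := fun K => hce.isInducing.isPreconnected_image
  have hsubX : ∀ K : Set (frontier U), ((↑) '' K : Set RiemannSphere) ⊆ frontier U := by
    rintro K _ ⟨x, _, rfl⟩
    exact x.2
  obtain ⟨K, hKY, hK, hKc, hKi, hKind⟩ := abstract_main (T := frontier U)
    (Subtype.val ⁻¹' A) (Subtype.val ⁻¹' frontier V) (hAfin.preimage Subtype.val_injective.injOn)
    (isClosed_frontier.preimage continuous_subtype_val)
    (by
      rw [← hpre, image_preimage_eq_inter_range, Subtype.range_coe, inter_eq_left.2 hFV]
      exact hYc)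
    hint
    (by
      intro K hK hKc hAK
      rcases K.eq_empty_or_nonempty with rfl | hne
      · exfalso
        have hA0 : A = ∅ := by
          apply eq_empty_of_forall_notMem
          intro x hx
          exact hAK (show (⟨x, hAX hx⟩ : frontier U) ∈ _ from hx)
        obtain ⟨x, hx, y, hy, hxy⟩ := hbd
        have h1 := hAirr {x} ⟨isCompact_singleton, isConnected_singleton⟩ (by simpa using hx)
          (by simp [hA0])
        rw [← h1] at hy
        exact hxy hy.symm
      · have h1 := hAirr ((↑) '' K) ⟨(hce.isClosedMap _ hK).isCompact, hne.image _, (hpre K).2 hKc⟩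
          (hsubX K) (fun x hx => ⟨⟨x, hAX hx⟩, hAK hx, rfl⟩)
        apply eq_univ_of_forall
        rintro ⟨x, hx⟩
        rw [← h1] at hx
        obtain ⟨y, hy, rfl⟩ := hx
        exact hy)
    (by
      intro M S R hM hMc hS hR hSR hU
      by_contra hcon
      push Not at hcon
      obtain ⟨⟨s, hsY, hsS⟩, ⟨t, htY, htR⟩⟩ := hcon
      have hclo : ∀ W : Set (frontier U), IsOpen W → ∀ w ∈ W, (w : RiemannSphere) ∈ frontier V →
          IsClosed ((↑) '' Wᶜ : Set RiemannSphere) ∧ NonSep ((↑) '' Wᶜ) u₀ x₀ := by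
        intro W hW w hw hwV
        refine ⟨hce.isClosedMap _ hW.isClosed_compl, insert ↑w U ∪ insert ↑w V, ?_,
          Or.inl (mem_insert_of_mem _ hu₀), Or.inr (mem_insert_of_mem _ hx₀V), ?_⟩
        · refine IsPreconnected.union (w : RiemannSphere) (mem_insert _ _) (mem_insert _ _) ?_ ?_
          · exact hUc.subset_closure (subset_insert _ _)
              (insert_subset (frontier_subset_closure w.2) subset_closure)
          · exact hVc.subset_closure (subset_insert _ _)
              (insert_subset (frontier_subset_closure hwV) subset_closure)
        · rw [disjoint_left]
          rintro x hx ⟨y, hy, rfl⟩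
          rcases hx with (h | h) | (h | h)
          · exact hy (Subtype.ext h ▸ hw)
          · exact hUX h y.2
          · exact hy (Subtype.ext h ▸ hw)
          · exact hVX h y.2
      obtain ⟨c1, n1⟩ := hclo S hS s hsS hsY
      obtain ⟨c2, n2⟩ := hclo R hR t htR htY
      have n := NonSep.union c1 c2 (by
        rw [← image_inter Subtype.val_injective, ← compl_union, hU, compl_compl, hpre]
        exact hMc.2) n1 n2
      rw [← image_union, ← compl_inter, hSR.inter_eq, compl_empty, image_univ,
        Subtype.range_coe] at n
      obtain ⟨C, hC, huC, hxC, hd⟩ := n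
      rcases subset_or_of_disjoint_frontier hC hUopen hd with h | h
      · exact hx₀U (h hxC)
      · exact h huC (subset_closure hu₀))
  refine ⟨(↑) '' K, ?_, ⟨(hce.isClosedMap _ hK).isCompact, hKc.1.image _, (hpre K).2 hKc.2⟩, ?_, ?_⟩
  · rintro _ ⟨x, hx, rfl⟩
    exact hKY hx
  · intro K₁ K₂ h1 h1K h2 h2K hU
    have hb : ∀ L : Set RiemannSphere, L ⊆ (↑) '' K →
        ((↑) '' ((↑) ⁻¹' L : Set (frontier U)) : Set RiemannSphere) = L := by
      intro L hL
      rw [image_preimage_eq_inter_range, Subtype.range_coe]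
      exact inter_eq_left.2 (hL.trans (hsubX K))
    have hcc : ∀ L : Set RiemannSphere, L ⊆ (↑) '' K → IsSubcontinuum L →
        IsClosed ((↑) ⁻¹' L : Set (frontier U)) ∧ IsConnected ((↑) ⁻¹' L : Set (frontier U)) := by
      intro L hL hLc
      refine ⟨hLc.1.isClosed.preimage continuous_subtype_val, ?_, ?_⟩
      · rw [← image_nonempty (f := ((↑) : frontier U → RiemannSphere)), hb L hL]
        exact hLc.2.1
      · rw [← hpre, hb L hL]
        exact hLc.2.2
    have e : ((↑) ⁻¹' K₁ ∪ (↑) ⁻¹' K₂ : Set (frontier U)) = K := by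
      rw [← preimage_union, hU, preimage_image_eq _ Subtype.val_injective]
    rcases hKind _ _ (hcc K₁ h1K h1).1 (hcc K₁ h1K h1).2 (hcc K₂ h2K h2).1 (hcc K₂ h2K h2).2 e
      with h | h
    · left; rw [← h, hb K₁ h1K]
    · right; rw [← h, hb K₂ h2K]
  · unfold relInterior
    rw [preimage_image_eq _ Subtype.val_injective]
    exact hKi
end

section
/- Let ℂ∞ denote the Riemann sphere (OnePoint ℂ). Let U ⊆ ℂ∞ be a simply connected open set whose boundary X = ∂U contains at least two points and is connected, and let V ≠ U be a connected component of ℂ∞ ∖ X such that ∂V has nonempty interior relative to X. Assume that X is irreducible about some finite subset of X, and assume that every indecomposable subcontinuum of X with nonempty interior relative to X is equal to X. Then X is an indecomposable continuum. -/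
open Set Topology

namespace MakAux

section Continua

variable {α : Type*} [TopologicalSpace α]

lemma sInter_chain [T2Space α] {c : Set (Set α)} (hne : c.Nonempty)
    (hc : IsChain (· ⊆ ·) c) (h : ∀ K ∈ c, IsSubcontinuum K) : IsSubcontinuum (⋂₀ c) := by
  obtain ⟨k₀, hk₀⟩ := hne
  have : Nonempty c := ⟨⟨k₀, hk₀⟩⟩
  have hdir : DirectedOn (· ⊇ ·) c := by
    intro a ha b hb
    rcases hc.total ha hb with hab | hab
    · exact ⟨a, ha, Subset.rfl, hab⟩
    · exact ⟨b, hb, hab, Subset.rfl⟩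
  have hcl : IsClosed (⋂₀ c) := isClosed_sInter fun K hK => (h K hK).1.isClosed
  have hcomp : IsCompact (⋂₀ c) := (h k₀ hk₀).1.of_isClosed_subset hcl (sInter_subset_of_mem hk₀)
  refine ⟨hcomp, ?_, ?_⟩
  · exact IsCompact.nonempty_sInter_of_directed_nonempty_isCompact_isClosed hdir
      (fun K hK => (h K hK).2.1) (fun K hK => (h K hK).1) (fun K hK => (h K hK).1.isClosed)
  · rw [isPreconnected_iff_subset_of_disjoint_closed]
    intro u v hu hv huv hd
    have hdis : Disjoint (⋂₀ c ∩ u) (⋂₀ c ∩ v) := by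
      rw [Set.disjoint_left]
      rintro x ⟨hx, hxu⟩ ⟨_, hxv⟩
      have : x ∈ ⋂₀ c ∩ (u ∩ v) := ⟨hx, hxu, hxv⟩
      rw [hd] at this
      exact this
    obtain ⟨O₁, O₂, h1, h2, h3, h4, h5⟩ := SeparatedNhds.of_isCompact_isCompact
      (hcomp.inter_right hu) (hcomp.inter_right hv) hdis
    have hsub : ⋂₀ c ⊆ O₁ ∪ O₂ := by
      intro x hx
      rcases huv hx with hxu | hxv
      · exact Or.inl (h3 ⟨hx, hxu⟩)
      · exact Or.inr (h4 ⟨hx, hxv⟩)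
    obtain ⟨⟨k, hk⟩, hkO⟩ := exists_subset_nhds_of_isCompact (V := fun i : c => (i : Set α))
      (DirectedOn.directed_val hdir) (fun i => (h i i.2).1) (U := O₁ ∪ O₂)
      (fun x hx => (h1.union h2).mem_nhds (hsub (by rw [sInter_eq_iInter]; exact hx)))
    have hsk : ⋂₀ c ⊆ k := sInter_subset_of_mem hk
    rcases (h k hk).2.2.subset_or_subset h1 h2 h5 hkO with h6 | h6
    · left
      intro x hx
      rcases huv hx with hxu | hxv
      · exact hxu
      · exact absurd (h4 ⟨hx, hxv⟩) (Set.disjoint_left.1 h5 (h6 (hsk hx)))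
    · right
      intro x hx
      rcases huv hx with hxu | hxv
      · exact absurd (h6 (hsk hx)) (Set.disjoint_left.1 h5 (h3 ⟨hx, hxu⟩))
      · exact hxv

lemma component_meets [T2Space α] {P K O : Set α} (hP : IsSubcontinuum P)
    (hO : IsOpen O) (hK : IsClosed K) (hKP : K ⊆ P) (hKne : K.Nonempty) (hOK : P ∩ O ⊆ K)
    {b : α} (hb : b ∈ P \ O) :
    (connectedComponentIn (P \ O) b ∩ K).Nonempty := by
  have hcl : IsCompact (P \ O) := hP.1.diff hO
  have : CompactSpace ↥(P \ O) := isCompact_iff_compactSpace.1 hcl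
  by_contra hcon
  rw [connectedComponentIn_eq_image hb, connectedComponent_eq_iInter_isClopen] at hcon
  have hdir : Directed (· ⊇ ·)
      (fun s : { s : Set ↥(P \ O) // IsClopen s ∧ (⟨b, hb⟩ : ↥(P \ O)) ∈ s } => (s : Set ↥(P \ O))) := by
    intro s t
    exact ⟨⟨s ∩ t, s.2.1.inter t.2.1, s.2.2, t.2.2⟩, inter_subset_left, inter_subset_right⟩
  have : Nonempty { s : Set ↥(P \ O) // IsClopen s ∧ (⟨b, hb⟩ : ↥(P \ O)) ∈ s } :=
    ⟨⟨univ, isClopen_univ, mem_univ _⟩⟩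
  obtain ⟨⟨D, hD, hbD⟩, hDK⟩ := exists_subset_nhds_of_isCompact hdir
    (fun i => i.2.1.1.isCompact) (U := (Subtype.val ⁻¹' K)ᶜ) (by
      intro x hx
      refine (hK.preimage continuous_subtype_val).isOpen_compl.mem_nhds ?_
      intro hxK
      exact hcon ⟨x, ⟨x, hx, rfl⟩, hxK⟩)
  have hE : IsClosed (Subtype.val '' D) := (hD.1.isCompact.image continuous_subtype_val).isClosed
  have hF : IsClosed (Subtype.val '' Dᶜ) :=
    (hD.compl.1.isCompact.image continuous_subtype_val).isClosed
  have hcov : P ⊆ Subtype.val '' D ∪ (Subtype.val '' Dᶜ ∪ K) := by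
    intro x hx
    by_cases hxO : x ∈ O
    · exact Or.inr (Or.inr (hOK ⟨hx, hxO⟩))
    · by_cases hxD : (⟨x, hx, hxO⟩ : ↥(P \ O)) ∈ D
      · exact Or.inl ⟨_, hxD, rfl⟩
      · exact Or.inr (Or.inl ⟨_, hxD, rfl⟩)
  have hdj : ∀ x, x ∈ Subtype.val '' D → x ∉ Subtype.val '' Dᶜ ∪ K := by
    rintro _ ⟨y, hy, rfl⟩ (⟨z, hz, hzy⟩ | hyK)
    · exact hz (by rwa [Subtype.ext hzy])
    · exact hDK hy hyK
  have hbE : b ∈ Subtype.val '' D := ⟨⟨b, hb⟩, hbD, rfl⟩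
  rcases isPreconnected_iff_subset_of_disjoint_closed.1 hP.2.2 _ _ hE (hF.union hK) hcov
    (by
      ext x
      simp only [mem_inter_iff, mem_empty_iff_false, iff_false]
      rintro ⟨_, h1, h2⟩
      exact hdj x h1 h2) with h | h
  · obtain ⟨k, hk⟩ := hKne
    exact hdj k (h (hKP hk)) (Or.inr hk)
  · exact hdj b hbE (h hb.1)

lemma attach {K₁ : Set α} (hK : IsSubcontinuum K₁) (N : α → Set α) {B : Set α} (hB : B.Finite)
    (h : ∀ b ∈ B, IsSubcontinuum (N b) ∧ (K₁ ∩ N b).Nonempty) :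
    IsSubcontinuum (K₁ ∪ ⋃ b ∈ B, N b) := by
  refine ⟨hK.1.union (hB.isCompact_biUnion fun b hb => (h b hb).1.1), ?_⟩
  obtain ⟨x, hx⟩ := hK.2.1
  refine ⟨⟨x, Or.inl hx⟩, ?_⟩
  have : K₁ ∪ ⋃ b ∈ B, N b = ⋃₀ (insert K₁ ((fun b => K₁ ∪ N b) '' B)) := by
    ext y
    simp only [mem_union, mem_iUnion, sUnion_insert, sUnion_image]
    constructor
    · rintro (h | ⟨b, hb, hy⟩)
      · exact Or.inl h
      · exact Or.inr ⟨b, hb, Or.inr hy⟩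
    · rintro (h | ⟨b, hb, hy | hy⟩)
      · exact Or.inl h
      · exact Or.inl hy
      · exact Or.inr ⟨b, hb, hy⟩
  rw [this]
  refine isPreconnected_sUnion x _ ?_ ?_
  · rintro s (rfl | ⟨b, hb, rfl⟩)
    · exact hx
    · exact Or.inl hx
  · rintro s (rfl | ⟨b, hb, rfl⟩)
    · exact hK.2.2
    · exact (IsConnected.union (h b hb).2 hK.2 (h b hb).1.2).2

lemma union_cont {K L : Set α} (hK : IsSubcontinuum K) (hL : IsSubcontinuum L)
    (h : (K ∩ L).Nonempty) : IsSubcontinuum (K ∪ L) :=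
  ⟨hK.1.union hL.1, IsConnected.union h hK.2 hL.2⟩

lemma split [T2Space α] {P O B : Set α} (hP : IsSubcontinuum P) (hO : IsOpen O)
    (hne : (P ∩ O).Nonempty) (hB : B.Finite) (hBP : B ⊆ P) (hBO : ∀ b ∈ B, b ∉ O)
    (hdec : ∀ K, K ⊆ P → IsSubcontinuum K → P ∩ O ⊆ K → ¬ IsIndecomposableSet K) :
    ∃ P' T : Set α, P' ⊆ P ∧ T ⊆ P ∧ IsSubcontinuum P' ∧ IsSubcontinuum T ∧
      IsSubcontinuum (P' ∪ T) ∧ B ⊆ P' ∪ T ∧ ¬ P ∩ O ⊆ P' ∧ ¬ P ∩ O ⊆ T := by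
  obtain ⟨K, hKP, hKmin⟩ := zorn_superset_nonempty {K | IsSubcontinuum K ∧ P ∩ O ⊆ K} (by
    intro c hcS hc hcne
    exact ⟨⋂₀ c, ⟨sInter_chain hcne hc fun K hK => (hcS hK).1,
      subset_sInter fun K hK => (hcS hK).2⟩, fun s hs => sInter_subset_of_mem hs⟩)
    P ⟨hP, inter_subset_left⟩
  obtain ⟨hKc, hOK⟩ := hKmin.1
  have hnd := hdec K hKP hKc hOK
  unfold IsIndecomposableSet at hnd
  push Not at hnd
  obtain ⟨K₁, K₂, h1, h1K, h2, h2K, h12, hn1, hn2⟩ := hnd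
  have hW1 : ¬ P ∩ O ⊆ K₁ := fun h => hn1 (h1K.antisymm (hKmin.2 ⟨h1, h⟩ h1K))
  have hW2 : ¬ P ∩ O ⊆ K₂ := fun h => hn2 (h2K.antisymm (hKmin.2 ⟨h2, h⟩ h2K))
  set N : α → Set α := fun b => connectedComponentIn (P \ O) b with hN
  have hNsub : ∀ b, N b ⊆ P \ O := fun b => connectedComponentIn_subset _ _
  have hNc : ∀ b ∈ B, IsSubcontinuum (N b) := by
    intro b hb
    have hb' : b ∈ P \ O := ⟨hBP hb, hBO b hb⟩
    have : CompactSpace ↥(P \ O) := isCompact_iff_compactSpace.1 (hP.1.diff hO)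
    refine ⟨?_, isConnected_connectedComponentIn_iff.2 hb'⟩
    simp only [hN]
    rw [connectedComponentIn_eq_image hb']
    exact isClosed_connectedComponent.isCompact.image continuous_subtype_val
  have hNm : ∀ b ∈ B, (K₁ ∩ N b).Nonempty ∨ (K₂ ∩ N b).Nonempty := by
    intro b hb
    obtain ⟨x, hx, hxK⟩ := component_meets hP hO hKc.1.isClosed hKP hKc.2.1 hOK
      (b := b) ⟨hBP hb, hBO b hb⟩
    rw [← h12] at hxK
    rcases hxK with h | h
    · exact Or.inl ⟨x, h, hx⟩
    · exact Or.inr ⟨x, h, hx⟩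
  have key : ∀ L : Set α, IsSubcontinuum L → L ⊆ K → ¬ P ∩ O ⊆ L →
      (L ∪ ⋃ b ∈ {b ∈ B | (L ∩ N b).Nonempty}, N b) ⊆ P ∧
      IsSubcontinuum (L ∪ ⋃ b ∈ {b ∈ B | (L ∩ N b).Nonempty}, N b) ∧
      ¬ P ∩ O ⊆ (L ∪ ⋃ b ∈ {b ∈ B | (L ∩ N b).Nonempty}, N b) := by
    intro L hL hLK hLO
    refine ⟨?_, attach hL N (hB.subset (sep_subset _ _)) fun b hb => ⟨hNc b hb.1, hb.2⟩, ?_⟩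
    · refine union_subset (hLK.trans hKP) (iUnion₂_subset fun b _ => (hNsub b).trans diff_subset)
    · intro h
      apply hLO
      intro x hx
      rcases h hx with h | h
      · exact h
      · simp only [mem_iUnion] at h
        obtain ⟨b, _, hxb⟩ := h
        exact absurd hx.2 (hNsub b hxb).2
  obtain ⟨a1, a2, a3⟩ := key K₁ h1 h1K hW1
  obtain ⟨b1, b2, b3⟩ := key K₂ h2 h2K hW2
  refine ⟨_, _, a1, b1, a2, b2, ?_, ?_, a3, b3⟩
  · refine union_cont a2 b2 ?_
    have : (K ∩ (K₁ ∩ K₂)).Nonempty := by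
      refine isPreconnected_closed_iff.1 hKc.2.2 K₁ K₂ h1.1.isClosed h2.1.isClosed h12.ge ?_ ?_
      · rw [inter_eq_right.2 h1K]; exact h1.2.1
      · rw [inter_eq_right.2 h2K]; exact h2.2.1
    obtain ⟨x, _, hx1, hx2⟩ := this
    exact ⟨x, Or.inl hx1, Or.inl hx2⟩
  · intro b hb
    have hbN : b ∈ N b := mem_connectedComponentIn ⟨hBP hb, hBO b hb⟩
    rcases hNm b hb with h | h
    · exact Or.inl (Or.inr (mem_biUnion (x := b) ⟨hb, h⟩ hbN))
    · exact Or.inr (Or.inr (mem_biUnion (x := b) ⟨hb, h⟩ hbN))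

/-- Adding one closed-open piece of `M` to a connected set keeps it connected. -/
lemma union_piece {Q E F : Set α} (hQ : IsSubcontinuum Q) (hE : IsCompact E)
    (hQE : IsClosed Q) (hEcl : IsClosed E) (hF : IsClosed F) (hEF : ∀ x ∈ E, x ∉ F)
    (hall : IsPreconnected (Q ∪ (E ∪ F))) : IsSubcontinuum (Q ∪ E) := by
  refine ⟨hQ.1.union hE, hQ.2.1.mono subset_union_left, ?_⟩
  rw [isPreconnected_iff_subset_of_disjoint_closed]
  have main : ∀ u v : Set α, IsClosed u → IsClosed v → Q ∪ E ⊆ u ∪ v →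
      (Q ∪ E) ∩ (u ∩ v) = ∅ → Q ⊆ u → Q ∪ E ⊆ u := by
    intro u v hu hv huv hd hQu
    have hd' : ∀ x, x ∈ Q ∪ E → x ∈ u → x ∉ v := by
      intro x hx hxu hxv
      have : x ∈ (Q ∪ E) ∩ (u ∩ v) := ⟨hx, hxu, hxv⟩
      rw [hd] at this
      exact this
    rcases isPreconnected_iff_subset_of_disjoint_closed.1 hall ((Q ∪ (E ∩ u)) ∪ F) (E ∩ v)
      ((hQE.union (hEcl.inter hu)).union hF) (hEcl.inter hv) (by
        rintro x (hx | hx | hx)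
        · exact Or.inl (Or.inl (Or.inl hx))
        · rcases huv (Or.inr hx) with h | h
          · exact Or.inl (Or.inl (Or.inr ⟨hx, h⟩))
          · exact Or.inr ⟨hx, h⟩
        · exact Or.inl (Or.inr hx)) (by
        ext x
        simp only [mem_inter_iff, mem_empty_iff_false, iff_false]
        rintro ⟨_, ((h | h) | h), h2⟩
        · exact hd' x (Or.inl h) (hQu h) h2.2
        · exact hd' x (Or.inr h.1) h.2 h2.2
        · exact hEF x h2.1 h) with h | h
    · rintro x (hx | hx)
      · exact hQu hx
      · rcases h (Or.inr (Or.inl hx)) with (h' | h') | h'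
        · exact hQu h'
        · exact h'.2
        · exact absurd h' (hEF x hx)
    · exfalso
      obtain ⟨q, hq⟩ := hQ.2.1
      exact hd' q (Or.inl hq) (hQu hq) (h (Or.inl hq)).2
  intro u v hu hv huv hd
  rcases isPreconnected_iff_subset_of_disjoint_closed.1 hQ.2.2 u v hu hv
    (subset_union_left.trans huv) (by
      apply eq_empty_of_subset_empty
      rw [← hd]
      exact inter_subset_inter_left _ subset_union_left) with h | h
  · exact Or.inl (main u v hu hv huv hd h)
  · exact Or.inr (main v u hv hu (by rwa [union_comm v u]) (by rwa [inter_comm v u]) h)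

lemma inter_conn [T2Space α] {X A P Q P' Q' : Set α}
    (hirr : ∀ K, IsSubcontinuum K → K ⊆ X → A ⊆ K → K = X)
    (hP : IsSubcontinuum P) (hQ : IsSubcontinuum Q) (hP' : IsSubcontinuum P')
    (hQ' : IsSubcontinuum Q') (hPQ : P ∪ Q = X) (hPQ' : P' ∪ Q' = X) (hPP : P' ⊆ P)
    (hQQ : Q ⊆ Q') (hA : A ⊆ P' ∪ Q) (hne : P' ∪ Q ≠ X) : IsPreconnected (P ∩ Q') := by
  rw [isPreconnected_iff_subset_of_disjoint_closed]
  intro u v hu hv huv hd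
  by_contra hcon
  push Not at hcon
  obtain ⟨hnu, hnv⟩ := hcon
  set E := (P ∩ Q') ∩ u with hE
  set F := (P ∩ Q') ∩ v with hF
  have hEF : ∀ x ∈ E, x ∉ F := by
    intro x hx hx'
    have : x ∈ P ∩ Q' ∩ (u ∩ v) := ⟨hx.1, hx.2, hx'.2⟩
    rw [hd] at this
    exact this
  have hM : E ∪ F = P ∩ Q' := by
    rw [hE, hF, ← inter_union_distrib_left, inter_eq_left.2 huv]
  have hEne : E.Nonempty := by
    obtain ⟨x, hx, hxv⟩ := not_subset.1 hnv
    exact ⟨x, hx, (huv hx).resolve_right hxv⟩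
  have hFne : F.Nonempty := by
    obtain ⟨x, hx, hxv⟩ := not_subset.1 hnu
    exact ⟨x, hx, (huv hx).resolve_left hxv⟩
  have hMc : IsCompact (P ∩ Q') := hP.1.inter hQ'.1
  have hEc : IsCompact E := hMc.inter_right hu
  have hFc : IsCompact F := hMc.inter_right hv
  have hPX : P ⊆ X := hPQ ▸ subset_union_left
  have hQX : Q' ⊆ X := hPQ' ▸ subset_union_right
  have hQall : Q ∪ (P ∩ Q') = Q' := by
    ext x
    constructor
    · rintro (h | h)
      · exact hQQ h
      · exact h.2
    · intro h
      have : x ∈ P ∪ Q := hPQ ▸ hQX h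
      rcases this with h' | h'
      · exact Or.inr ⟨h', h⟩
      · exact Or.inl h'
  have hPall : P' ∪ (P ∩ Q') = P := by
    ext x
    constructor
    · rintro (h | h)
      · exact hPP h
      · exact h.1
    · intro h
      have : x ∈ P' ∪ Q' := hPQ' ▸ hPX h
      rcases this with h' | h'
      · exact Or.inl h'
      · exact Or.inr ⟨h, h'⟩
  have key : ∀ E F : Set α, E.Nonempty → IsCompact E → IsCompact F → (∀ x ∈ E, x ∉ F) →
      E ∪ F = P ∩ Q' → F ⊆ P' ∪ Q := by
    intro E F hEne hE hF hEF hM x hx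
    have c1 : IsSubcontinuum (Q ∪ E) := union_piece hQ hE hQ.1.isClosed hE.isClosed hF.isClosed hEF
      (by rw [hM, hQall]; exact hQ'.2.2)
    have c2 : IsSubcontinuum (P' ∪ E) := union_piece hP' hE hP'.1.isClosed hE.isClosed hF.isClosed
      hEF (by rw [hM, hPall]; exact hP.2.2)
    obtain ⟨e, he⟩ := hEne
    have c3 := union_cont c1 c2 ⟨e, Or.inr he, Or.inr he⟩
    have hEP : E ⊆ P ∩ Q' := hM ▸ subset_union_left
    have hFP : F ⊆ P ∩ Q' := hM ▸ subset_union_right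
    have hX := hirr _ c3 (by
      rintro y ((h | h) | (h | h))
      · exact hQX (hQQ h)
      · exact hPX (hEP h).1
      · exact hPX (hPP h)
      · exact hPX (hEP h).1) (by
      intro a ha
      rcases hA ha with h | h
      · exact Or.inr (Or.inl h)
      · exact Or.inl (Or.inl h))
    have hxX : x ∈ X := hPX (hFP hx).1
    rw [← hX] at hxX
    rcases hxX with (h | h) | (h | h)
    · exact Or.inr h
    · exact absurd hx (hEF x h)
    · exact Or.inl h
    · exact absurd hx (hEF x h)
  have hFs := key E F hEne hEc hFc hEF hM
  have hEs := key F E hFne hFc hEc (fun x hx hx' => hEF x hx' hx) (by rw [union_comm]; exact hM)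
  apply hne
  apply (union_subset (hPP.trans hPX) (hQQ.trans hQX)).antisymm
  intro x hx
  rw [← hPQ'] at hx
  rcases hx with h | h
  · exact Or.inl h
  · rw [← hQall, ← hM] at h
    rcases h with h | h | h
    · exact Or.inr h
    · exact hEs h
    · exact hFs h

lemma step [T2Space α] {X A O P Q : Set α} (hO : IsOpen O) (hAf : A.Finite) (hAX : A ⊆ X)
    (hAO : ∀ a ∈ A, a ∉ O)
    (hirr : ∀ K, IsSubcontinuum K → K ⊆ X → A ⊆ K → K = X)
    (hdec : ∀ K O', IsOpen O' → (X ∩ O').Nonempty → K ⊆ X → IsSubcontinuum K → X ∩ O' ⊆ K →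
      ¬ IsIndecomposableSet K)
    (hP : IsSubcontinuum P) (hQ : IsSubcontinuum Q) (hPQ : P ∪ Q = X) (hPne : (P ∩ Q).Nonempty)
    (hOQ : ¬ X ∩ O ⊆ Q) :
    ∃ P' Q', IsSubcontinuum P' ∧ IsSubcontinuum Q' ∧ P' ∪ Q' = X ∧ (P' ∩ Q').Nonempty ∧
      P' ⊆ P ∧ Q ⊆ Q' ∧ ¬ X ∩ O ⊆ Q' ∧ ¬ X ∩ O ⊆ P' ∪ Q := by
  obtain ⟨q, hqP, hqQ⟩ := hPne
  have hPX : P ⊆ X := hPQ ▸ subset_union_left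
  have hQX : Q ⊆ X := hPQ ▸ subset_union_right
  have hO' : IsOpen (O ∩ Qᶜ) := hO.inter hQ.1.isClosed.isOpen_compl
  have heq : P ∩ (O ∩ Qᶜ) = X ∩ (O ∩ Qᶜ) := by
    ext x
    constructor
    · rintro ⟨h, h'⟩
      exact ⟨hPX h, h'⟩
    · rintro ⟨h, h'⟩
      rw [← hPQ] at h
      exact ⟨h.resolve_right h'.2, h'⟩
  have hne : (X ∩ (O ∩ Qᶜ)).Nonempty := by
    obtain ⟨x, hx, hxQ⟩ := not_subset.1 hOQ
    exact ⟨x, hx.1, hx.2, hxQ⟩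
  obtain ⟨P', T, h1, h2, h3, h4, h5, h6, h7, h8⟩ := split (B := insert q (A ∩ P)) hP hO'
    (heq ▸ hne) ((hAf.inter_of_left P).insert q)
    (insert_subset hqP inter_subset_right) (by
      rintro b (rfl | hb) h
      · exact h.2 hqQ
      · exact hAO b hb.1 h.1) (by
      intro K hK hKc hKO
      rw [heq] at hKO
      exact hdec K _ hO' hne (hK.trans hPX) hKc hKO)
  rw [heq] at h7 h8
  have main : ∀ P' T : Set α, P' ⊆ P → T ⊆ P → IsSubcontinuum P' → IsSubcontinuum T →
      IsSubcontinuum (P' ∪ T) → insert q (A ∩ P) ⊆ P' ∪ T → ¬ X ∩ (O ∩ Qᶜ) ⊆ P' →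
      ¬ X ∩ (O ∩ Qᶜ) ⊆ T → q ∈ T →
      ∃ P' Q', IsSubcontinuum P' ∧ IsSubcontinuum Q' ∧ P' ∪ Q' = X ∧ (P' ∩ Q').Nonempty ∧
      P' ⊆ P ∧ Q ⊆ Q' ∧ ¬ X ∩ O ⊆ Q' ∧ ¬ X ∩ O ⊆ P' ∪ Q := by
    intro P' T h1 h2 h3 h4 h5 h6 h7 h8 hqT
    have hint : (P' ∩ T).Nonempty := by
      obtain ⟨x, _, hx⟩ := isPreconnected_closed_iff.1 h5.2.2 P' T h3.1.isClosed h4.1.isClosed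
        Subset.rfl (by rw [inter_eq_right.2 subset_union_left]; exact h3.2.1)
        (by rw [inter_eq_right.2 subset_union_right]; exact h4.2.1)
      exact ⟨x, hx⟩
    refine ⟨P', T ∪ Q, h3, union_cont h4 hQ ⟨q, hqT, hqQ⟩, ?_, ?_, h1, subset_union_right, ?_, ?_⟩
    · rw [← union_assoc]
      refine hirr _ (union_cont h5 hQ ⟨q, Or.inr hqT, hqQ⟩)
        (union_subset (union_subset (h1.trans hPX) (h2.trans hPX)) hQX) ?_
      intro a ha
      have := hAX ha
      rw [← hPQ] at this
      rcases this with h | h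
      · exact Or.inl (h6 (Or.inr ⟨ha, h⟩))
      · exact Or.inr h
    · exact hint.mono (inter_subset_inter_right _ subset_union_left)
    · intro h
      apply h8
      rintro x ⟨hx, hxO, hxQ⟩
      exact (h ⟨hx, hxO⟩).resolve_right hxQ
    · intro h
      apply h7
      rintro x ⟨hx, hxO, hxQ⟩
      exact (h ⟨hx, hxO⟩).resolve_right hxQ
  rcases h6 (mem_insert _ _) with hq | hq
  · exact main T P' h2 h1 h4 h3 (by rwa [union_comm]) (by rwa [union_comm]) h8 h7 hq
  · exact main P' T h1 h2 h3 h4 h5 h6 h7 h8 hq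

lemma cover [T2Space α] {X A O : Set α} (hX : IsSubcontinuum X) (hO : IsOpen O) (hAf : A.Finite)
    (hAne : A.Nonempty) (hAX : A ⊆ X) (hXO : (X ∩ O).Nonempty)
    (hAO : ∀ a ∈ A, a ∉ O)
    (hirr : ∀ K, IsSubcontinuum K → K ⊆ X → A ⊆ K → K = X)
    (hdec : ∀ K O', IsOpen O' → (X ∩ O').Nonempty → K ⊆ X → IsSubcontinuum K → X ∩ O' ⊆ K →
      ¬ IsIndecomposableSet K) :
    ∃ P Q : Set α, IsClosed P ∧ IsClosed Q ∧ P ∪ Q = X ∧ IsPreconnected (P ∩ Q) ∧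
      ¬ X ∩ O ⊆ P ∧ ¬ X ∩ O ⊆ Q := by
  have main : ∀ n : ℕ, ∀ P Q : Set α, (A \ Q).ncard = n → IsSubcontinuum P → IsSubcontinuum Q →
      P ∪ Q = X → (P ∩ Q).Nonempty → ¬ X ∩ O ⊆ Q → ¬ X ∩ O ⊆ P →
      ∃ P Q : Set α, IsClosed P ∧ IsClosed Q ∧ P ∪ Q = X ∧ IsPreconnected (P ∩ Q) ∧
      ¬ X ∩ O ⊆ P ∧ ¬ X ∩ O ⊆ Q := by
    intro n
    induction n using Nat.strong_induction_on with
    | _ n ih =>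
      intro P Q hn hP hQ hPQ hne hOQ hOP
      obtain ⟨P', Q', a1, a2, a3, a4, a5, a6, a7, a8⟩ :=
        step hO hAf hAX hAO hirr hdec hP hQ hPQ hne hOQ
      by_cases hcase : A ∩ Q' ⊆ Q
      · refine ⟨P, Q', hP.1.isClosed, a2.1.isClosed, ?_, ?_, hOP, a7⟩
        · apply Subset.antisymm
          · exact union_subset (hPQ ▸ subset_union_left) (a3 ▸ subset_union_right)
          · rw [← hPQ]
            exact union_subset_union_right _ a6
        · refine inter_conn hirr hP hQ a1 a2 hPQ a3 a5 a6 ?_ ?_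
          · intro a ha
            have := hAX ha
            rw [← a3] at this
            rcases this with h | h
            · exact Or.inl h
            · exact Or.inr (hcase ⟨ha, h⟩)
          · intro h
            apply a8
            rw [h]
            exact inter_subset_left
      · obtain ⟨a, ha, haQ⟩ := not_subset.1 hcase
        refine ih _ ?_ P' Q' rfl a1 a2 a3 a4 a7 (fun h => a8 (h.trans subset_union_left))
        rw [← hn]
        refine Set.ncard_lt_ncard ?_ (hAf.subset diff_subset)
        refine ⟨diff_subset_diff_right a6, fun h => ?_⟩
        exact (h ⟨ha.1, haQ⟩).2 ha.2
  obtain ⟨a, ha⟩ := hAne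
  have hsing : IsSubcontinuum ({a} : Set α) := ⟨isCompact_singleton, isConnected_singleton⟩
  have haX : ({a} : Set α) ⊆ X := singleton_subset_iff.2 (hAX ha)
  obtain ⟨P', Q', a1, a2, a3, a4, a5, a6, a7, a8⟩ :=
    step hO hAf hAX hAO hirr hdec hX hsing (union_eq_left.2 haX) ⟨a, hAX ha, rfl⟩ (by
      intro h
      obtain ⟨x, hx⟩ := hXO
      have : x = a := h hx
      exact hAO a ha (this ▸ hx.2))
  exact main _ P' Q' rfl a1 a2 a3 a4 a7 (fun h => a8 (h.trans subset_union_left))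

end Continua

section Plane

/-- `f` has a continuous logarithm on `K`. -/
def HasLog (f : ℂ → ℂ) (K : Set ℂ) : Prop :=
  ∃ g : ℂ → ℂ, ContinuousOn g K ∧ ∀ z ∈ K, Complex.exp (g z) = f z

lemma HasLog.near {f h : ℂ → ℂ} {K : Set ℂ} (hf : HasLog f K) (hfc : ContinuousOn f K)
    (hhc : ContinuousOn h K) (hfh : ∀ z ∈ K, ‖h z - f z‖ < ‖f z‖) : HasLog h K := by
  obtain ⟨g, hg, hge⟩ := hf
  have hf0 : ∀ z ∈ K, f z ≠ 0 := by
    intro z hz h0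
    have := hfh z hz
    rw [h0, norm_zero] at this
    exact absurd this (not_lt.2 (norm_nonneg _))
  have hs : ∀ z ∈ K, h z / f z ∈ Complex.slitPlane := by
    intro z hz
    have h1 : h z / f z = 1 + (h z - f z) / f z := by
      field_simp [hf0 z hz]
      ring
    rw [h1]
    apply Complex.mem_slitPlane_of_norm_lt_one
    rw [norm_div, div_lt_one (norm_pos_iff.2 (hf0 z hz))]
    exact hfh z hz
  refine ⟨fun z => g z + Complex.log (h z / f z), hg.add ((hhc.div hfc hf0).clog hs), ?_⟩
  intro z hz
  rw [Complex.exp_add, hge z hz, Complex.exp_log (Complex.slitPlane_ne_zero (hs z hz))]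
  field_simp [hf0 z hz]

lemma const_of_exp {β : Type*} [TopologicalSpace β] {S : Set β} (hS : IsPreconnected S)
    {h : β → ℂ} (hh : ContinuousOn h S) (he : ∀ x ∈ S, Complex.exp (h x) = 1) :
    ∀ x ∈ S, ∀ y ∈ S, h x = h y := by
  have key : ∀ x ∈ S, ∀ y ∈ S, ¬ (h x).im < (h y).im := by
    intro x hx y hy hlt
    obtain ⟨m, hm⟩ := Complex.exp_eq_one_iff.1 (he x hx)
    obtain ⟨n, hn⟩ := Complex.exp_eq_one_iff.1 (he y hy)
    have hm' : (h x).im = m * (2 * Real.pi) := by rw [hm]; simp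
    have hn' : (h y).im = n * (2 * Real.pi) := by rw [hn]; simp
    have hpi := Real.pi_pos
    have hmn : m + 1 ≤ n := by
      have : (m : ℝ) < n := by
        rw [hm', hn'] at hlt
        exact lt_of_mul_lt_mul_right hlt (by positivity)
      exact_mod_cast this
    have hmn' : (m : ℝ) + 1 ≤ n := by exact_mod_cast hmn
    have himg : IsPreconnected ((fun x => (h x).im) '' S) :=
      hS.image _ (Complex.continuous_im.comp_continuousOn hh)
    have hmem : (m : ℝ) * (2 * Real.pi) + Real.pi ∈ (fun x => (h x).im) '' S := by
      apply himg.Icc_subset (mem_image_of_mem _ hx) (mem_image_of_mem _ hy)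
      constructor
      · simp only [hm']; linarith
      · simp only [hn']; nlinarith
    obtain ⟨z, hz, hze⟩ := hmem
    obtain ⟨k, hk⟩ := Complex.exp_eq_one_iff.1 (he z hz)
    have hk' : (h z).im = k * (2 * Real.pi) := by rw [hk]; simp
    simp only [hk'] at hze
    have h2 : (k : ℝ) * 2 = m * 2 + 1 := by
      apply mul_right_cancel₀ hpi.ne'
      linarith
    have h3 : k * 2 = m * 2 + 1 := by exact_mod_cast h2
    omega
  intro x hx y hy
  have him : (h x).im = (h y).im := le_antisymm (not_lt.1 (key y hy x hx)) (not_lt.1 (key x hx y hy))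
  obtain ⟨m, hm⟩ := Complex.exp_eq_one_iff.1 (he x hx)
  obtain ⟨n, hn⟩ := Complex.exp_eq_one_iff.1 (he y hy)
  apply Complex.ext _ him
  rw [hm, hn]
  simp

lemma HasLog.glue {f : ℂ → ℂ} {K L : Set ℂ} (hK : IsClosed K) (hL : IsClosed L)
    (hKL : IsPreconnected (K ∩ L)) (h1 : HasLog f K) (h2 : HasLog f L) : HasLog f (K ∪ L) := by
  classical
  obtain ⟨g₁, c1, e1⟩ := h1
  obtain ⟨g₂, c2, e2⟩ := h2
  obtain ⟨c, hc, hcc⟩ : ∃ c : ℂ, Complex.exp c = 1 ∧ ∀ z ∈ K ∩ L, g₁ z = g₂ z + c := by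
    have hexp : ∀ z ∈ K ∩ L, Complex.exp (g₁ z - g₂ z) = 1 := by
      intro z hz
      rw [Complex.exp_sub, e1 z hz.1, e2 z hz.2, div_self]
      rw [← e1 z hz.1]
      exact Complex.exp_ne_zero _
    rcases (K ∩ L).eq_empty_or_nonempty with he | ⟨w, hw⟩
    · exact ⟨0, Complex.exp_zero, by simp [he]⟩
    · refine ⟨g₁ w - g₂ w, hexp w hw, fun z hz => ?_⟩
      have := const_of_exp hKL (h := fun z => g₁ z - g₂ z)
        ((c1.mono inter_subset_left).sub (c2.mono inter_subset_right)) hexp z hz w hw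
      rw [← this]
      ring
  have hL' : EqOn (fun z => if z ∈ K then g₁ z else g₂ z + c) (fun z => g₂ z + c) L := by
    intro z hz
    by_cases hzK : z ∈ K
    · simp only [if_pos hzK]
      exact hcc z ⟨hzK, hz⟩
    · simp only [if_neg hzK]
  have hK' : EqOn (fun z => if z ∈ K then g₁ z else g₂ z + c) g₁ K := by
    intro z hz
    simp only [if_pos hz]
  refine ⟨fun z => if z ∈ K then g₁ z else g₂ z + c, ?_, ?_⟩
  · exact ContinuousOn.union_of_isClosed (c1.congr hK')
      ((c2.add continuousOn_const).congr hL') hK hL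
  · rintro z (hz | hz)
    · rw [hK' hz, e1 z hz]
    · rw [hL' hz]
      simp only
      rw [Complex.exp_add, hc, mul_one, e2 z hz]

lemma hasLog_of_connected {K : Set ℂ} (hK : IsCompact K) {C : Set (OnePoint ℂ)}
    (hC : IsPreconnected C) (hCK : ∀ z ∈ K, (z : OnePoint ℂ) ∉ C) (hinf : OnePoint.infty ∈ C)
    {u : ℂ} (hu : (u : OnePoint ℂ) ∈ C) : HasLog (fun z => z - u) K := by
  have hcs : ∀ p : ℂ, ContinuousOn (fun z : ℂ => z - p) K := fun p => by fun_prop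
  have mv : ∀ p p' : ℂ, ∀ ε : ℝ, (∀ z ∈ K, ε ≤ ‖z - p‖) → ‖p - p'‖ < ε →
      HasLog (fun z => z - p) K → HasLog (fun z => z - p') K := by
    intro p p' ε hε hpp h
    refine h.near (hcs p) (hcs p') fun z hz => ?_
    have : z - p' - (z - p) = p - p' := by ring
    rw [this]
    exact hpp.trans_le (hε z hz)
  set S : Set ℂ := {p | p ∉ K ∧ HasLog (fun z => z - p) K} with hS
  set T : Set ℂ := {p | p ∉ K ∧ ¬ HasLog (fun z => z - p) K} with hT
  have hball : ∀ p ∉ K, ∃ ε > 0, ∀ z ∈ K, 2 * ε ≤ ‖z - p‖ := by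
    intro p hp
    obtain ⟨ε, hε, hb⟩ := Metric.isOpen_iff.1 hK.isClosed.isOpen_compl p hp
    refine ⟨ε / 2, by positivity, fun z hz => ?_⟩
    by_contra hlt
    push Not at hlt
    exact hb (by rw [Metric.mem_ball, dist_eq_norm]; linarith) hz
  have hSo : IsOpen S := by
    rw [Metric.isOpen_iff]
    rintro p ⟨hp, hl⟩
    obtain ⟨ε, hε, hb⟩ := hball p hp
    refine ⟨ε, hε, fun p' hp' => ?_⟩
    rw [Metric.mem_ball, dist_comm, dist_eq_norm] at hp'
    refine ⟨fun hK' => ?_, mv p p' (2 * ε) hb (by linarith) hl⟩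
    have := hb p' hK'
    rw [norm_sub_rev] at this
    linarith
  have hTo : IsOpen T := by
    rw [Metric.isOpen_iff]
    rintro p ⟨hp, hl⟩
    obtain ⟨ε, hε, hb⟩ := hball p hp
    refine ⟨ε, hε, fun p' hp' => ?_⟩
    rw [Metric.mem_ball, dist_eq_norm] at hp'
    refine ⟨fun hK' => ?_, fun hl' => hl (mv p' p ε ?_ hp' hl')⟩
    · have := hb p' hK'
      linarith
    · intro z hz
      have h1 := hb z hz
      have h2 : ‖z - p‖ ≤ ‖z - p'‖ + ‖p' - p‖ := by
        have := norm_add_le (z - p') (p' - p)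
        simpa using this
      linarith
  obtain ⟨R, hR⟩ : ∃ R : ℝ, ∀ z ∈ K, ‖z‖ ≤ R := hK.isBounded.exists_norm_le
  have hbig : Sᶜ ⊆ Metric.closedBall 0 R := by
    intro p hp
    rw [mem_closedBall_zero_iff]
    by_contra hlt
    push Not at hlt
    apply hp
    refine ⟨fun hpK => absurd (hR p hpK) (not_le.2 hlt), ?_⟩
    by_cases hp0 : p = 0
    · refine ⟨fun _ => 0, continuousOn_const, fun z hz => ?_⟩
      exfalso
      have := hR z hz
      rw [hp0, norm_zero] at hlt
      linarith [norm_nonneg z]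
    · have hc : HasLog (fun _ => -p) K :=
        ⟨fun _ => Complex.log (-p), continuousOn_const, fun z _ =>
          Complex.exp_log (neg_ne_zero.2 hp0)⟩
      refine hc.near continuousOn_const (hcs p) fun z hz => ?_
      have : z - p - -p = z := by ring
      rw [this, norm_neg]
      exact (hR z hz).trans_lt hlt
  have hV1 : IsOpen (((↑) '' Sᶜ : Set (OnePoint ℂ))ᶜ) :=
    OnePoint.isOpen_compl_image_coe.2 ⟨hSo.isClosed_compl,
      (isCompact_closedBall 0 R).of_isClosed_subset hSo.isClosed_compl hbig⟩
  have hV2 : IsOpen ((↑) '' T : Set (OnePoint ℂ)) := OnePoint.isOpen_image_coe.2 hTo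
  have hsub := IsPreconnected.subset_left_of_subset_union hV1 hV2 (by
      rw [Set.disjoint_left]
      rintro _ h ⟨t, ht, rfl⟩
      exact h ⟨t, fun hs => ht.2 hs.2, rfl⟩) (by
      intro x hx
      by_cases hxS : x ∈ ((↑) '' Sᶜ : Set (OnePoint ℂ))
      · obtain ⟨p, hp, rfl⟩ := hxS
        have hpK : p ∉ K := fun h => hCK p h hx
        exact Or.inr ⟨p, ⟨hpK, fun h => hp ⟨hpK, h⟩⟩, rfl⟩
      · exact Or.inl hxS) ⟨OnePoint.infty, hinf, by simp⟩ hC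
  have := hsub hu
  by_contra hcon
  exact this ⟨u, fun h => hcon h.2, rfl⟩

lemma not_hasLog {K O : Set ℂ} (hK : IsCompact K) (hOK : frontier O ⊆ K)
    (hO : Bornology.IsBounded O) {u : ℂ} (hu : u ∈ O) : ¬ HasLog (fun z => z - u) K := by
  classical
  rintro ⟨g, hg, hge⟩
  obtain ⟨G, hG⟩ := ContinuousMap.exists_restrict_eq hK.isClosed
    (⟨K.restrict g, continuousOn_iff_continuous_restrict.1 hg⟩ : C(K, ℂ))
  have hGK : ∀ z ∈ K, G z = g z := by
    intro z hz
    have := congrArg (fun f : C(K, ℂ) => f ⟨z, hz⟩) hG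
    exact this
  set F : ℂ → ℂ := fun z => if z ∈ O then Complex.exp (G z) else z - u with hF
  have hFc : Continuous F := by
    refine Continuous.if ?_ (by fun_prop) (by fun_prop)
    intro a ha
    have haK : a ∈ K := hOK ha
    rw [hGK a haK, hge a haK]
  have hF0 : ∀ z, F z ≠ 0 := by
    intro z
    simp only [hF]
    split_ifs with h
    · exact Complex.exp_ne_zero _
    · intro h0
      rw [sub_eq_zero] at h0
      exact h (h0 ▸ hu)
  have hsc : IsSimplyConnected (univ : Set ℂ) := by
    have : ContractibleSpace (univ : Set ℂ) := convex_univ.contractibleSpace univ_nonempty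
    exact (inferInstance : SimplyConnectedSpace (univ : Set ℂ))
  obtain ⟨L, hLc, hLe⟩ := Complex.exists_continuousOn_eqOn_exp_comp hsc isOpen_univ
    hFc.continuousOn (by rintro ⟨z, _, hz⟩; exact hF0 z hz)
  have hLc' : Continuous L := continuousOn_univ.1 hLc
  obtain ⟨R, hR⟩ : ∃ R : ℝ, ∀ z ∈ O, ‖z‖ ≤ R := hO.exists_norm_le
  set r : ℝ := |R| + ‖u‖ + 1 with hr
  have hrpos : 0 < r := by positivity
  set c : ℝ → ℂ := fun θ => u + r * Complex.exp (θ * Complex.I) with hc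
  have hcO : ∀ θ, c θ ∉ O := by
    intro θ h
    have h1 := hR _ h
    have h2 : ‖(r : ℂ) * Complex.exp (θ * Complex.I)‖ = r := by
      rw [norm_mul, Complex.norm_exp_ofReal_mul_I, mul_one, Complex.norm_real, Real.norm_eq_abs,
        abs_of_pos hrpos]
    have h3 : ‖(r : ℂ) * Complex.exp (θ * Complex.I)‖ ≤ ‖c θ‖ + ‖u‖ := by
      have := norm_sub_le (c θ) u
      simpa [hc] using this
    have h4 := le_abs_self R
    linarith
  have hexp : ∀ θ : ℝ, Complex.exp (L (c θ)) = r * Complex.exp (θ * Complex.I) := by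
    intro θ
    have := hLe (mem_univ (c θ))
    simp only [Function.comp_apply] at this
    rw [this]
    simp only [hF]
    rw [if_neg (hcO θ)]
    simp [hc]
  have hrC : (r : ℂ) ≠ 0 := by exact_mod_cast hrpos.ne'
  have hconst := const_of_exp (S := (univ : Set ℝ)) isPreconnected_univ
    (h := fun θ : ℝ => L (c θ) - θ * Complex.I - Complex.log r) (by
      refine Continuous.continuousOn ?_
      have : Continuous c := by fun_prop
      fun_prop) (by
      intro θ _
      rw [Complex.exp_sub, Complex.exp_sub, hexp θ, Complex.exp_log hrC]
      have := Complex.exp_ne_zero (θ * Complex.I)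
      field_simp) 0 (mem_univ _) (2 * Real.pi) (mem_univ _)
  have hc2 : c (2 * Real.pi) = c 0 := by
    simp only [hc]
    push_cast
    rw [Complex.exp_two_pi_mul_I]
    simp
  simp only [hc2] at hconst
  have h5 : ((2 * Real.pi : ℝ) : ℂ) * Complex.I = 0 := by
    have h6 : ((0 : ℝ) : ℂ) * Complex.I = 0 := by simp
    rw [h6] at hconst
    linear_combination hconst
  have := Real.pi_pos.ne'
  simp at h5

/-- Janiszewski's theorem when one of the two points is `∞`. -/
lemma jan_infty {P Q C₁ C₂ O₁ O₂ : Set (OnePoint ℂ)} (hP : IsClosed P) (hQ : IsClosed Q)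
    (hPQ : IsPreconnected (P ∩ Q)) (h1 : IsPreconnected C₁) (h2 : IsPreconnected C₂)
    (h1P : Disjoint C₁ P) (h2Q : Disjoint C₂ Q) {u : OnePoint ℂ}
    (hu1 : u ∈ C₁) (hu2 : u ∈ C₂) (hv1 : OnePoint.infty ∈ C₁) (hv2 : OnePoint.infty ∈ C₂)
    (ho1 : IsOpen O₁) (ho2 : IsOpen O₂) (hd : Disjoint O₁ O₂) (huO : u ∈ O₁)
    (hvO : OnePoint.infty ∈ O₂) (hO : (P ∪ Q)ᶜ ⊆ O₁ ∪ O₂) (hO1 : Disjoint O₁ (P ∪ Q)) : False := by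
  have hPi : OnePoint.infty ∉ P := Set.disjoint_left.1 h1P hv1
  have hQi : OnePoint.infty ∉ Q := Set.disjoint_left.1 h2Q hv2
  have hO1i : OnePoint.infty ∉ O₁ := fun h => Set.disjoint_left.1 hd h hvO
  obtain ⟨w, rfl⟩ := OnePoint.ne_infty_iff_exists.1 (fun h => hO1i (h ▸ huO) : u ≠ OnePoint.infty)
  obtain ⟨hPcl, hPc⟩ := (OnePoint.isClosed_iff_of_notMem hPi).1 hP
  obtain ⟨hQcl, hQc⟩ := (OnePoint.isClosed_iff_of_notMem hQi).1 hQ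
  have l1 := hasLog_of_connected hPc h1 (fun z hz h => Set.disjoint_left.1 h1P h hz) hv1 hu1
  have l2 := hasLog_of_connected hQc h2 (fun z hz h => Set.disjoint_left.1 h2Q h hz) hv2 hu2
  have hpre : IsPreconnected (((↑) ⁻¹' P : Set ℂ) ∩ ((↑) ⁻¹' Q)) := by
    rw [← OnePoint.isOpenEmbedding_coe.isInducing.isPreconnected_image, ← preimage_inter,
      image_preimage_eq_of_subset]
    · exact hPQ
    · intro x hx
      rw [← OnePoint.compl_infty]
      intro h
      rw [mem_singleton_iff] at h
      exact hPi (h ▸ hx.1)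
  have l3 := HasLog.glue hPcl hQcl hpre l1 l2
  refine not_hasLog (O := (fun z : ℂ => (z : OnePoint ℂ)) ⁻¹' O₁) (hPc.union hQc) ?_ ?_ (u := w) huO l3
  · intro z hz
    by_contra hzK
    have hzPQ : (z : OnePoint ℂ) ∈ (P ∪ Q)ᶜ := hzK
    rw [(ho1.preimage OnePoint.continuous_coe).frontier_eq] at hz
    have hz2 : (z : OnePoint ℂ) ∈ O₂ := (hO hzPQ).resolve_left hz.2
    obtain ⟨y, hy2, hy1⟩ := mem_closure_iff.1 hz.1 _ (ho2.preimage OnePoint.continuous_coe) hz2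
    exact Set.disjoint_left.1 hd hy1 hy2
  · obtain ⟨_, hc⟩ := (OnePoint.isClosed_iff_of_notMem (s := O₂ᶜ) (by simpa using hvO)).1
      ho2.isClosed_compl
    refine hc.isBounded.subset ?_
    intro z hz
    exact Set.disjoint_left.1 hd hz

/-- Inversion as a self-map of the sphere. -/
noncomputable def sphInv (x : OnePoint ℂ) : OnePoint ℂ :=
  open Classical in
  x.elim ((0 : ℂ) : OnePoint ℂ) (fun z => if z = 0 then OnePoint.infty else ((z⁻¹ : ℂ) : OnePoint ℂ))

lemma sphInv_infty : sphInv OnePoint.infty = ((0 : ℂ) : OnePoint ℂ) := rfl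

lemma sphInv_zero : sphInv ((0 : ℂ) : OnePoint ℂ) = OnePoint.infty := by
  simp [sphInv]

lemma sphInv_coe {z : ℂ} (hz : z ≠ 0) : sphInv (z : OnePoint ℂ) = ((z⁻¹ : ℂ) : OnePoint ℂ) := by
  simp [sphInv, hz]

lemma sphInv_invol : Function.Involutive sphInv := by
  intro x
  induction x using OnePoint.rec with
  | infty => rw [sphInv_infty, sphInv_zero]
  | coe z =>
    by_cases hz : z = 0
    · rw [hz, sphInv_zero, sphInv_infty]
    · rw [sphInv_coe hz, sphInv_coe (inv_ne_zero hz), inv_inv]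

lemma continuous_sphInv : Continuous sphInv := by
  rw [OnePoint.continuous_iff]
  constructor
  · rw [sphInv_infty, Filter.coclosedCompact_eq_cocompact, ← Metric.cobounded_eq_cocompact]
    have h1 : Filter.Tendsto (fun z : ℂ => ((z⁻¹ : ℂ) : OnePoint ℂ)) (Bornology.cobounded ℂ)
        (𝓝 ((0 : ℂ) : OnePoint ℂ)) :=
      (OnePoint.continuous_coe.tendsto 0).comp Filter.tendsto_inv₀_cobounded
    refine h1.congr' ?_
    filter_upwards [Bornology.eventually_ne_cobounded (0 : ℂ)] with z hz
    rw [sphInv_coe hz]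
  · rw [continuous_iff_continuousAt]
    intro z
    by_cases hz : z = 0
    · subst hz
      rw [continuousAt_iff_punctured_nhds, sphInv_zero]
      have h1 : Filter.Tendsto (fun z : ℂ => ((z⁻¹ : ℂ) : OnePoint ℂ)) (𝓝[≠] 0)
          (𝓝 OnePoint.infty) := by
        refine OnePoint.tendsto_coe_infty.comp ?_
        rw [Filter.coclosedCompact_eq_cocompact, ← Metric.cobounded_eq_cocompact]
        exact Filter.tendsto_inv₀_nhdsNE_zero
      refine h1.congr' ?_
      filter_upwards [self_mem_nhdsWithin] with z hz
      rw [sphInv_coe hz]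
    · have h1 : ContinuousAt (fun z : ℂ => ((z⁻¹ : ℂ) : OnePoint ℂ)) z :=
        OnePoint.continuous_coe.continuousAt.comp (continuousAt_inv₀ hz)
      refine h1.congr ?_
      filter_upwards [isOpen_ne.mem_nhds hz] with w hw
      rw [sphInv_coe hw]

lemma exists_homeo (v : OnePoint ℂ) : ∃ h : OnePoint ℂ ≃ₜ OnePoint ℂ, h v = OnePoint.infty := by
  induction v using OnePoint.rec with
  | infty => exact ⟨Homeomorph.refl _, rfl⟩
  | coe z =>
    let i : OnePoint ℂ ≃ₜ OnePoint ℂ :=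
      { toEquiv := sphInv_invol.toPerm
        continuous_toFun := continuous_sphInv
        continuous_invFun := continuous_sphInv }
    refine ⟨(Homeomorph.onePointCongr (Homeomorph.subRight z)).trans i, ?_⟩
    have : (Homeomorph.onePointCongr (Homeomorph.subRight z)) (z : OnePoint ℂ)
        = ((0 : ℂ) : OnePoint ℂ) := by
      change ((z - z : ℂ) : OnePoint ℂ) = _
      rw [sub_self]
    rw [Homeomorph.trans_apply, this]
    exact sphInv_zero

lemma jan {P Q C₁ C₂ O₁ O₂ : Set (OnePoint ℂ)} (hP : IsClosed P) (hQ : IsClosed Q)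
    (hPQ : IsPreconnected (P ∩ Q)) (h1 : IsPreconnected C₁) (h2 : IsPreconnected C₂)
    (h1P : Disjoint C₁ P) (h2Q : Disjoint C₂ Q) {u v : OnePoint ℂ}
    (hu1 : u ∈ C₁) (hu2 : u ∈ C₂) (hv1 : v ∈ C₁) (hv2 : v ∈ C₂)
    (ho1 : IsOpen O₁) (ho2 : IsOpen O₂) (hd : Disjoint O₁ O₂) (huO : u ∈ O₁)
    (hvO : v ∈ O₂) (hO : (P ∪ Q)ᶜ ⊆ O₁ ∪ O₂) (hO1 : Disjoint O₁ (P ∪ Q)) : False := by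
  obtain ⟨h, hv⟩ := exists_homeo v
  have dj : ∀ {s t : Set (OnePoint ℂ)}, Disjoint s t → Disjoint (h '' s) (h '' t) :=
    fun hst => (disjoint_image_iff h.injective).2 hst
  refine jan_infty (P := h '' P) (Q := h '' Q) (C₁ := h '' C₁) (C₂ := h '' C₂) (O₁ := h '' O₁)
    (O₂ := h '' O₂) (u := h u) (h.isClosed_image.2 hP) (h.isClosed_image.2 hQ) ?_
    (h1.image _ h.continuous.continuousOn) (h2.image _ h.continuous.continuousOn)
    (dj h1P) (dj h2Q) (mem_image_of_mem _ hu1) (mem_image_of_mem _ hu2)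
    (hv ▸ mem_image_of_mem _ hv1) (hv ▸ mem_image_of_mem _ hv2)
    (h.isOpen_image.2 ho1) (h.isOpen_image.2 ho2) (dj hd) (mem_image_of_mem _ huO)
    (hv ▸ mem_image_of_mem _ hvO) ?_ ?_
  · rw [← image_inter h.injective]
    exact hPQ.image _ h.continuous.continuousOn
  · rw [← image_union, ← image_union, ← image_compl_eq h.bijective]
    exact image_mono hO
  · rw [← image_union]
    exact dj hO1

end Plane

end MakAux

/-- Let `U ⊆ ℂ∞` be a simply connected open set whose boundary
`X = ∂U` has at least two points and is connected, and let `V ≠ U` be a connected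
component of `ℂ∞ \ X` such that `∂V` has nonempty interior relative to `X`.  Assume
`X` is irreducible about some finite subset of `X`, and that every indecomposable
subcontinuum of `X` with nonempty interior relative to `X` equals `X`.  Then `X` is an
indecomposable continuum. -/
theorem stmt_9 (U V : Set RiemannSphere) (hUopen : IsOpen U)
    (hUsc : SimplyConnectedSpace U) (hbd : (frontier U).Nontrivial)
    (hXconn : IsConnected (frontier U))
    (hV : ∃ x ∈ (frontier U)ᶜ, V = connectedComponentIn (frontier U)ᶜ x)
    (hVU : V ≠ U)
    (hint : (relInterior (frontier U) (frontier V)).Nonempty)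
    (hirr : ∃ A : Set RiemannSphere, A.Finite ∧ A ⊆ frontier U ∧
      ∀ K : Set RiemannSphere, IsSubcontinuum K → K ⊆ frontier U → A ⊆ K →
        K = frontier U)
    (hbig : ∀ K : Set RiemannSphere, K ⊆ frontier U → IsSubcontinuum K →
      IsIndecomposableSet K → (relInterior (frontier U) K).Nonempty →
      K = frontier U) :
    IsSubcontinuum (frontier U) ∧ IsIndecomposableSet (frontier U) := by
  have hXcl : IsClosed (frontier U) := isClosed_frontier
  have hXc : IsSubcontinuum (frontier U) := ⟨hXcl.isCompact, hXconn⟩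
  refine ⟨hXc, ?_⟩
  by_contra hdecX
  obtain ⟨A, hAf, hAX, hirrA⟩ := hirr
  have hUconn : IsConnected U := isConnected_iff_connectedSpace.2 inferInstance
  obtain ⟨u, hu⟩ := hUconn.1
  -- `A` is nonempty
  have hAne : A.Nonempty := by
    rw [nonempty_iff_ne_empty]
    rintro rfl
    obtain ⟨x, hx, y, hy, hxy⟩ := hbd
    have := hirrA {x} ⟨isCompact_singleton, isConnected_singleton⟩ (singleton_subset_iff.2 hx)
      (empty_subset _)
    rw [← this] at hy
    exact hxy hy.symm
  -- the open set
  obtain ⟨O₀, hO₀, hO₀ne, hO₀V⟩ : ∃ O₀ : Set RiemannSphere, IsOpen O₀ ∧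
      (frontier U ∩ O₀).Nonempty ∧ frontier U ∩ O₀ ⊆ frontier V := by
    obtain ⟨x, hx⟩ := hint
    obtain ⟨t, ht, hto, hxt⟩ := mem_interior.1 hx
    obtain ⟨O, hO, rfl⟩ := isOpen_induced_iff.1 hto
    exact ⟨O, hO, ⟨x, x.2, hxt⟩, fun y hy => ht (show (⟨y, hy.1⟩ : frontier U) ∈ _ from hy.2)⟩
  have hOA : (frontier U ∩ (O₀ ∩ Aᶜ)).Nonempty := by
    obtain ⟨x, hxX, hxO⟩ := hO₀ne
    have : ConnectedSpace (frontier U) := isConnected_iff_connectedSpace.1 hXconn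
    have : Nontrivial (frontier U) := hbd.coe_sort
    have hnh : (Subtype.val ⁻¹' O₀ : Set (frontier U)) ∈ 𝓝 (⟨x, hxX⟩ : frontier U) :=
      (hO₀.preimage continuous_subtype_val).mem_nhds hxO
    have hinf := infinite_of_mem_nhds _ hnh
    have hAfin : (Subtype.val ⁻¹' A : Set (frontier U)).Finite :=
      hAf.preimage Subtype.val_injective.injOn
    obtain ⟨y, hy, hyA⟩ := hinf.exists_notMem_finite hAfin
    exact ⟨y, y.2, hy, hyA⟩
  have hO : IsOpen (O₀ ∩ Aᶜ) := hO₀.inter hAf.isClosed.isOpen_compl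
  obtain ⟨P, Q, hP, hQ, hPQ, hconn, hWP, hWQ⟩ := MakAux.cover hXc hO hAf hAne hAX hOA
    (fun a ha h => h.2 ha) hirrA (by
      intro K O' hO' hne hKX hK hOK hind
      have := hbig K hKX hK hind (by
        obtain ⟨x, hxX, hxO⟩ := hne
        refine ⟨⟨x, hxX⟩, mem_interior.2 ⟨Subtype.val ⁻¹' O', ?_,
          hO'.preimage continuous_subtype_val, hxO⟩⟩
        intro y hy
        exact hOK ⟨y.2, hy⟩)
      exact hdecX (this ▸ hind))
  obtain ⟨v, hvX, hVeq⟩ := hV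
  have hvV : v ∈ V := by rw [hVeq]; exact mem_connectedComponentIn hvX
  have hVX : V ⊆ (frontier U)ᶜ := by rw [hVeq]; exact connectedComponentIn_subset _ _
  have hVpre : IsPreconnected V := by rw [hVeq]; exact isPreconnected_connectedComponentIn
  have hUX : U ⊆ (frontier U)ᶜ := by
    intro x hx h
    rw [hUopen.frontier_eq] at h
    exact h.2 hx
  have hdisj : Disjoint U (closure U)ᶜ := by
    rw [Set.disjoint_left]
    exact fun x hx h => h (subset_closure hx)
  have hcov : (frontier U)ᶜ ⊆ U ∪ (closure U)ᶜ := by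
    intro x hx
    by_cases hxU : x ∈ U
    · exact Or.inl hxU
    · refine Or.inr fun hxc => hx ?_
      rw [hUopen.frontier_eq]
      exact ⟨hxc, hxU⟩
  have hvO : v ∈ (closure U)ᶜ := by
    rcases hcov hvX with h | h
    · exfalso
      apply hVU
      apply Subset.antisymm
      · exact hVpre.subset_left_of_subset_union hUopen isClosed_closure.isOpen_compl hdisj
          (hVX.trans hcov) ⟨v, hvV, h⟩
      · rw [hVeq]
        exact hUconn.2.subset_connectedComponentIn h hUX
    · exact h
  have bridge : ∀ P ⊆ frontier U, ¬ frontier U ∩ (O₀ ∩ Aᶜ) ⊆ P →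
      ∃ C : Set RiemannSphere, IsPreconnected C ∧ Disjoint C P ∧ u ∈ C ∧ v ∈ C := by
    intro P hPX hWP
    obtain ⟨w, hw, hwP⟩ := not_subset.1 hWP
    have hwU : w ∈ closure U := frontier_subset_closure hw.1
    have hwV : w ∈ closure V := frontier_subset_closure (hO₀V ⟨hw.1, hw.2.1⟩)
    have c1 : IsPreconnected (insert w U) := hUconn.2.subset_closure (subset_insert _ _)
      (insert_subset hwU subset_closure)
    have c2 : IsPreconnected (insert w V) := hVpre.subset_closure (subset_insert _ _)
      (insert_subset hwV subset_closure)
    refine ⟨insert w U ∪ insert w V, c1.union w (mem_insert _ _) (mem_insert _ _) c2, ?_,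
      Or.inl (Or.inr hu), Or.inr (Or.inr hvV)⟩
    rw [Set.disjoint_left]
    rintro x ((rfl | hx) | (rfl | hx)) hxP
    · exact hwP hxP
    · exact hUX hx (hPX hxP)
    · exact hwP hxP
    · exact hVX hx (hPX hxP)
  obtain ⟨C₁, a1, a2, a3, a4⟩ := bridge P (hPQ ▸ subset_union_left) hWP
  obtain ⟨C₂, b1, b2, b3, b4⟩ := bridge Q (hPQ ▸ subset_union_right) hWQ
  refine MakAux.jan hP hQ hconn a1 b1 a2 b2 a3 b3 a4 b4 hUopen isClosed_closure.isOpen_compl hdisj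
    hu hvO ?_ ?_
  · rw [hPQ]; exact hcov
  · rw [hPQ, Set.disjoint_left]
    exact fun x hx => hUX hx
end
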